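/- arXiv:1708.08599 — 6 statements merged into one kernel-verified Lean document; each statement's English description precedes it below -/
import Mathlib

section
/- Let r be a positive integer and ε > 0. Then there exists a strictly increasing sequence (a_n)_{n≥1} of positive integers with E(A_N) = Θ( (log_r N)^{−ε} · N³ / ( log(N) · log₂(N) · … · log_r(N) ) ) such that NPPC((a_n)_n) has Hausdorff dimension 1 (full Hausdorff dimension). Here log_r denotes the r-fold iterated logarithm, log_r(x) := log_{r−1}(log x) and log₁(x) := log x. -/
open Filter MeasureTheory
open scoped Classical

/-- Distance from a real number to the nearest integer. -/
noncomputable def dni (x : ℝ) : ℝ := |x - round x|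

/-- Additive energy of a finite set of naturals:
`#{(a,b,c,d) ∈ I⁴ : a + b = c + d}`. -/
def addEnergy (A : Finset ℕ) : ℕ :=
  (((A ×ˢ A) ×ˢ (A ×ˢ A)).filter fun q => q.1.1 + q.1.2 = q.2.1 + q.2.2).card

/-- The truncation `A_N = {a_n : 1 ≤ n ≤ N}`. -/
def trunc (a : ℕ → ℕ) (N : ℕ) : Finset ℕ := (Finset.Icc 1 N).image a

/-- Pair correlation function `R([-s,s], α, N)`. -/
noncomputable def pcf (a : ℕ → ℕ) (s α : ℝ) (N : ℕ) : ℝ :=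
  (((Finset.Icc 1 N ×ˢ Finset.Icc 1 N).filter fun p =>
      p.1 ≠ p.2 ∧ dni (α * (a p.1 : ℝ) - α * (a p.2 : ℝ)) ≤ s / N).card : ℝ) / N

/-- `(α a_n)_n` has Poissonian pair correlations. -/
def hasPPC (a : ℕ → ℕ) (α : ℝ) : Prop :=
  ∀ s : ℝ, 0 ≤ s → Tendsto (fun N => pcf a s α N) atTop (nhds (2 * s))

/-- The exceptional set `NPPC((a_n)_n)` of `α ∈ (0,1)` without PPC. -/
def NPPC (a : ℕ → ℕ) : Set ℝ := {α | α ∈ Set.Ioo (0 : ℝ) 1 ∧ ¬ hasPPC a α}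

/-- `iterLog r x` is the `r`-fold iterated logarithm `log_r(x)`;
`iterLog 0 x = x`, `iterLog 1 x = log x`, `iterLog (r+1) x = iterLog r (log x)`. -/
noncomputable def iterLog : ℕ → ℝ → ℝ
  | 0, x => x
  | n + 1, x => iterLog n (Real.log x)

/-!
On each dyadic block `[2 ^ k, 2 ^ (k + 1))` of indices the sequence follows a lacunary sequence `b`,
except that its first `m k` terms are replaced by the multiples `b (2 ^ k), …, m k * b (2 ^ k)`.
Uniqueness of mixed radix digits in base `b` forces every nontrivial solution of `x + y = z + w`
to lie in a single cluster, so the energy is of order `∑ m k ^ 3`, up to the `N ^ 2` trivial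
solutions, and `m k` can be tuned to any slowly decreasing density.

Clusters fill at most half of a block. If the fractional parts of all `α * b n` are at most
`1 / 256`, then a quarter of the first `N = 2 ^ (k + 1)` points crowd into an interval of length
`1 / 256`, and by Cauchy–Schwarz there are too many close pairs for Poissonian correlations. Such
`α` are obtained from an arbitrary binary expansion by inserting eight zeros after every square
position. The zeros have density `0`, so the inverse map is Hölder of every exponent below `1` and
the exceptional set has full dimension.
-/

section AdditiveEnergy

open scoped Pointwise

lemma addEnergy_eq_finsetAddEnergy (A : Finset ℕ) : addEnergy A = A.addEnergy A :=
  Finset.card_equiv (Equiv.prodProdProdComm ℕ ℕ ℕ ℕ) fun q => by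
    simp only [Finset.mem_filter, Finset.mem_product, Equiv.prodProdProdComm_apply]
    tauto

lemma addEnergy_mono {A B : Finset ℕ} (h : A ⊆ B) : addEnergy A ≤ addEnergy B := by
  simpa only [addEnergy_eq_finsetAddEnergy] using Finset.addEnergy_mono h h

lemma addEnergy_le_card_pow_three (A : Finset ℕ) : addEnergy A ≤ A.card ^ 3 := by
  calc addEnergy A ≤ (A ×ˢ A ×ˢ A).card := by
        refine Finset.card_le_card_of_injOn (fun q => (q.1.1, q.1.2, q.2.1)) ?_ ?_
        · rintro q hq
          simp only [Finset.coe_filter, Finset.mem_product, Set.mem_ofPred_eq] at hq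
          simp only [Finset.coe_product, Set.mem_prod, Finset.mem_coe]
          tauto
        · rintro ⟨⟨a, b⟩, c, d⟩ hq ⟨⟨a', b'⟩, c', d'⟩ hq' h
          simp only [Finset.coe_filter, Set.mem_ofPred_eq] at hq hq'
          simp only [Prod.mk.injEq] at h ⊢
          omega
    _ = A.card ^ 3 := by simp only [Finset.card_product]; ring

lemma card_pow_three_le_mul_addEnergy {A : Finset ℕ} {K : ℕ}
    (hK : (A + A).card ≤ K * A.card) : A.card ^ 3 ≤ K * addEnergy A := by
  rcases A.card.eq_zero_or_pos with h0 | hpos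
  · simp [h0]
  refine le_of_mul_le_mul_left ?_ hpos
  calc A.card * A.card ^ 3 = A.card ^ 2 * A.card ^ 2 := by ring
    _ ≤ (A + A).card * A.addEnergy A := Finset.le_card_add_mul_addEnergy A A
    _ ≤ K * A.card * A.addEnergy A := Nat.mul_le_mul_right _ hK
    _ = A.card * (K * addEnergy A) := by rw [addEnergy_eq_finsetAddEnergy]; ring

lemma pow_three_le_two_mul_addEnergy_image_mul (m : ℕ) {d : ℕ} (hd : 0 < d) :
    m ^ 3 ≤ 2 * addEnergy ((Finset.Icc 1 m).image (· * d)) := by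
  set P : ℕ → Finset ℕ := fun n => (Finset.Icc 1 n).image (· * d)
  have hcard (n : ℕ) : (P n).card = n := by
    rw [Finset.card_image_of_injective _ (mul_left_injective₀ hd.ne'), Nat.card_Icc,
      Nat.add_sub_cancel]
  have hadd : P m + P m ⊆ P (2 * m) := by
    refine Finset.add_subset_iff.2 fun x hx y hy => ?_
    obtain ⟨i, hi, rfl⟩ := Finset.mem_image.1 hx
    obtain ⟨j, hj, rfl⟩ := Finset.mem_image.1 hy
    rw [Finset.mem_Icc] at hi hj
    exact Finset.mem_image.2 ⟨i + j, Finset.mem_Icc.2 (by omega), add_mul i j d⟩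
  have h := card_pow_three_le_mul_addEnergy (A := P m) (K := 2) <|
    (Finset.card_le_card hadd).trans_eq (by rw [hcard, hcard])
  rwa [hcard] at h

lemma addEnergy_le_of_trivial_or_mem {ι : Type*} {A : Finset ℕ} {s : Finset ι}
    {B : ι → Finset ℕ}
    (h : ∀ a ∈ A, ∀ b ∈ A, ∀ c ∈ A, ∀ d ∈ A, a + b = c + d →
      (a = c ∧ b = d) ∨ (a = d ∧ b = c) ∨ ∃ k ∈ s, a ∈ B k ∧ b ∈ B k ∧ c ∈ B k ∧ d ∈ B k) :
    addEnergy A ≤ 2 * A.card ^ 2 + ∑ k ∈ s, addEnergy (B k) := by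
  set solutions : Finset ℕ → Finset ((ℕ × ℕ) × (ℕ × ℕ)) := fun D =>
    ((D ×ˢ D) ×ˢ (D ×ˢ D)).filter fun q => q.1.1 + q.1.2 = q.2.1 + q.2.2
  set diagonal := (A ×ˢ A).image fun p => (p, p)
  set antidiagonal := (A ×ˢ A).image fun p => (p, p.swap)
  have hcover : solutions A ⊆ (diagonal ∪ antidiagonal) ∪ s.biUnion fun k => solutions (B k) := by
    rintro ⟨⟨a, b⟩, c, d⟩ hq
    simp only [solutions, Finset.mem_filter, Finset.mem_product] at hq
    obtain ⟨⟨⟨ha, hb⟩, hc, hd⟩, hsum⟩ := hq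
    simp only [solutions, diagonal, antidiagonal, Finset.mem_union, Finset.mem_image,
      Finset.mem_biUnion, Finset.mem_filter, Finset.mem_product]
    rcases h a ha b hb c hc d hd hsum with ⟨rfl, rfl⟩ | ⟨rfl, rfl⟩ | ⟨k, hk, hB⟩
    · exact Or.inl (Or.inl ⟨(a, b), ⟨ha, hb⟩, rfl⟩)
    · exact Or.inl (Or.inr ⟨(a, b), ⟨ha, hb⟩, rfl⟩)
    · exact Or.inr ⟨k, hk, ⟨⟨hB.1, hB.2.1⟩, hB.2.2⟩, hsum⟩
  have hpairs (f : ℕ × ℕ → (ℕ × ℕ) × (ℕ × ℕ)) : ((A ×ˢ A).image f).card ≤ A.card ^ 2 :=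
    Finset.card_image_le.trans_eq (by rw [Finset.card_product, sq])
  calc addEnergy A ≤ (diagonal ∪ antidiagonal).card + (s.biUnion fun k => solutions (B k)).card :=
        (Finset.card_le_card hcover).trans (Finset.card_union_le _ _)
    _ ≤ (A.card ^ 2 + A.card ^ 2) + ∑ k ∈ s, addEnergy (B k) :=
        add_le_add ((Finset.card_union_le _ _).trans (add_le_add (hpairs _) (hpairs _)))
          Finset.card_biUnion_le
    _ = 2 * A.card ^ 2 + ∑ k ∈ s, addEnergy (B k) := by rw [two_mul]

end AdditiveEnergy

section MixedRadix

variable {b d : ℕ → ℕ}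

lemma sum_mul_lt_of_digit_le {x : ℕ → ℕ} (hb₀ : 0 < b 0)
    (hb : ∀ i, (d i + 1) * b i ≤ b (i + 1)) (hx : ∀ i, x i ≤ d i) (n : ℕ) :
    ∑ i ∈ Finset.range n, x i * b i < b n := by
  induction n with
  | zero => simpa using hb₀
  | succ n ih =>
    calc ∑ i ∈ Finset.range (n + 1), x i * b i < b n + d n * b n := by
          rw [Finset.sum_range_succ]
          exact add_lt_add_of_lt_of_le ih (Nat.mul_le_mul_right _ (hx n))
      _ = (d n + 1) * b n := by ring
      _ ≤ b (n + 1) := hb n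

lemma digit_eq_of_sum_mul_eq {x y : ℕ → ℕ} (hb₀ : 0 < b 0)
    (hb : ∀ i, (d i + 1) * b i ≤ b (i + 1)) (hx : ∀ i, x i ≤ d i) (hy : ∀ i, y i ≤ d i) (n : ℕ)
    (h : ∑ i ∈ Finset.range n, x i * b i = ∑ i ∈ Finset.range n, y i * b i) :
    ∀ i < n, x i = y i := by
  induction n with
  | zero => simp
  | succ n ih =>
    have hx_lt := sum_mul_lt_of_digit_le hb₀ hb hx n
    have hy_lt := sum_mul_lt_of_digit_le hb₀ hb hy n
    rw [Finset.sum_range_succ, Finset.sum_range_succ] at h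
    have htop : x n = y n := by
      have hdiv := congrArg (· / b n) h
      simpa only [Nat.add_mul_div_right _ _ (Nat.zero_lt_of_lt hx_lt), Nat.div_eq_of_lt hx_lt,
        Nat.div_eq_of_lt hy_lt, zero_add] using hdiv
    rw [htop] at h
    intro i hi
    rcases Nat.lt_succ_iff_lt_or_eq.1 hi with hi | rfl
    · exact ih (Nat.add_right_cancel h) i hi
    · exact htop

lemma mul_add_mul_eq_cases (hb₀ : 0 < b 0) (hb : ∀ i, (2 * d i + 1) * b i ≤ b (i + 1))
    {i₁ i₂ i₃ i₄ c₁ c₂ c₃ c₄ : ℕ} (h₁ : c₁ ∈ Set.Icc 1 (d i₁)) (h₂ : c₂ ∈ Set.Icc 1 (d i₂))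
    (h₃ : c₃ ∈ Set.Icc 1 (d i₃)) (h₄ : c₄ ∈ Set.Icc 1 (d i₄))
    (h : c₁ * b i₁ + c₂ * b i₂ = c₃ * b i₃ + c₄ * b i₄) :
    (i₁ = i₃ ∧ c₁ = c₃ ∧ i₂ = i₄ ∧ c₂ = c₄) ∨ (i₁ = i₄ ∧ c₁ = c₄ ∧ i₂ = i₃ ∧ c₂ = c₃) ∨
      (i₁ = i₂ ∧ i₁ = i₃ ∧ i₁ = i₄) := by
  set n := i₁ + i₂ + i₃ + i₄ + 1 with hn
  have hdigit := digit_eq_of_sum_mul_eq (d := fun i => 2 * d i)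
    (x := fun i => (if i = i₁ then c₁ else 0) + (if i = i₂ then c₂ else 0))
    (y := fun i => (if i = i₃ then c₃ else 0) + (if i = i₄ then c₄ else 0)) hb₀ hb
    (fun i => by grind) (fun i => by grind) n
    (by
      have l₁ : i₁ < n := by omega
      have l₂ : i₂ < n := by omega
      have l₃ : i₃ < n := by omega
      have l₄ : i₄ < n := by omega
      simpa [add_mul, ite_mul, Finset.sum_add_distrib, Finset.sum_ite_eq', l₁, l₂, l₃, l₄] using h)
  have k₁ := hdigit i₁ (by omega)
  have k₂ := hdigit i₂ (by omega)
  have k₃ := hdigit i₃ (by omega)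
  have k₄ := hdigit i₄ (by omega)
  clear hdigit h hn hb
  simp only [Set.mem_Icc] at h₁ h₂ h₃ h₄
  by_cases e₂ : i₁ = i₂ <;> by_cases e₃ : i₁ = i₃ <;> by_cases e₄ : i₁ = i₄ <;> grind

end MixedRadix

section ClusterSequence

/-- The `k`-th cluster of indices: the first `m k` integers of the dyadic block
`[2 ^ k, 2 ^ (k + 1))`. -/
def cluster (m : ℕ → ℕ) (k : ℕ) : Finset ℕ := Finset.Ico (2 ^ k) (2 ^ k + m k)

/-- The index of the base point that the `n`-th term of the cluster sequence is a multiple of. -/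
def baseIndex (m : ℕ → ℕ) (n : ℕ) : ℕ :=
  if n ∈ cluster m (Nat.log 2 n) then 2 ^ Nat.log 2 n else n

/-- The sequence equal to `b n` except that on each cluster it runs through the arithmetic
progression `b (2 ^ k), 2 * b (2 ^ k), …, m k * b (2 ^ k)`. -/
def clusterSeq (b m : ℕ → ℕ) (n : ℕ) : ℕ := (n - baseIndex m n + 1) * b (baseIndex m n)

variable {b m : ℕ → ℕ}

lemma baseIndex_of_mem {k n : ℕ} (hk : Nat.log 2 n = k) (h : n ∈ cluster m k) :
    baseIndex m n = 2 ^ k := by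
  subst hk; exact if_pos h

lemma baseIndex_of_notMem {n : ℕ} (h : n ∉ cluster m (Nat.log 2 n)) : baseIndex m n = n :=
  if_neg h

lemma clusterSeq_of_notMem {n : ℕ} (h : n ∉ cluster m (Nat.log 2 n)) :
    clusterSeq b m n = b n := by
  rw [clusterSeq, baseIndex_of_notMem h, Nat.sub_self, zero_add, one_mul]

lemma log_baseIndex (m : ℕ → ℕ) (n : ℕ) : Nat.log 2 (baseIndex m n) = Nat.log 2 n := by
  unfold baseIndex
  split_ifs
  · exact Nat.log_pow one_lt_two _
  · rfl

lemma baseIndex_le (m : ℕ → ℕ) (n : ℕ) : baseIndex m n ≤ n := by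
  unfold baseIndex
  split_ifs with h
  · exact (Finset.mem_Ico.1 h).1
  · exact le_rfl

lemma sub_baseIndex_add_one_mem_Icc (m : ℕ → ℕ) {n : ℕ} (hn : 1 ≤ n) :
    n - baseIndex m n + 1 ∈ Set.Icc 1 (baseIndex m n) := by
  refine ⟨Nat.le_add_left 1 _, ?_⟩
  have hlt := Nat.lt_pow_succ_log_self one_lt_two n
  rw [pow_succ] at hlt
  unfold baseIndex
  split_ifs <;> omega

lemma mem_cluster_of_baseIndex_eq {n n' : ℕ} (h : baseIndex m n = baseIndex m n')
    (hn : n ∈ cluster m (Nat.log 2 n)) : n' ∈ cluster m (Nat.log 2 n) := by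
  have hlog : Nat.log 2 n' = Nat.log 2 n := by rw [← log_baseIndex m n', ← h, log_baseIndex]
  by_contra hn'
  rw [baseIndex_of_mem rfl hn, baseIndex_of_notMem (hlog ▸ hn')] at h
  rw [cluster, Finset.mem_Ico] at hn hn'
  omega

lemma base_pos (hb₀ : 0 < b 0) (hb : ∀ i, (2 * i + 1) * b i ≤ b (i + 1)) (n : ℕ) : 0 < b n := by
  induction n with
  | zero => exact hb₀
  | succ n ih => exact (Nat.mul_pos (Nat.succ_pos _) ih).trans_le (hb n)

lemma clusterSeq_pos (hb₀ : 0 < b 0) (hb : ∀ i, (2 * i + 1) * b i ≤ b (i + 1)) (n : ℕ) :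
    0 < clusterSeq b m n :=
  Nat.mul_pos (Nat.succ_pos _) (base_pos hb₀ hb _)

lemma clusterSeq_lt_succ (hb₀ : 0 < b 0) (hb : ∀ i, (2 * i + 1) * b i ≤ b (i + 1)) {n : ℕ}
    (hn : 1 ≤ n) : clusterSeq b m n < clusterSeq b m (n + 1) := by
  have hmono : Monotone b := monotone_nat_of_le_succ fun i =>
    (Nat.le_mul_of_pos_left _ (Nat.succ_pos _)).trans (hb i)
  have hle := baseIndex_le m n
  by_cases hnext : baseIndex m (n + 1) = n + 1
  · calc clusterSeq b m n < (2 * baseIndex m n + 1) * b (baseIndex m n) :=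
          Nat.mul_lt_mul_of_pos_right
            (by have := (sub_baseIndex_add_one_mem_Icc m hn).2; omega) (base_pos hb₀ hb _)
      _ ≤ b (baseIndex m n + 1) := hb _
      _ ≤ b (n + 1) := hmono (Nat.succ_le_succ hle)
      _ = clusterSeq b m (n + 1) := by rw [clusterSeq, hnext, Nat.sub_self, zero_add, one_mul]
  · have hmem : n + 1 ∈ cluster m (Nat.log 2 (n + 1)) :=
      not_imp_comm.1 baseIndex_of_notMem hnext
    rw [baseIndex_of_mem rfl hmem] at hnext
    have hlog : Nat.log 2 n = Nat.log 2 (n + 1) := by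
      have := Nat.lt_pow_succ_log_self one_lt_two (n + 1)
      rw [cluster, Finset.mem_Ico] at hmem
      exact (Nat.log_eq_iff (Or.inr ⟨one_lt_two, by omega⟩)).2 (by omega)
    have hbase : baseIndex m (n + 1) = baseIndex m n := by
      rw [baseIndex_of_mem rfl hmem, baseIndex_of_mem hlog]
      rw [cluster, Finset.mem_Ico] at hmem ⊢
      omega
    rw [clusterSeq, clusterSeq, hbase]
    exact Nat.mul_lt_mul_of_pos_right (by omega) (base_pos hb₀ hb _)

lemma clusterSeq_add_eq_cases (hb₀ : 0 < b 0) (hb : ∀ i, (2 * i + 1) * b i ≤ b (i + 1))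
    {n₁ n₂ n₃ n₄ : ℕ} (h₁ : 1 ≤ n₁) (h₂ : 1 ≤ n₂) (h₃ : 1 ≤ n₃) (h₄ : 1 ≤ n₄)
    (h : clusterSeq b m n₁ + clusterSeq b m n₂ = clusterSeq b m n₃ + clusterSeq b m n₄) :
    (n₁ = n₃ ∧ n₂ = n₄) ∨ (n₁ = n₄ ∧ n₂ = n₃) ∨
      (n₁ ∈ cluster m (Nat.log 2 n₁) ∧ n₂ ∈ cluster m (Nat.log 2 n₁) ∧
        n₃ ∈ cluster m (Nat.log 2 n₁) ∧ n₄ ∈ cluster m (Nat.log 2 n₁)) := by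
  have l₁ := baseIndex_le m n₁
  have l₂ := baseIndex_le m n₂
  have l₃ := baseIndex_le m n₃
  have l₄ := baseIndex_le m n₄
  rcases mul_add_mul_eq_cases (d := id) (i₁ := baseIndex m n₁) (i₂ := baseIndex m n₂)
    (i₃ := baseIndex m n₃) (i₄ := baseIndex m n₄) hb₀ hb (sub_baseIndex_add_one_mem_Icc m h₁)
    (sub_baseIndex_add_one_mem_Icc m h₂) (sub_baseIndex_add_one_mem_Icc m h₃)
    (sub_baseIndex_add_one_mem_Icc m h₄) h with hc | hc | ⟨e₂, e₃, e₄⟩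
  · exact Or.inl (by omega)
  · exact Or.inr (Or.inl (by omega))
  by_cases hmem : n₁ ∈ cluster m (Nat.log 2 n₁)
  · exact Or.inr (Or.inr ⟨hmem, mem_cluster_of_baseIndex_eq e₂ hmem,
      mem_cluster_of_baseIndex_eq e₃ hmem, mem_cluster_of_baseIndex_eq e₄ hmem⟩)
  · have baseIndex_eq {n : ℕ} (e : baseIndex m n₁ = baseIndex m n) : baseIndex m n = n := by
      refine baseIndex_of_notMem fun hn => hmem ?_
      rw [← log_baseIndex m n₁, e, log_baseIndex]
      exact mem_cluster_of_baseIndex_eq e.symm hn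
    have := baseIndex_eq rfl
    have := baseIndex_eq e₂
    have := baseIndex_eq e₃
    have := baseIndex_eq e₄
    exact Or.inl (by omega)

theorem addEnergy_trunc_clusterSeq_le (hb₀ : 0 < b 0) (hb : ∀ i, (2 * i + 1) * b i ≤ b (i + 1))
    (N : ℕ) : addEnergy (trunc (clusterSeq b m) N) ≤
      2 * N ^ 2 + ∑ k ∈ Finset.range (Nat.log 2 N + 1), m k ^ 3 := by
  have hcard : (trunc (clusterSeq b m) N).card ≤ N :=
    Finset.card_image_le.trans_eq (Nat.card_Icc 1 N)
  have hcard_cluster (k : ℕ) : ((cluster m k).image (clusterSeq b m)).card ≤ m k :=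
    Finset.card_image_le.trans_eq (by rw [cluster, Nat.card_Ico, Nat.add_sub_cancel_left])
  refine (addEnergy_le_of_trivial_or_mem (s := Finset.range (Nat.log 2 N + 1))
    (B := fun k => (cluster m k).image (clusterSeq b m)) ?_).trans
      (add_le_add (by gcongr) (Finset.sum_le_sum fun k _ =>
        (addEnergy_le_card_pow_three _).trans (Nat.pow_le_pow_left (hcard_cluster k) 3)))
  simp only [trunc, Finset.forall_mem_image, Finset.mem_Icc]
  rintro n₁ h₁ n₂ h₂ n₃ h₃ n₄ h₄ h
  rcases clusterSeq_add_eq_cases hb₀ hb h₁.1 h₂.1 h₃.1 h₄.1 h with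
    ⟨rfl, rfl⟩ | ⟨rfl, rfl⟩ | ⟨hc₁, hc₂, hc₃, hc₄⟩
  · exact Or.inl ⟨rfl, rfl⟩
  · exact Or.inr (Or.inl ⟨rfl, rfl⟩)
  · have hk : Nat.log 2 n₁ ∈ Finset.range (Nat.log 2 N + 1) :=
      Finset.mem_range_succ_iff.2 (Nat.log_mono_right h₁.2)
    exact Or.inr (Or.inr ⟨_, hk, Finset.mem_image_of_mem _ hc₁, Finset.mem_image_of_mem _ hc₂,
      Finset.mem_image_of_mem _ hc₃, Finset.mem_image_of_mem _ hc₄⟩)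

theorem pow_three_le_two_mul_addEnergy_trunc_clusterSeq {k N : ℕ} (hb : 0 < b (2 ^ k))
    (hm : m k ≤ 2 ^ k) (hN : 2 ^ (k + 1) ≤ N) :
    m k ^ 3 ≤ 2 * addEnergy (trunc (clusterSeq b m) N) := by
  refine (pow_three_le_two_mul_addEnergy_image_mul (m k) hb).trans
    (Nat.mul_le_mul_left 2 (addEnergy_mono (Finset.image_subset_iff.2 fun j hj => ?_)))
  have hk : 1 ≤ 2 ^ k := Nat.one_le_two_pow
  rw [pow_succ] at hN
  rw [Finset.mem_Icc] at hj
  have hlog : Nat.log 2 (2 ^ k + (j - 1)) = k := by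
    refine (Nat.log_eq_iff (Or.inr ⟨one_lt_two, by omega⟩)).2 ?_
    rw [pow_succ]; omega
  refine Finset.mem_image.2 ⟨2 ^ k + (j - 1), Finset.mem_Icc.2 (by omega), ?_⟩
  rw [clusterSeq, baseIndex_of_mem hlog (Finset.mem_Ico.2 (by omega)), Nat.add_sub_cancel_left,
    Nat.sub_add_cancel hj.1]

lemma clusterSeq_of_add_le {k n : ℕ} (h₁ : 2 ^ k + m k ≤ n) (h₂ : n < 2 ^ (k + 1)) :
    clusterSeq b m n = b n := by
  have hlog : Nat.log 2 n = k :=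
    (Nat.log_eq_iff (Or.inr ⟨one_lt_two, by have := Nat.two_pow_pos k; omega⟩)).2 (by omega)
  refine clusterSeq_of_notMem ?_
  rw [hlog, cluster, Finset.mem_Ico]
  omega

end ClusterSequence

section IteratedLogarithm

open Asymptotics

lemma isEquivalent_rpow_of_eventually_nonneg {α : Type*} {l : Filter α} {u v : α → ℝ}
    (hv : ∀ᶠ x in l, 0 ≤ v x) (h : u ~[l] v) (p : ℝ) :
    (fun x => u x ^ p) ~[l] fun x => v x ^ p := by
  have hmax : v =ᶠ[l] fun x => max (v x) 0 := hv.mono fun x hx => (max_eq_left hx).symm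
  exact ((h.congr_right hmax).rpow fun _ => le_max_right _ _).congr_right
    (hmax.symm.mono fun x hx => congrArg (· ^ p) hx)

lemma iterLog_succ (k : ℕ) (x : ℝ) : iterLog (k + 1) x = Real.log (iterLog k x) := by
  induction k generalizing x with
  | zero => rfl
  | succ _ ih => exact ih (Real.log x)

lemma tendsto_iterLog_atTop (k : ℕ) : Tendsto (iterLog k) atTop atTop := by
  induction k with
  | zero => exact tendsto_id
  | succ k ih => exact ih.comp Real.tendsto_log_atTop

lemma eventually_iterLog_pos (r : ℕ) :
    ∀ᶠ x : ℝ in atTop, ∀ k ∈ Finset.Icc 1 r, 0 < iterLog k x :=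
  (Finset.eventually_all _).2 fun k _ => (tendsto_iterLog_atTop k).eventually_gt_atTop 0

lemma eventually_monotoneOn_iterLog (k : ℕ) :
    ∀ᶠ x₀ : ℝ in atTop, MonotoneOn (iterLog k) (Set.Ici x₀) := by
  induction k with
  | zero => exact Eventually.of_forall fun _ => monotoneOn_id
  | succ k ih =>
    filter_upwards [ih, (tendsto_iterLog_atTop k).eventually_gt_atTop 0] with x₀ hmono hpos
    intro x hx y hy hxy
    rw [iterLog_succ, iterLog_succ]
    exact Real.log_le_log (hpos.trans_le (hmono Set.self_mem_Ici hx hx)) (hmono hx hy hxy)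

lemma isEquivalent_iterLog_const_mul {c : ℝ} (hc : 0 < c) {k : ℕ} (hk : 1 ≤ k) :
    (fun x => iterLog k (c * x)) ~[atTop] iterLog k := by
  induction k, hk using Nat.le_induction with
  | base =>
    have hlittle : (fun _ : ℝ => Real.log c) =o[atTop] Real.log :=
      isLittleO_const_left.2 (Or.inr (tendsto_norm_atTop_atTop.comp Real.tendsto_log_atTop))
    refine IsLittleO.isEquivalent (u := fun x => Real.log (c * x)) (v := Real.log) ?_
    refine hlittle.congr' ?_ EventuallyEq.rfl
    filter_upwards [eventually_gt_atTop 0] with x hx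
    simp only [Pi.sub_apply, Real.log_mul hc.ne' hx.ne', add_sub_cancel_right]
  | succ k _ ih =>
    simpa only [iterLog_succ, ← funext (iterLog_succ k)] using ih.log (tendsto_iterLog_atTop k)

/-- The target order of `E(A_N) / N ^ 3`. -/
noncomputable def energyDensity (r : ℕ) (ε x : ℝ) : ℝ :=
  iterLog r x ^ (-ε) / ∏ k ∈ Finset.Icc 1 r, iterLog k x

lemma eventually_energyDensity_pos {r : ℕ} (hr : 1 ≤ r) (ε : ℝ) :
    ∀ᶠ x in atTop, 0 < energyDensity r ε x := by
  filter_upwards [eventually_iterLog_pos r] with x hx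
  exact div_pos (Real.rpow_pos_of_pos (hx r (Finset.right_mem_Icc.2 hr)) _) (Finset.prod_pos hx)

lemma eventually_antitoneOn_energyDensity {r : ℕ} (hr : 1 ≤ r) {ε : ℝ} (hε : 0 ≤ ε) :
    ∀ᶠ x₀ in atTop, AntitoneOn (energyDensity r ε) (Set.Ici x₀) := by
  have hmono : ∀ᶠ x₀ : ℝ in atTop, ∀ k ∈ Finset.Icc 1 r, MonotoneOn (iterLog k) (Set.Ici x₀) :=
    (Finset.eventually_all _).2 fun k _ => eventually_monotoneOn_iterLog k
  have hr_mem : r ∈ Finset.Icc 1 r := Finset.right_mem_Icc.2 hr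
  filter_upwards [hmono, eventually_iterLog_pos r] with x₀ hmono hpos₀ x hx y hy hxy
  have hpos : ∀ k ∈ Finset.Icc 1 r, 0 < iterLog k x := fun k hk =>
    (hpos₀ k hk).trans_le (hmono k hk Set.self_mem_Ici hx hx)
  have hle : ∀ k ∈ Finset.Icc 1 r, iterLog k x ≤ iterLog k y := fun k hk => hmono k hk hx hy hxy
  exact div_le_div₀ (Real.rpow_nonneg (hpos r hr_mem).le _)
    (Real.rpow_le_rpow_of_nonpos (hpos r hr_mem) (hle r hr_mem) (neg_nonpos.2 hε))
    (Finset.prod_pos hpos) (Finset.prod_le_prod (fun k hk => (hpos k hk).le) hle)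

lemma isEquivalent_energyDensity_const_mul {r : ℕ} (hr : 1 ≤ r) (ε : ℝ) {c : ℝ} (hc : 0 < c) :
    (fun x => energyDensity r ε (c * x)) ~[atTop] energyDensity r ε := by
  have hnum : (fun x => iterLog r (c * x) ^ (-ε)) ~[atTop] fun x => iterLog r x ^ (-ε) :=
    isEquivalent_rpow_of_eventually_nonneg ((tendsto_iterLog_atTop r).eventually_ge_atTop 0)
      (isEquivalent_iterLog_const_mul hc hr) (-ε)
  exact hnum.div (IsEquivalent.finsetProd fun k hk =>
    isEquivalent_iterLog_const_mul hc (Finset.mem_Icc.1 hk).1)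

lemma eventually_energyDensity_le_two_mul {r : ℕ} (hr : 1 ≤ r) (ε : ℝ) :
    ∀ᶠ x in atTop, energyDensity r ε x ≤ 2 * energyDensity r ε (2 * x) := by
  have hlim := (isEquivalent_iff_tendsto_one
    ((eventually_energyDensity_pos hr ε).mono fun _ => ne_of_gt)).1
      (isEquivalent_energyDensity_const_mul hr ε two_pos)
  filter_upwards [hlim.eventually_const_lt one_half_lt_one, eventually_energyDensity_pos hr ε]
    with x hx hpos
  rw [Pi.div_apply, lt_div_iff₀ hpos] at hx
  linarith

end IteratedLogarithm

section ClusterLength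

/-- The quantity `8 ^ k * ψ (2 ^ k)`, the required energy at `N = 2 ^ k`, normalised to be `1 / 8`
at `k = 0` so that its cube root is at most `2 ^ k / 2` when `ψ` is antitone. -/
noncomputable def dyadicMass (ψ : ℝ → ℝ) (k : ℕ) : ℝ := 8 ^ k * ψ (2 ^ k) / (8 * ψ 1)

/-- The integer part of the cube root of `dyadicMass ψ k`: a cluster of this length has additive
energy of order `dyadicMass ψ k`. -/
noncomputable def clusterLength (ψ : ℝ → ℝ) (k : ℕ) : ℕ := Nat.nthRoot 3 ⌊dyadicMass ψ k⌋₊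

variable {ψ : ℝ → ℝ}

lemma eight_pow_eq (k : ℕ) : (8 : ℝ) ^ k = (2 ^ k) ^ 3 := by
  rw [← pow_mul, mul_comm, pow_mul]; norm_num

lemma dyadicMass_zero (h : ψ 1 ≠ 0) : dyadicMass ψ 0 = 1 / 8 := by
  rw [dyadicMass]; field_simp

lemma eight_pow_mul_eq (h : ψ 1 ≠ 0) (k : ℕ) :
    8 ^ k * ψ (2 ^ k) = 8 * ψ 1 * dyadicMass ψ k := by
  rw [dyadicMass]; field_simp

lemma dyadicMass_pos (hpos : ∀ x, 0 < ψ x) (k : ℕ) : 0 < dyadicMass ψ k := by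
  have := hpos 1
  have := hpos (2 ^ k)
  unfold dyadicMass; positivity

lemma dyadicMass_le (hpos : ∀ x, 0 < ψ x) (hanti : Antitone ψ) (k : ℕ) :
    dyadicMass ψ k ≤ 8 ^ k / 8 := by
  have hψ : ψ (2 ^ k) ≤ ψ 1 := hanti (one_le_pow₀ one_le_two)
  have h1 := hpos 1
  rw [dyadicMass, ← div_div, mul_div_right_comm, div_le_iff₀ h1]
  gcongr

lemma four_mul_dyadicMass_le (hpos : ∀ x, 0 < ψ x)
    (hdouble : ∀ x, ψ x ≤ 2 * ψ (2 * x)) (k : ℕ) :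
    4 * dyadicMass ψ k ≤ dyadicMass ψ (k + 1) := by
  have h1 := hpos 1
  have hψ := hdouble (2 ^ k)
  rw [← pow_succ'] at hψ
  rw [dyadicMass, dyadicMass, ← mul_div_assoc]
  gcongr ?_ / _
  calc 4 * (8 ^ k * ψ (2 ^ k)) ≤ 4 * (8 ^ k * (2 * ψ (2 ^ (k + 1)))) := by gcongr
    _ = 8 ^ (k + 1) * ψ (2 ^ (k + 1)) := by ring

lemma four_pow_le_dyadicMass (hpos : ∀ x, 0 < ψ x)
    (hdouble : ∀ x, ψ x ≤ 2 * ψ (2 * x)) (k : ℕ) : 4 ^ k ≤ 8 * dyadicMass ψ k := by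
  induction k with
  | zero => rw [dyadicMass_zero (hpos 1).ne']; norm_num
  | succ k ih =>
    have := four_mul_dyadicMass_le hpos hdouble k
    rw [pow_succ]
    linarith

lemma sum_range_succ_le_two_mul {p : ℕ → ℝ} (hp₀ : 0 ≤ p 0) (hp : ∀ k, 2 * p k ≤ p (k + 1))
    (K : ℕ) : ∑ k ∈ Finset.range (K + 1), p k ≤ 2 * p K := by
  induction K with
  | zero => rw [Finset.sum_range_one]; linarith
  | succ K ih =>
    rw [Finset.sum_range_succ]
    linarith [hp K]

lemma clusterLength_pow_three_le (hpos : ∀ x, 0 < ψ x) (k : ℕ) :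
    (clusterLength ψ k : ℝ) ^ 3 ≤ dyadicMass ψ k := by
  have hroot : clusterLength ψ k ^ 3 ≤ ⌊dyadicMass ψ k⌋₊ :=
    (Nat.le_nthRoot_iff three_ne_zero).1 le_rfl
  exact (by exact_mod_cast hroot : (clusterLength ψ k : ℝ) ^ 3 ≤ ⌊dyadicMass ψ k⌋₊).trans
    (Nat.floor_le (dyadicMass_pos hpos k).le)

lemma dyadicMass_le_clusterLength_pow_three (ψ : ℝ → ℝ) (k : ℕ) :
    dyadicMass ψ k ≤ 4 * ((clusterLength ψ k : ℝ) ^ 3 + 1) := by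
  have hroot : ⌊dyadicMass ψ k⌋₊ + 1 ≤ (clusterLength ψ k + 1) ^ 3 :=
    Nat.lt_pow_nthRoot_add_one three_ne_zero _
  calc dyadicMass ψ k ≤ ⌊dyadicMass ψ k⌋₊ + 1 := (Nat.lt_floor_add_one _).le
    _ ≤ ((clusterLength ψ k : ℝ) + 1) ^ 3 := by exact_mod_cast hroot
    _ ≤ 2 ^ 2 * ((clusterLength ψ k : ℝ) ^ 3 + 1 ^ 3) :=
        add_pow_le (Nat.cast_nonneg _) zero_le_one 3
    _ = 4 * ((clusterLength ψ k : ℝ) ^ 3 + 1) := by norm_num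

lemma two_mul_clusterLength_le (hpos : ∀ x, 0 < ψ x) (hanti : Antitone ψ) (k : ℕ) :
    2 * clusterLength ψ k ≤ 2 ^ k := by
  have hcube : (2 * clusterLength ψ k : ℝ) ^ 3 ≤ (2 ^ k) ^ 3 := by
    rw [mul_pow, ← eight_pow_eq]
    linarith [clusterLength_pow_three_le hpos k, dyadicMass_le hpos hanti k]
  exact_mod_cast le_of_pow_le_pow_left₀ three_ne_zero (by positivity) hcube

lemma mul_dyadicMass_le_mul_pow_three (hpos : ∀ x, 0 < ψ x) (hanti : Antitone ψ)
    (hdouble : ∀ x, ψ x ≤ 2 * ψ (2 * x)) {k : ℕ} {x : ℝ} (h₁ : 2 ^ k ≤ x)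
    (h₂ : x ≤ 2 ^ (k + 1)) : 4 * ψ 1 * dyadicMass ψ k ≤ ψ x * x ^ 3 := by
  have hψ : ψ (2 ^ k) ≤ 2 * ψ x :=
    (hdouble _).trans (by rw [← pow_succ']; gcongr; exact hanti h₂)
  have hx := hpos x
  calc 4 * ψ 1 * dyadicMass ψ k = ψ (2 ^ k) / 2 * (2 ^ k) ^ 3 := by
        rw [← eight_pow_eq]; linarith [eight_pow_mul_eq (hpos 1).ne' k]
    _ ≤ ψ x * x ^ 3 := by gcongr; linarith

lemma mul_pow_three_le_mul_dyadicMass (hpos : ∀ x, 0 < ψ x) (hanti : Antitone ψ) {k : ℕ} (j : ℕ)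
    {x : ℝ} (h₁ : 2 ^ k ≤ x) (h₂ : x ≤ 2 ^ (k + j)) :
    ψ x * x ^ 3 ≤ 8 ^ (j + 1) * ψ 1 * dyadicMass ψ k := by
  have hk := hpos (2 ^ k)
  have hx : 0 ≤ x := le_trans (by positivity) h₁
  calc ψ x * x ^ 3 ≤ ψ (2 ^ k) * (2 ^ (k + j)) ^ 3 := by gcongr; exact hanti h₁
    _ = 8 ^ j * (8 ^ k * ψ (2 ^ k)) := by rw [← eight_pow_eq]; ring
    _ = 8 ^ (j + 1) * ψ 1 * dyadicMass ψ k := by rw [eight_pow_mul_eq (hpos 1).ne']; ring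

variable {b : ℕ → ℕ}

theorem addEnergy_trunc_clusterSeq_clusterLength_le (hpos : ∀ x, 0 < ψ x) (hanti : Antitone ψ)
    (hdouble : ∀ x, ψ x ≤ 2 * ψ (2 * x)) (hb₀ : 0 < b 0)
    (hb : ∀ i, (2 * i + 1) * b i ≤ b (i + 1)) {N : ℕ} (hN : N ≠ 0) :
    (addEnergy (trunc (clusterSeq b (clusterLength ψ)) N) : ℝ) ≤
      33 / (2 * ψ 1) * (ψ N * (N : ℝ) ^ 3) := by
  set K := Nat.log 2 N
  have hN_ge : (2 : ℝ) ^ K ≤ N := by exact_mod_cast Nat.pow_log_le_self 2 hN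
  have hN_le : (N : ℝ) ≤ 2 ^ (K + 1) := by
    exact_mod_cast (Nat.lt_pow_succ_log_self one_lt_two N).le
  have hψ₁ := hpos 1
  have hsq : (N : ℝ) ^ 2 ≤ 32 * dyadicMass ψ K := by
    calc (N : ℝ) ^ 2 ≤ (2 ^ (K + 1)) ^ 2 := by gcongr
      _ = 4 * 4 ^ K := by rw [← pow_mul, mul_comm, pow_mul]; norm_num; ring
      _ ≤ 32 * dyadicMass ψ K := by linarith [four_pow_le_dyadicMass hpos hdouble K]
  have hsum : ∑ k ∈ Finset.range (K + 1), (clusterLength ψ k : ℝ) ^ 3 ≤ 2 * dyadicMass ψ K :=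
    (Finset.sum_le_sum fun k _ => clusterLength_pow_three_le hpos k).trans <|
      sum_range_succ_le_two_mul (dyadicMass_pos hpos 0).le (fun k => by
        linarith [four_mul_dyadicMass_le hpos hdouble k, dyadicMass_pos hpos k]) K
  calc (addEnergy (trunc (clusterSeq b (clusterLength ψ)) N) : ℝ)
      ≤ 2 * (N : ℝ) ^ 2 + ∑ k ∈ Finset.range (K + 1), (clusterLength ψ k : ℝ) ^ 3 := by
        exact_mod_cast addEnergy_trunc_clusterSeq_le hb₀ hb N
    _ ≤ 66 * dyadicMass ψ K := by linarith
    _ = 33 / (2 * ψ 1) * (4 * ψ 1 * dyadicMass ψ K) := by field_simp; ring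
    _ ≤ 33 / (2 * ψ 1) * (ψ N * (N : ℝ) ^ 3) := by
        gcongr ?_ * ?_
        exact mul_dyadicMass_le_mul_pow_three hpos hanti hdouble hN_ge hN_le

theorem le_addEnergy_trunc_clusterSeq_clusterLength (hpos : ∀ x, 0 < ψ x) (hanti : Antitone ψ)
    (hb : ∀ k, 0 < b (2 ^ k)) {N : ℕ} (hN : 2 ≤ N) :
    1 / (6144 * ψ 1) * (ψ N * (N : ℝ) ^ 3) ≤
      addEnergy (trunc (clusterSeq b (clusterLength ψ)) N) := by
  set E := addEnergy (trunc (clusterSeq b (clusterLength ψ)) N)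
  obtain ⟨k, hk⟩ : ∃ k, Nat.log 2 N = k + 1 :=
    Nat.exists_eq_succ_of_ne_zero (Nat.log_pos one_lt_two hN).ne'
  have hN_ge : 2 ^ (k + 1) ≤ N := hk ▸ Nat.pow_log_le_self 2 (by omega)
  have hN_le : N < 2 ^ (k + 2) := by
    simpa only [hk] using Nat.lt_pow_succ_log_self one_lt_two N
  have hE_pos : 0 < E := by
    refine (Finset.addEnergy_self_pos ?_).trans_eq (addEnergy_eq_finsetAddEnergy _).symm
    exact (Finset.nonempty_Icc.2 (by omega)).image _
  have hcluster : clusterLength ψ k ^ 3 ≤ 2 * E :=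
    pow_three_le_two_mul_addEnergy_trunc_clusterSeq (hb k)
      (by have := two_mul_clusterLength_le hpos hanti k; omega) hN_ge
  have hmass : dyadicMass ψ k ≤ 12 * E := by
    have h₁ : (1 : ℝ) ≤ E := by exact_mod_cast hE_pos
    have h₂ : (clusterLength ψ k : ℝ) ^ 3 ≤ 2 * E := by exact_mod_cast hcluster
    linarith [dyadicMass_le_clusterLength_pow_three ψ k]
  have hψ₁ := hpos 1
  rw [one_div, inv_mul_le_iff₀ (by positivity)]
  calc ψ N * (N : ℝ) ^ 3 ≤ 8 ^ (2 + 1) * ψ 1 * dyadicMass ψ k :=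
        mul_pow_three_le_mul_dyadicMass hpos hanti 2
          (by exact_mod_cast (Nat.pow_le_pow_right two_pos k.le_succ).trans hN_ge)
          (by exact_mod_cast hN_le.le)
    _ ≤ 8 ^ (2 + 1) * ψ 1 * (12 * E) := by gcongr
    _ = 6144 * ψ 1 * E := by ring

lemma exists_eventuallyEq_pos_antitone_doubling (hpos : ∀ᶠ x in atTop, 0 < ψ x)
    (hanti : ∀ᶠ x₀ in atTop, AntitoneOn ψ (Set.Ici x₀))
    (hdouble : ∀ᶠ x in atTop, ψ x ≤ 2 * ψ (2 * x)) :
    ∃ φ : ℝ → ℝ, φ =ᶠ[atTop] ψ ∧ (∀ x, 0 < φ x) ∧ Antitone φ ∧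
      ∀ x, φ x ≤ 2 * φ (2 * x) := by
  obtain ⟨x₀, hpos, hanti, hdouble, hx₀⟩ := ((eventually_forall_ge_atTop.2 hpos).and
    (hanti.and ((eventually_forall_ge_atTop.2 hdouble).and (eventually_ge_atTop 0)))).exists
  have hmem (x : ℝ) : max x x₀ ∈ Set.Ici x₀ := le_max_right x x₀
  refine ⟨fun x => ψ (max x x₀), ?_, fun x => hpos _ (hmem x), fun x y hxy =>
    hanti (hmem x) (hmem y) (max_le_max_right x₀ hxy), fun x => ?_⟩
  · filter_upwards [eventually_ge_atTop x₀] with x hx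
    rw [max_eq_left hx]
  · have hmax : max (2 * x) x₀ ≤ 2 * max x x₀ := by
      rw [mul_max_of_nonneg _ _ zero_le_two]
      exact max_le_max_left _ (by linarith)
    have hψ : ψ (2 * max x x₀) ≤ ψ (max (2 * x) x₀) :=
      hanti (hmem _) ((hmem _).trans hmax) hmax
    linarith [hdouble _ (hmem x)]

end ClusterLength

section PairCorrelation

lemma card_sq_le_card_mul_card_filter_eq {ι β : Type*} {s : Finset ι} {t : Finset β} {f : ι → β}
    (hf : (s : Set ι).MapsTo f t) :
    s.card ^ 2 ≤ t.card * ((s ×ˢ s).filter fun p => f p.1 = f p.2).card := by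
  have hfiber (c : β) : (((s ×ˢ s).filter fun p => f p.1 = f p.2).filter fun p => f p.1 = c) =
      (s.filter fun i => f i = c) ×ˢ (s.filter fun i => f i = c) := by
    ext ⟨i, j⟩
    simp only [Finset.mem_filter, Finset.mem_product]
    grind
  have hmaps : ((((s ×ˢ s).filter fun p => f p.1 = f p.2) : Finset (ι × ι)) : Set (ι × ι)).MapsTo
      (fun p => f p.1) t := fun p hp => hf (Finset.mem_product.1 (Finset.mem_filter.1 hp).1).1
  calc s.card ^ 2 = (∑ c ∈ t, (s.filter fun i => f i = c).card) ^ 2 := by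
        rw [Finset.card_eq_sum_card_fiberwise hf]
    _ ≤ t.card * ∑ c ∈ t, (s.filter fun i => f i = c).card ^ 2 := sq_sum_le_card_mul_sum_sq
    _ = t.card * ((s ×ˢ s).filter fun p => f p.1 = f p.2).card := by
        simp only [Finset.card_eq_sum_card_fiberwise hmaps, hfiber, Finset.card_product, sq]

lemma dni_sub_le_abs_fract_sub (x y : ℝ) : dni (x - y) ≤ |Int.fract x - Int.fract y| := by
  refine (round_le (x - y) (⌊x⌋ - ⌊y⌋)).trans_eq (congrArg abs ?_)
  push_cast [Int.fract]
  ring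

lemma card_filter_dni_le_mul_pcf {a : ℕ → ℕ} {s α : ℝ} {N : ℕ} (hN : 0 < N) :
    (((Finset.Icc 1 N ×ˢ Finset.Icc 1 N).filter fun p =>
      dni (α * (a p.1 : ℝ) - α * (a p.2 : ℝ)) ≤ s / N).card : ℝ) ≤ N * (pcf a s α N + 1) := by
  have hsub : ((Finset.Icc 1 N ×ˢ Finset.Icc 1 N).filter fun p =>
      dni (α * (a p.1 : ℝ) - α * (a p.2 : ℝ)) ≤ s / N) ⊆
      ((Finset.Icc 1 N ×ˢ Finset.Icc 1 N).filter fun p =>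
        p.1 ≠ p.2 ∧ dni (α * (a p.1 : ℝ) - α * (a p.2 : ℝ)) ≤ s / N) ∪ (Finset.Icc 1 N).diag := by
    intro p hp
    simp only [Finset.mem_filter, Finset.mem_product, Finset.mem_union, Finset.mem_diag] at hp ⊢
    tauto
  have hcard := (Finset.card_le_card hsub).trans (Finset.card_union_le _ _)
  rw [Finset.diag_card, Nat.card_Icc, Nat.add_sub_cancel] at hcard
  rw [mul_add, mul_one, pcf, mul_div_cancel₀ _ (Nat.cast_ne_zero.2 hN.ne')]
  exact_mod_cast hcard

lemma abs_sub_le_one_div_of_natFloor_mul_eq {c x y : ℝ} (hc : 0 < c) (hx : 0 ≤ x) (hy : 0 ≤ y)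
    (h : ⌊x * c⌋₊ = ⌊y * c⌋₊) : |x - y| ≤ 1 / c := by
  have hfloor : ⌊x * c⌋ = ⌊y * c⌋ := by
    rw [← Int.natCast_floor_eq_floor (mul_nonneg hx hc.le),
      ← Int.natCast_floor_eq_floor (mul_nonneg hy hc.le), h]
  have hlt := Int.abs_sub_lt_one_of_floor_eq_floor hfloor
  rw [← sub_mul, abs_mul, abs_of_pos hc] at hlt
  exact (le_div_iff₀ hc).2 hlt.le

theorem card_sq_le_mul_pcf {a : ℕ → ℕ} {s δ α : ℝ} (hs : 0 < s) (hδ : 0 ≤ δ) {N : ℕ}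
    (hN : 0 < N) {J : Finset ℕ} (hJ : J ⊆ Finset.Icc 1 N)
    (hfract : ∀ n ∈ J, Int.fract (α * a n) ≤ δ) :
    (J.card : ℝ) ^ 2 ≤ (δ * (N / s) + 1) * (N * (pcf a s α N + 1)) := by
  have hNs : 0 < N / s := by positivity
  set box : ℕ → ℕ := fun n => ⌊Int.fract (α * a n) * (N / s)⌋₊
  have hmaps : (J : Set ℕ).MapsTo box (Finset.range (⌊δ * (N / s)⌋₊ + 1)) := fun n hn =>
    Finset.mem_coe.2 <| Finset.mem_range_succ_iff.2 <| Nat.floor_le_floor <| by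
      gcongr; exact hfract n hn
  have hclose {i j : ℕ} (h : box i = box j) :
      dni (α * (a i : ℝ) - α * (a j : ℝ)) ≤ s / N :=
    one_div_div (N : ℝ) s ▸ (dni_sub_le_abs_fract_sub _ _).trans
      (abs_sub_le_one_div_of_natFloor_mul_eq hNs (Int.fract_nonneg _) (Int.fract_nonneg _) h)
  have hcard : J.card ^ 2 ≤ (⌊δ * (N / s)⌋₊ + 1) * ((Finset.Icc 1 N ×ˢ Finset.Icc 1 N).filter
      fun p => dni (α * (a p.1 : ℝ) - α * (a p.2 : ℝ)) ≤ s / N).card := by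
    refine (card_sq_le_card_mul_card_filter_eq hmaps).trans ?_
    rw [Finset.card_range]
    exact Nat.mul_le_mul_left _ (Finset.card_le_card fun p hp => by
      simp only [Finset.mem_filter, Finset.mem_product] at hp ⊢
      exact ⟨⟨hJ hp.1.1, hJ hp.1.2⟩, hclose hp.2⟩)
  calc (J.card : ℝ) ^ 2 ≤ (⌊δ * (N / s)⌋₊ + 1) * ((Finset.Icc 1 N ×ˢ Finset.Icc 1 N).filter
        fun p => dni (α * (a p.1 : ℝ) - α * (a p.2 : ℝ)) ≤ s / N).card := by exact_mod_cast hcard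
    _ ≤ (δ * (N / s) + 1) * (N * (pcf a s α N + 1)) := by
        gcongr
        · exact Nat.floor_le (by positivity)
        · exact card_filter_dni_le_mul_pcf hN

theorem not_hasPPC_of_frequently_le_card {a : ℕ → ℕ} {α c δ : ℝ} (hc : 0 ≤ c) (hδ : 0 ≤ δ)
    (hcδ : 3 * δ < c ^ 2)
    (h : ∃ᶠ N : ℕ in atTop,
      c * N ≤ ((Finset.Icc 1 N).filter fun n => Int.fract (α * a n) ≤ δ).card) :
    ¬ hasPPC a α := by
  intro hPPC
  have hlim : Tendsto (fun N : ℕ => (δ + 1 / N) * (pcf a 1 α N + 1)) atTop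
      (nhds ((δ + 0) * (2 * 1 + 1))) :=
    (tendsto_one_div_atTop_nhds_zero_nat.const_add δ).mul ((hPPC 1 zero_le_one).add_const 1)
  have hlt : ∀ᶠ N : ℕ in atTop, (δ + 1 / N) * (pcf a 1 α N + 1) < c ^ 2 :=
    hlim.eventually_lt_const (by linarith)
  obtain ⟨N, hcard, hlt, hN⟩ := (h.and_eventually (hlt.and (eventually_gt_atTop 0))).exists
  have hN₀ : (0 : ℝ) < N := by exact_mod_cast hN
  refine hlt.not_ge (le_of_mul_le_mul_right ?_ (pow_pos hN₀ 2))
  calc c ^ 2 * (N : ℝ) ^ 2 = (c * N) ^ 2 := by ring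
    _ ≤ (((Finset.Icc 1 N).filter fun n => Int.fract (α * a n) ≤ δ).card : ℝ) ^ 2 := by gcongr
    _ ≤ (δ * (N / 1) + 1) * (N * (pcf a 1 α N + 1)) :=
        card_sq_le_mul_pcf one_pos hδ hN (Finset.filter_subset _ _)
          fun n hn => (Finset.mem_filter.1 hn).2
    _ = (δ + 1 / N) * (pcf a 1 α N + 1) * (N : ℝ) ^ 2 := by field_simp

theorem not_hasPPC_clusterSeq {b m : ℕ → ℕ} (hm : ∀ k, 2 * m k ≤ 2 ^ k) {α : ℝ}
    (hα : ∀ n, Int.fract (α * b n) ≤ 1 / 256) : ¬ hasPPC (clusterSeq b m) α := by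
  have hcard (k : ℕ) : 1 / 4 * ((2 ^ (k + 1) : ℕ) : ℝ) ≤ ((Finset.Icc 1 (2 ^ (k + 1))).filter
      fun n => Int.fract (α * clusterSeq b m n) ≤ 1 / 256).card := by
    have hsub : Finset.Ico (2 ^ k + m k) (2 ^ (k + 1)) ⊆ (Finset.Icc 1 (2 ^ (k + 1))).filter
        fun n => Int.fract (α * clusterSeq b m n) ≤ 1 / 256 := fun n hn => by
      rw [Finset.mem_Ico] at hn
      have := Nat.two_pow_pos k
      refine Finset.mem_filter.2 ⟨Finset.mem_Icc.2 (by omega), ?_⟩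
      rw [clusterSeq_of_add_le hn.1 hn.2]
      exact hα n
    have hle : 2 ^ (k + 1) ≤ 4 * (Finset.Ico (2 ^ k + m k) (2 ^ (k + 1))).card := by
      have := hm k
      rw [Nat.card_Ico, pow_succ]
      omega
    have := hle.trans (Nat.mul_le_mul_left 4 (Finset.card_le_card hsub))
    rw [one_div, inv_mul_le_iff₀ four_pos]
    exact_mod_cast this
  have hpow : Tendsto (fun k : ℕ => 2 ^ (k + 1)) atTop (atTop : Filter ℕ) :=
    (tendsto_pow_atTop_atTop_of_one_lt one_lt_two).comp (tendsto_add_atTop_nat 1)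
  exact not_hasPPC_of_frequently_le_card (by norm_num) (by norm_num) (by norm_num)
    (hpow.frequently (Frequently.of_forall hcard))

end PairCorrelation

section CantorSet

lemma summable_and_tsum_le_of_le_sub {f g : ℕ → ℝ} (hf : ∀ n, 0 ≤ f n) (hg : ∀ n, 0 ≤ g n)
    (hfg : ∀ n, f n ≤ g n - g (n + 1)) : Summable f ∧ ∑' n, f n ≤ g 0 := by
  have hsum (n : ℕ) : ∑ i ∈ Finset.range n, f i ≤ g 0 := calc
    _ ≤ ∑ i ∈ Finset.range n, (g i - g (i + 1)) := Finset.sum_le_sum fun i _ => hfg i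
    _ = g 0 - g n := Finset.sum_range_sub' g n
    _ ≤ g 0 := sub_le_self _ (hg n)
  exact ⟨summable_of_sum_range_le hf hsum, Real.tsum_le_of_sum_range_le hf hsum⟩

/-- The base sequence fed to `clusterSeq`. Its ratio `2 ^ (2 * i + 9)` leaves room, in the `i`-th
digit of a mixed radix expansion, for `2 * i + 1` free bits preceded by eight zeros. -/
def basePoint (i : ℕ) : ℕ := 2 ^ (i * (i + 8))

lemma basePoint_zero : basePoint 0 = 1 := rfl

lemma basePoint_pos (i : ℕ) : 0 < basePoint i := Nat.two_pow_pos _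

lemma basePoint_succ (i : ℕ) : basePoint (i + 1) = 2 ^ (2 * i + 9) * basePoint i := by
  rw [basePoint, basePoint, ← pow_add]
  ring_nf

lemma mul_basePoint_le_basePoint_succ (i : ℕ) : (2 * i + 1) * basePoint i ≤ basePoint (i + 1) := by
  rw [basePoint_succ]
  gcongr
  exact (Nat.lt_two_pow_self (n := 2 * i + 1)).le.trans (Nat.pow_le_pow_right two_pos (by omega))

/-- The real number with digits `d i < 2 ^ (2 * i + 1)` in the mixed radix system of base
`basePoint`: its binary expansion is the concatenation of the blocks `0 ⋯ 0 (d i)`, the `i`-th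
one being of length `2 * i + 9` and so beginning with eight zeros. -/
noncomputable def cantorSeries (d : ℕ → ℕ) : ℝ := ∑' i, (d i : ℝ) / basePoint (i + 1)

section Digits

variable {d e : ℕ → ℕ}

lemma digit_div_basePoint_le {i : ℕ} (hd : d i < 2 ^ (2 * i + 1)) :
    (d i : ℝ) / basePoint (i + 1) ≤ 1 / 256 / basePoint i - 1 / 256 / basePoint (i + 1) := by
  have hpos : (0 : ℝ) < basePoint i := Nat.cast_pos.2 (basePoint_pos i)
  have hd' : (d i : ℝ) + 1 ≤ 2 ^ (2 * i + 1) := by exact_mod_cast hd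
  rw [le_sub_iff_add_le, ← add_div]
  calc ((d i : ℝ) + 1 / 256) / basePoint (i + 1) ≤ 2 ^ (2 * i + 1) / basePoint (i + 1) := by
        gcongr
        linarith
    _ = 1 / 256 / basePoint i := by
        rw [basePoint_succ]
        push_cast
        field_simp
        ring

lemma cantorSeries_sub_sum_mem_Icc (hd : ∀ i, d i < 2 ^ (2 * i + 1)) (n : ℕ) :
    cantorSeries d - ∑ i ∈ Finset.range n, (d i : ℝ) / basePoint (i + 1) ∈
      Set.Icc (0 : ℝ) (1 / 256 / basePoint n) := by
  have hterm (k i : ℕ) : (0 : ℝ) ≤ d (i + k) / basePoint (i + k + 1) := by positivity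
  have htail (k : ℕ) := summable_and_tsum_le_of_le_sub (hterm k)
    (g := fun i => 1 / 256 / basePoint (i + k)) (fun i => by positivity)
    (fun i => by simpa only [add_right_comm i 1 k] using digit_div_basePoint_le (hd (i + k)))
  have hsummable : Summable fun i => (d i : ℝ) / basePoint (i + 1) := (htail 0).1
  rw [cantorSeries, ← hsummable.sum_add_tsum_nat_add n, add_sub_cancel_left]
  exact ⟨tsum_nonneg (hterm n), by simpa only [zero_add] using (htail n).2⟩

lemma exists_sum_digits_mul_basePoint_eq_natCast (d : ℕ → ℕ) (n : ℕ) :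
    ∃ z : ℕ, (∑ i ∈ Finset.range n, (d i : ℝ) / basePoint (i + 1)) * basePoint n = z := by
  induction n with
  | zero => exact ⟨0, by simp⟩
  | succ n ih =>
    obtain ⟨z, hz⟩ := ih
    refine ⟨2 ^ (2 * n + 9) * z + d n, ?_⟩
    have hpos : (basePoint (n + 1) : ℝ) ≠ 0 := Nat.cast_ne_zero.2 (basePoint_pos _).ne'
    rw [Finset.sum_range_succ, add_mul, div_mul_cancel₀ _ hpos, basePoint_succ, Nat.cast_mul,
      mul_left_comm, hz]
    push_cast
    rfl

lemma fract_cantorSeries_mul_basePoint_le (hd : ∀ i, d i < 2 ^ (2 * i + 1)) (n : ℕ) :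
    Int.fract (cantorSeries d * basePoint n) ≤ 1 / 256 := by
  have hpos : (0 : ℝ) < basePoint n := Nat.cast_pos.2 (basePoint_pos n)
  obtain ⟨z, hz⟩ := exists_sum_digits_mul_basePoint_eq_natCast d n
  obtain ⟨hnonneg, hle⟩ := cantorSeries_sub_sum_mem_Icc hd n
  rw [le_div_iff₀ hpos, sub_mul, hz] at hle
  have hnonneg := mul_nonneg hnonneg hpos.le
  rw [sub_mul, hz] at hnonneg
  rw [← Int.fract_sub_natCast _ z, Int.fract_eq_self.2 ⟨hnonneg, by linarith⟩]
  exact hle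

lemma one_div_le_abs_cantorSeries_sub (hd : ∀ i, d i < 2 ^ (2 * i + 1))
    (he : ∀ i, e i < 2 ^ (2 * i + 1)) {n : ℕ} (heq : ∀ i < n, d i = e i) (hne : d n ≠ e n) :
    1 / (2 * (basePoint (n + 1) : ℝ)) ≤ |cantorSeries d - cantorSeries e| := by
  wlog hlt : e n < d n generalizing d e
  · rw [abs_sub_comm]
    exact this he hd (fun i hi => (heq i hi).symm) hne.symm (by omega)
  have hd_lower := (cantorSeries_sub_sum_mem_Icc hd (n + 1)).1
  have he_upper := (cantorSeries_sub_sum_mem_Icc he (n + 1)).2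
  have hsum : ∑ i ∈ Finset.range n, (d i : ℝ) / basePoint (i + 1) =
      ∑ i ∈ Finset.range n, (e i : ℝ) / basePoint (i + 1) :=
    Finset.sum_congr rfl fun i hi => by rw [heq i (Finset.mem_range.1 hi)]
  rw [Finset.sum_range_succ] at hd_lower he_upper
  have hdigit : ((e n : ℝ) + 1) / basePoint (n + 1) ≤ d n / basePoint (n + 1) := by
    gcongr
    exact_mod_cast hlt
  have hfrac : (1 : ℝ) / (2 * basePoint (n + 1)) ≤
      1 / basePoint (n + 1) - 1 / 256 / basePoint (n + 1) := by
    rw [← div_div, ← sub_div]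
    gcongr
    norm_num
  rw [add_div] at hdigit
  exact le_abs.2 (Or.inl (by linarith))

end Digits

/-- The binary digits of `u ∈ [0, 1)` in positions `i ^ 2 + 1, …, (i + 1) ^ 2`, read as an
integer. -/
noncomputable def binaryBlock (u : ℝ) (i : ℕ) : ℕ := ⌊u * 2 ^ (i + 1) ^ 2⌋₊ % 2 ^ (2 * i + 1)

lemma binaryBlock_lt (u : ℝ) (i : ℕ) : binaryBlock u i < 2 ^ (2 * i + 1) :=
  Nat.mod_lt _ (Nat.two_pow_pos _)

lemma natFloor_mul_two_pow_succ_sq (u : ℝ) (n : ℕ) :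
    ⌊u * 2 ^ (n + 1) ^ 2⌋₊ = 2 ^ (2 * n + 1) * ⌊u * 2 ^ n ^ 2⌋₊ + binaryBlock u n := by
  have hdiv : ⌊u * 2 ^ n ^ 2⌋₊ = ⌊u * 2 ^ (n + 1) ^ 2⌋₊ / 2 ^ (2 * n + 1) := by
    rw [← Nat.floor_div_natCast, show (n + 1) ^ 2 = n ^ 2 + (2 * n + 1) by ring, pow_add,
      ← mul_assoc, Nat.cast_pow, Nat.cast_ofNat, mul_div_cancel_right₀ _ (by positivity)]
  rw [hdiv, binaryBlock, Nat.div_add_mod]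

lemma abs_sub_le_of_binaryBlock_eq {u v : ℝ} (hu : u ∈ Set.Ico (0 : ℝ) 1)
    (hv : v ∈ Set.Ico (0 : ℝ) 1) {n : ℕ} (h : ∀ i < n, binaryBlock u i = binaryBlock v i) :
    |u - v| ≤ 1 / 2 ^ n ^ 2 := by
  refine abs_sub_le_one_div_of_natFloor_mul_eq (by positivity) hu.1 hv.1 ?_
  induction n with
  | zero => simp [Nat.floor_eq_zero.2 hu.2, Nat.floor_eq_zero.2 hv.2]
  | succ n ih =>
    rw [natFloor_mul_two_pow_succ_sq, natFloor_mul_two_pow_succ_sq, h n n.lt_succ_self,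
      ih fun i hi => h i (hi.trans n.lt_succ_self)]

lemma exists_binaryBlock_ne {u v : ℝ} (hu : u ∈ Set.Ico (0 : ℝ) 1) (hv : v ∈ Set.Ico (0 : ℝ) 1)
    (hne : u ≠ v) : ∃ n, binaryBlock u n ≠ binaryBlock v n := by
  by_contra! h
  have hlim : Tendsto (fun n : ℕ => (1 : ℝ) / 2 ^ n ^ 2) atTop (nhds 0) := by
    simpa only [one_div, Function.comp_def] using
      (tendsto_inv_atTop_zero.comp (tendsto_pow_atTop_atTop_of_one_lt (one_lt_two (α := ℝ)))).comp
        (tendsto_pow_atTop two_ne_zero)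
  have hle : |u - v| ≤ 0 :=
    ge_of_tendsto' hlim fun n => abs_sub_le_of_binaryBlock_eq hu hv fun i _ => h i
  exact hne (sub_eq_zero.1 (abs_nonpos_iff.1 hle))

/-- The number obtained from `u ∈ [0, 1)` by inserting eight zeros into its binary expansion
after each of the positions `0, 1, 4, 9, …`. -/
noncomputable def spread (u : ℝ) : ℝ := cantorSeries (binaryBlock u)

lemma spread_mem_Icc (u : ℝ) : spread u ∈ Set.Icc (0 : ℝ) (1 / 256) := by
  simpa [spread, basePoint_zero] using cantorSeries_sub_sum_mem_Icc (binaryBlock_lt u) 0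

lemma exists_abs_sub_le_and_le_abs_spread_sub {u v : ℝ} (hu : u ∈ Set.Ico (0 : ℝ) 1)
    (hv : v ∈ Set.Ico (0 : ℝ) 1) (hne : u ≠ v) :
    ∃ n : ℕ, |u - v| ≤ 1 / 2 ^ n ^ 2 ∧
      1 / (2 * (basePoint (n + 1) : ℝ)) ≤ |spread u - spread v| := by
  have hex := exists_binaryBlock_ne hu hv hne
  have hmin : ∀ i < Nat.find hex, binaryBlock u i = binaryBlock v i :=
    fun i hi => not_not.1 (Nat.find_min hex hi)
  exact ⟨Nat.find hex, abs_sub_le_of_binaryBlock_eq hu hv hmin,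
    one_div_le_abs_cantorSeries_sub (binaryBlock_lt u) (binaryBlock_lt v) hmin (Nat.find_spec hex)⟩

lemma one_div_two_pow_sq_le_mul_rpow {t : ℝ} (ht : t < 1) (n : ℕ) :
    (1 : ℝ) / 2 ^ n ^ 2 ≤ 2 ^ (10 + 25 / (1 - t)) * (1 / (2 * (basePoint (n + 1) : ℝ))) ^ t := by
  have hone_sub : 0 < 1 - t := sub_pos.2 ht
  have hbase : 2 * (basePoint (n + 1) : ℝ) = 2 ^ ((n : ℝ) ^ 2 + 10 * n + 10) := by
    rw [basePoint, Nat.cast_pow, Nat.cast_ofNat, ← pow_succ', ← Real.rpow_natCast]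
    push_cast
    ring_nf
  have hsq : (2 : ℝ) ^ n ^ 2 = 2 ^ ((n : ℝ) ^ 2) := by
    rw [← Real.rpow_natCast, Nat.cast_pow]
  rw [hbase, hsq, one_div, one_div, ← Real.rpow_neg two_pos.le, ← Real.rpow_neg two_pos.le,
    ← Real.rpow_mul two_pos.le, ← Real.rpow_add two_pos]
  refine Real.rpow_le_rpow_of_exponent_le one_le_two ?_
  have hcomplete : (1 - t) * ((n : ℝ) - 5 / (1 - t)) ^ 2 =
      (1 - t) * (n : ℝ) ^ 2 - 10 * n + 25 / (1 - t) := by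
    field_simp
    ring
  have hnonneg : 0 ≤ (1 - t) * ((n : ℝ) - 5 / (1 - t)) ^ 2 := by positivity
  nlinarith [mul_nonneg hone_sub.le n.cast_nonneg]

lemma abs_sub_le_mul_abs_spread_sub_rpow {t : ℝ} (ht₀ : 0 ≤ t) (ht₁ : t < 1) {u v : ℝ}
    (hu : u ∈ Set.Ico (0 : ℝ) 1) (hv : v ∈ Set.Ico (0 : ℝ) 1) :
    |u - v| ≤ 2 ^ (10 + 25 / (1 - t)) * |spread u - spread v| ^ t := by
  rcases eq_or_ne u v with rfl | hne
  · rw [sub_self, abs_zero]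
    positivity
  obtain ⟨n, hclose, hfar⟩ := exists_abs_sub_le_and_le_abs_spread_sub hu hv hne
  refine (hclose.trans (one_div_two_pow_sq_le_mul_rpow ht₁ n)).trans ?_
  gcongr

open scoped NNReal in
theorem dimH_le_dimH_image_of_forall_edist_le {X Y : Type*} [EMetricSpace X] [EMetricSpace Y]
    {f : X → Y} {s : Set X}
    (h : ∀ t : ℝ≥0, 0 < t → t < 1 → ∃ C : ℝ≥0, ∀ x ∈ s, ∀ y ∈ s,
      edist x y ≤ C * edist (f x) (f y) ^ (t : ℝ)) :
    dimH s ≤ dimH (f '' s) := by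
  rcases s.eq_empty_or_nonempty with rfl | ⟨x₀, -⟩
  · simp
  have : Nonempty X := ⟨x₀⟩
  have hinj : Set.InjOn f s := fun x hx y hy hxy => by
    obtain ⟨C, hC⟩ := h 2⁻¹ (by norm_num) (by norm_num)
    simpa [hxy] using hC x hx y hy
  have hinv : Set.LeftInvOn (Function.invFunOn f s) f s := hinj.leftInvOn_invFunOn
  refine ENNReal.le_of_forall_lt_one_mul_le fun a ha => ?_
  lift a to ℝ≥0 using ha.ne_top
  rcases eq_zero_or_pos a with rfl | ha₀
  · simp
  obtain ⟨C, hC⟩ := h a ha₀ (by exact_mod_cast ha)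
  have hholder : HolderOnWith C a (Function.invFunOn f s) (f '' s) := by
    rintro _ ⟨x, hx, rfl⟩ _ ⟨y, hy, rfl⟩
    rw [hinv hx, hinv hy]
    exact hC x hx y hy
  have hle := hholder.dimH_image_le ha₀
  rwa [hinv.image_image, ENNReal.le_div_iff_mul_le (by simp [ha₀.ne']) (by simp), mul_comm] at hle

theorem one_le_dimH_image_spread : 1 ≤ dimH (spread '' Set.Ioo 0 1) := by
  have hdim : dimH (Set.Ioo (0 : ℝ) 1) = 1 := by
    rw [Real.dimH_of_nonempty_interior (by simp), Module.finrank_self, Nat.cast_one]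
  rw [← hdim]
  refine dimH_le_dimH_image_of_forall_edist_le fun t _ ht₁ =>
    ⟨Real.toNNReal (2 ^ (10 + 25 / (1 - (t : ℝ)))), fun u hu v hv => ?_⟩
  rw [edist_dist, edist_dist, ENNReal.ofReal_rpow_of_nonneg dist_nonneg t.coe_nonneg,
    ← ENNReal.ofReal, ← ENNReal.ofReal_mul (by positivity)]
  exact ENNReal.ofReal_le_ofReal (abs_sub_le_mul_abs_spread_sub_rpow t.coe_nonneg ht₁
    (Set.Ioo_subset_Ico_self hu) (Set.Ioo_subset_Ico_self hv))

lemma spread_zero : spread 0 = 0 := by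
  simp [spread, cantorSeries, binaryBlock]

lemma spread_pos {u : ℝ} (hu : u ∈ Set.Ioo (0 : ℝ) 1) : 0 < spread u := by
  refine (spread_mem_Icc u).1.lt_of_ne' fun h => ?_
  obtain ⟨n, -, hfar⟩ := exists_abs_sub_le_and_le_abs_spread_sub (Set.Ioo_subset_Ico_self hu)
    (Set.left_mem_Ico.2 one_pos) hu.1.ne'
  have hpos : (0 : ℝ) < basePoint (n + 1) := Nat.cast_pos.2 (basePoint_pos _)
  rw [h, spread_zero, sub_self, abs_zero] at hfar
  exact hfar.not_gt (by positivity)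

theorem dimH_NPPC_clusterSeq_basePoint {m : ℕ → ℕ} (hm : ∀ k, 2 * m k ≤ 2 ^ k) :
    dimH (NPPC (clusterSeq basePoint m)) = 1 := by
  have hsub : spread '' Set.Ioo 0 1 ⊆ NPPC (clusterSeq basePoint m) := by
    rintro _ ⟨u, hu, rfl⟩
    exact ⟨⟨spread_pos hu, (spread_mem_Icc u).2.trans_lt (by norm_num)⟩,
      not_hasPPC_clusterSeq hm (fract_cantorSeries_mul_basePoint_le (binaryBlock_lt u))⟩
  refine le_antisymm ?_ (one_le_dimH_image_spread.trans (dimH_mono hsub))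
  exact (dimH_mono (Set.subset_univ _)).trans_eq Real.dimH_univ

end CantorSet

theorem full_hausdorff_dimension_with_iterated_log_energy_general {ψ : ℝ → ℝ}
    (hpos : ∀ᶠ x in atTop, 0 < ψ x) (hanti : ∀ᶠ x₀ in atTop, AntitoneOn ψ (Set.Ici x₀))
    (hdouble : ∀ᶠ x in atTop, ψ x ≤ 2 * ψ (2 * x)) :
    ∃ a : ℕ → ℕ, (∀ n, 1 ≤ n → a n < a (n + 1)) ∧ 0 < a 1 ∧
      (∃ C₁ : ℝ, 0 < C₁ ∧ ∃ C₂ : ℝ, 0 < C₂ ∧ ∀ᶠ N : ℕ in atTop,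
        C₁ * (ψ N * (N : ℝ) ^ 3) ≤ (addEnergy (trunc a N) : ℝ) ∧
        (addEnergy (trunc a N) : ℝ) ≤ C₂ * (ψ N * (N : ℝ) ^ 3)) ∧
      dimH (NPPC a) = 1 := by
  obtain ⟨φ, hφψ, hφ_pos, hφ_anti, hφ_double⟩ :=
    exists_eventuallyEq_pos_antitone_doubling hpos hanti hdouble
  have hb := mul_basePoint_le_basePoint_succ
  have hφ₁ := hφ_pos 1
  refine ⟨clusterSeq basePoint (clusterLength φ),
    fun n hn => clusterSeq_lt_succ (basePoint_pos 0) hb hn, clusterSeq_pos (basePoint_pos 0) hb 1,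
    ⟨1 / (6144 * φ 1), by positivity, 33 / (2 * φ 1), by positivity, ?_⟩,
    dimH_NPPC_clusterSeq_basePoint (two_mul_clusterLength_le hφ_pos hφ_anti)⟩
  filter_upwards [tendsto_natCast_atTop_atTop.eventually hφψ, eventually_ge_atTop 2] with N hφN hN
  rw [← hφN]
  exact ⟨le_addEnergy_trunc_clusterSeq_clusterLength hφ_pos hφ_anti (fun _ => basePoint_pos _) hN,
    addEnergy_trunc_clusterSeq_clusterLength_le hφ_pos hφ_anti hφ_double (basePoint_pos 0) hb
      (by omega)⟩

theorem full_hausdorff_dimension_with_iterated_log_energy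
    (r : ℕ) (hr : 1 ≤ r) (ε : ℝ) (hε : 0 < ε) :
    ∃ a : ℕ → ℕ, (∀ n, 1 ≤ n → a n < a (n + 1)) ∧ 0 < a 1 ∧
      (∃ C₁ : ℝ, 0 < C₁ ∧ ∃ C₂ : ℝ, 0 < C₂ ∧ ∀ᶠ N : ℕ in atTop,
        C₁ * ((iterLog r (N : ℝ)) ^ (-ε) * (N : ℝ) ^ 3 /
            ∏ k ∈ Finset.Icc 1 r, iterLog k (N : ℝ)) ≤
            (addEnergy (trunc a N) : ℝ) ∧
        (addEnergy (trunc a N) : ℝ) ≤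
            C₂ * ((iterLog r (N : ℝ)) ^ (-ε) * (N : ℝ) ^ 3 /
            ∏ k ∈ Finset.Icc 1 r, iterLog k (N : ℝ))) ∧
      dimH (NPPC a) = 1 := by
  simpa only [energyDensity, div_mul_eq_mul_div] using
    full_hausdorff_dimension_with_iterated_log_energy_general (eventually_energyDensity_pos hr ε)
      (eventually_antitoneOn_energyDensity hr hε.le) (eventually_energyDensity_le_two_mul hr ε)
end

section
/- (Erdős–Rényi Borel–Cantelli lemma) Let (A_n)_{n≥1} be a sequence of Lebesgue measurable subsets of [0,1] satisfying Σ_{n≥1} λ(A_n) = ∞. Then λ( limsup_{n→∞} A_n ) ≥ limsup_{N→∞} ( Σ_{n≤N} λ(A_n) )² / ( Σ_{m,n≤N} λ(A_n ∩ A_m) ). -/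
open Filter MeasureTheory

/-!
By Cauchy–Schwarz in `L²` for the counting function `∑ i ∈ s, 1_{A i}` and the indicator of the
union, `(∑ i, μ (A i))² ≤ μ (⋃ i, A i) * ∑ i, ∑ j, μ (A i ∩ A j)` (the Chung–Erdős inequality).
Apply this to the indices in `[k, N)`. Since `∑ μ (A n)` diverges, deleting the first `k` events
does not lower the limsup of the ratio as `N → ∞`, so the tail union `⋃ n ≥ k, A n` has measure at
least that limsup. Finally let `k → ∞`.
-/

open scoped ENNReal RealInnerProductSpace Topology

theorem tendsto_sum_toReal_atTop_of_tsum_eq_top {f : ℕ → ℝ≥0∞} (hf : ∀ n, f n ≠ ⊤)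
    (hsum : ∑' n, f n = ⊤) :
    Tendsto (fun N ↦ ∑ n ∈ Finset.range N, (f n).toReal) atTop atTop := by
  refine (not_summable_iff_tendsto_nat_atTop_of_nonneg fun _ ↦ ENNReal.toReal_nonneg).1 fun h ↦ ?_
  apply h.tsum_ofReal_ne_top
  simpa only [ENNReal.ofReal_toReal (hf _)] using hsum

theorem limsup_sq_div_le_of_sq_sub_le_mul {ι : Type*} {l : Filter ι} [l.NeBot] {S Q : ι → ℝ}
    {L c : ℝ} (hL : 0 ≤ L) (hS : Tendsto S l atTop)
    (hSQ : ∀ᶠ i in l, (S i - c) ^ 2 ≤ L * Q i) :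
    limsup (fun i ↦ S i ^ 2 / Q i) l ≤ L := by
  have hQ : ∀ᶠ i in l, 0 < Q i := by
    filter_upwards [hSQ, hS.eventually_gt_atTop c] with i hi hc
    exact pos_of_mul_pos_right ((pow_pos (sub_pos.2 hc) 2).trans_le hi) hL
  have hbound : Tendsto (fun i ↦ L / (1 - c / S i) ^ 2) l (𝓝 L) := by
    simpa [Pi.div_def] using
      tendsto_const_nhds.div (((hS.const_div_atTop c).const_sub 1).pow 2) (by simp)
  have hle : ∀ᶠ i in l, S i ^ 2 / Q i ≤ L / (1 - c / S i) ^ 2 := by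
    filter_upwards [hSQ, hQ, hS.eventually_gt_atTop c, hS.eventually_gt_atTop 0]
      with i hi hQi hc h0
    have hpos : 0 < 1 - c / S i := sub_pos.2 ((div_lt_one h0).2 hc)
    rw [div_le_div_iff₀ hQi (by positivity)]
    calc S i ^ 2 * (1 - c / S i) ^ 2 = (S i - c) ^ 2 := by field_simp
      _ ≤ L * Q i := hi
  have hnonneg : ∀ᶠ i in l, 0 ≤ S i ^ 2 / Q i := hQ.mono fun i hi ↦ by positivity
  rw [← hbound.limsup_eq]
  exact limsup_le_limsup hle (isBoundedUnder_of_eventually_ge hnonneg).isCoboundedUnder_le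
    hbound.isBoundedUnder_le

section Measure

variable {Ω : Type*} [MeasurableSpace Ω] {μ : Measure Ω}

theorem sq_sum_measureReal_le_measureReal_biUnion_mul {ι : Type*} (s : Finset ι) {A : ι → Set Ω}
    (hA : ∀ i ∈ s, NullMeasurableSet (A i) μ) (hfin : ∀ i ∈ s, μ (A i) ≠ ⊤) :
    (∑ i ∈ s, μ.real (A i)) ^ 2 ≤
      μ.real (⋃ i ∈ s, A i) * ∑ i ∈ s, ∑ j ∈ s, μ.real (A j ∩ A i) := by
  have hU : NullMeasurableSet (⋃ i ∈ s, A i) μ := s.nullMeasurableSet_biUnion hA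
  have hUfin : μ (⋃ i ∈ s, A i) ≠ ⊤ :=
    (measure_biUnion_lt_top s.finite_toSet fun i hi ↦ (hfin i hi).lt_top).ne
  have toMeasurable_fin {B : Set Ω} (hB : μ B ≠ ⊤) : μ (toMeasurable μ B) ≠ ⊤ :=
    (measure_toMeasurable B).trans_ne hB
  let indicatorL2 (B : Set Ω) (hB : μ B ≠ ⊤) : Lp ℝ 2 μ :=
    indicatorConstLp 2 (measurableSet_toMeasurable μ B) (toMeasurable_fin hB) 1
  have inner_indicatorL2 {B C : Set Ω} (hB : NullMeasurableSet B μ) (hC : NullMeasurableSet C μ)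
      (hBfin : μ B ≠ ⊤) (hCfin : μ C ≠ ⊤) :
      ⟪indicatorL2 B hBfin, indicatorL2 C hCfin⟫ = μ.real (B ∩ C) :=
    (L2.real_inner_indicatorConstLp_one_indicatorConstLp_one _ _ _ _).trans
      (measureReal_congr (hB.toMeasurable_ae_eq.inter hC.toMeasurable_ae_eq))
  let u := indicatorL2 (⋃ i ∈ s, A i) hUfin
  let f := ∑ i : s, indicatorL2 (A i) (hfin i i.2)
  have huu : ⟪u, u⟫ = μ.real (⋃ i ∈ s, A i) := by
    rw [inner_indicatorL2 hU hU hUfin hUfin, Set.inter_self]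
  have huf : ⟪u, f⟫ = ∑ i ∈ s, μ.real (A i) := by
    rw [inner_sum, ← Finset.sum_coe_sort s]
    refine Finset.sum_congr rfl fun i _ ↦ ?_
    have hAU : A i ⊆ ⋃ i ∈ s, A i := Set.subset_iUnion₂_of_subset i.1 i.2 subset_rfl
    rw [inner_indicatorL2 hU (hA i i.2) hUfin (hfin i i.2), Set.inter_eq_right.2 hAU]
  have hff : ⟪f, f⟫ = ∑ i ∈ s, ∑ j ∈ s, μ.real (A j ∩ A i) := by
    simp only [f, inner_sum, sum_inner, inner_indicatorL2 (hA _ (Subtype.prop _))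
      (hA _ (Subtype.prop _)), ← Finset.sum_coe_sort s]
  rw [← huf, ← huu, ← hff, sq]
  exact real_inner_mul_inner_self_le u f

theorem tendsto_measureReal_biUnion_ge {A : ℕ → Set Ω}
    (hA : ∀ n, NullMeasurableSet (A n) μ) (hfin : μ (⋃ n, A n) ≠ ⊤) :
    Tendsto (fun k ↦ μ.real (⋃ n ≥ k, A n)) atTop (𝓝 (μ.real (limsup A atTop))) := by
  have hanti : Antitone fun k ↦ ⋃ n ≥ k, A n := fun k l hkl ↦
    Set.biUnion_subset_biUnion_left fun n hn ↦ hkl.trans hn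
  have hlim : limsup A atTop = ⋂ k, ⋃ n ≥ k, A n := limsup_eq_iInf_iSup_of_nat
  have hlim_fin : μ (limsup A atTop) ≠ ⊤ :=
    measure_ne_top_of_subset (limsup_le_of_le (h := .of_forall (Set.subset_iUnion A))) hfin
  refine (ENNReal.tendsto_toReal hlim_fin).comp ?_
  rw [hlim]
  exact tendsto_measure_iInter_atTop
    (fun k ↦ .biUnion (Set.to_countable _) fun n _ ↦ hA n) hanti
    ⟨0, by simpa using hfin⟩

theorem sq_sum_sub_sum_le_measureReal_biUnion_ge_mul {A : ℕ → Set Ω}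
    (hA : ∀ n, NullMeasurableSet (A n) μ) (hfin : μ (⋃ n, A n) ≠ ⊤) {k N : ℕ} (hkN : k ≤ N) :
    (∑ n ∈ Finset.range N, μ.real (A n) - ∑ n ∈ Finset.range k, μ.real (A n)) ^ 2 ≤
      μ.real (⋃ n ≥ k, A n) *
        ∑ m ∈ Finset.range N, ∑ n ∈ Finset.range N, μ.real (A n ∩ A m) := by
  have hsub : Finset.Ico k N ⊆ Finset.range N := by
    simpa only [Finset.range_eq_Ico] using Finset.Ico_subset_Ico_left (Nat.zero_le k)
  have hunion : ⋃ n ∈ Finset.Ico k N, A n ⊆ ⋃ n ≥ k, A n :=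
    Set.biUnion_subset_biUnion_left fun n hn ↦ (Finset.mem_Ico.1 hn).1
  have hunion_fin : μ (⋃ n ≥ k, A n) ≠ ⊤ :=
    measure_ne_top_of_subset (Set.iUnion₂_subset_iUnion _ A) hfin
  rw [← Finset.sum_Ico_eq_sub _ hkN]
  calc (∑ n ∈ Finset.Ico k N, μ.real (A n)) ^ 2
      ≤ μ.real (⋃ n ∈ Finset.Ico k N, A n) *
          ∑ m ∈ Finset.Ico k N, ∑ n ∈ Finset.Ico k N, μ.real (A n ∩ A m) :=
        sq_sum_measureReal_le_measureReal_biUnion_mul _ (fun n _ ↦ hA n) fun n _ ↦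
          measure_ne_top_of_subset (Set.subset_iUnion A n) hfin
    _ ≤ μ.real (⋃ n ≥ k, A n) *
          ∑ m ∈ Finset.range N, ∑ n ∈ Finset.range N, μ.real (A n ∩ A m) := by
        simp only [← Finset.sum_product']
        gcongr

theorem erdos_renyi_borel_cantelli_general {A : ℕ → Set Ω}
    (hA : ∀ n, NullMeasurableSet (A n) μ) (hfin : μ (⋃ n, A n) ≠ ⊤)
    (hdiv : ∑' n, μ (A n) = ⊤) :
    limsup (fun N : ℕ ↦ (∑ n ∈ Finset.range N, μ.real (A n)) ^ 2 /
        ∑ m ∈ Finset.range N, ∑ n ∈ Finset.range N, μ.real (A n ∩ A m)) atTop ≤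
      μ.real (limsup A atTop) := by
  have hsum : Tendsto (fun N ↦ ∑ n ∈ Finset.range N, μ.real (A n)) atTop atTop :=
    tendsto_sum_toReal_atTop_of_tsum_eq_top
      (fun n ↦ measure_ne_top_of_subset (Set.subset_iUnion A n) hfin) hdiv
  refine ge_of_tendsto' (tendsto_measureReal_biUnion_ge hA hfin) fun k ↦ ?_
  refine limsup_sq_div_le_of_sq_sub_le_mul measureReal_nonneg hsum
    (c := ∑ n ∈ Finset.range k, μ.real (A n)) ?_
  filter_upwards [eventually_ge_atTop k] with N hkN
  exact sq_sum_sub_sum_le_measureReal_biUnion_ge_mul hA hfin hkN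

end Measure

theorem erdos_renyi_borel_cantelli
    (A : ℕ → Set ℝ) (hmeas : ∀ n, MeasurableSet (A n))
    (hsub : ∀ n, A n ⊆ Set.Icc (0 : ℝ) 1)
    (hdiv : ∑' n : ℕ, volume (A n) = ⊤) :
    Filter.limsup (fun N : ℕ =>
        (∑ n ∈ Finset.range N, (volume (A n)).toReal) ^ 2 /
          ∑ m ∈ Finset.range N, ∑ n ∈ Finset.range N, (volume (A n ∩ A m)).toReal)
      atTop ≤ (volume (Filter.limsup A atTop)).toReal :=
  erdos_renyi_borel_cantelli_general (fun n ↦ (hmeas n).nullMeasurableSet)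
    (measure_ne_top_of_subset (Set.iUnion_subset hsub) measure_Icc_lt_top.ne) hdiv
end

section
/- Let f : ℝ_{>0} → ℝ_{>2} be a function increasing monotonically to ∞ satisfying f(x) = O((log x)^{−7/3} x^{1/3}), and suppose either (a) Σ_{n≥1} 1/(n f(n)) diverges and the sequence j ↦ f(2^j)/f(2^{j+1}) is non-decreasing, or (b) Σ_{n≥1} 1/(n f(n)) converges and sup{ f(2x)/f(x) : x ≥ x₀ } < 2 for some x₀ > 0. Then for any fixed parameters 0 < γ < β < 3/4 there exists a strictly increasing sequence (a_n)_{n≥1} of positive integers with E(A_N) = Θ( N³ · f(N)^{−3(β−γ)} ). -/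
open Filter MeasureTheory
open scoped Classical

/-!
Put `α = β - γ` and `h N = N * f N ^ (-α)`, so that an energy of order `h N ^ 3` is wanted. The
sequence moves by steps of one along blocks of `2 ^ k` consecutive indices, the `k`-th block
starting where `h` first reaches `2 ^ k`, and more than doubles at every other index. The indices
outside the blocks then contribute a Sidon set. For fixed `t`, `E[s, t]` is subadditive in `s` up
to a factor `2`, so adjoining that set costs only `O(N ^ 2)`, while the blocks, whose lengths up to
`N` sum to `O(h N)`, contribute `O(h N ^ 3)`. Conversely, the last block starting before `N / 2` is
complete by `N` and has length `≫ h (N / 2) ≫ h N`, so its energy alone is `≫ h N ^ 3`.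

The bound `f x = O(x ^ (1 / 3))` gives `N ^ 2 = O(h N ^ 3)`. In both cases `f (2 ^ (j + 1))` is
eventually at most `2 * f (2 ^ j)`: a non-decreasing ratio `f (2 ^ j) / f (2 ^ (j + 1))` that stayed
below `1 / 2` would force `f (2 ^ j) ≫ 2 ^ j`. Hence `f n / n` is almost decreasing, and `h` is
almost increasing because `α ≤ 1`.
-/

open Asymptotics
open scoped Combinatorics.Additive Pointwise

section Energy

variable {G : Type*} [DecidableEq G]

lemma energy_eq_sum_sq_of_subset [Add G] {s t u : Finset G} (hu : s + t ⊆ u) :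
    E[s, t] = ∑ g ∈ u, ({xy ∈ s ×ˢ t | xy.1 + xy.2 = g} : Finset (G × G)).card ^ 2 := by
  rw [Finset.addEnergy_eq_sum_sq']
  refine Finset.sum_subset hu fun g _ hg => ?_
  have hempty : ({xy ∈ s ×ˢ t | xy.1 + xy.2 = g} : Finset (G × G)) = ∅ := by
    refine Finset.filter_eq_empty_iff.2 fun xy hxy hxyg => hg ?_
    rw [Finset.mem_product] at hxy
    exact hxyg ▸ Finset.add_mem_add hxy.1 hxy.2
  rw [hempty, Finset.card_empty, zero_pow two_ne_zero]

lemma energy_union_left_le [Add G] (s₁ s₂ t : Finset G) :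
    E[s₁ ∪ s₂, t] ≤ 2 * (E[s₁, t] + E[s₂, t]) := by
  rw [energy_eq_sum_sq_of_subset Finset.Subset.rfl,
    energy_eq_sum_sq_of_subset (Finset.add_subset_add_right Finset.subset_union_left),
    energy_eq_sum_sq_of_subset (Finset.add_subset_add_right Finset.subset_union_right),
    ← Finset.sum_add_distrib, Finset.mul_sum]
  refine Finset.sum_le_sum fun g _ => ?_
  rw [Finset.union_product, Finset.filter_union]
  exact (Nat.pow_le_pow_left (Finset.card_union_le _ _) 2).trans add_sq_le

lemma energy_le_card_sq_mul_card [Add G] [IsLeftCancelAdd G] (s t : Finset G) :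
    E[s, t] ≤ s.card ^ 2 * t.card := by
  rw [sq, ← Finset.card_product, ← Finset.card_product]
  refine Finset.card_le_card_of_injOn (fun x => (x.1, x.2.1)) ?_ ?_
  · intro x hx
    simp only [Finset.coe_filter, Finset.mem_product, Set.mem_ofPred_eq] at hx
    simp [hx]
  · rintro ⟨⟨a, a'⟩, b, b'⟩ hx ⟨⟨c, c'⟩, d, d'⟩ hy hxy
    simp only [Finset.coe_filter, Set.mem_ofPred_eq, Prod.mk.injEq] at hx hy hxy ⊢
    obtain ⟨⟨rfl, rfl⟩, rfl⟩ := hxy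
    exact ⟨⟨rfl, rfl⟩, rfl, add_left_cancel (hx.2.symm.trans hy.2)⟩

/-- A Sidon set: the sum of two of its elements determines the two summands up to order. -/
def IsSidon [Add G] (S : Set G) : Prop :=
  ∀ a ∈ S, ∀ b ∈ S, ∀ c ∈ S, ∀ d ∈ S, a + b = c + d → a = c ∧ b = d ∨ a = d ∧ b = c

/- Apart from the diagonal, a difference `p - p'` is represented at most once in `S - S`. -/
lemma IsSidon.energy_le [AddCancelCommMonoid G] {S : Finset G} (hS : IsSidon (S : Set G))
    (P : Finset G) : E[P, S] ≤ P.card * (P.card + S.card) := by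
  have fiber_le : ∀ p ∈ P ×ˢ P,
      ({x ∈ S ×ˢ S | p.1 + x.1 = p.2 + x.2} : Finset (G × G)).card ≤
        1 + if p.1 = p.2 then S.card else 0 := by
    rintro ⟨p, p'⟩ -
    split_ifs with hp
    · obtain rfl : p = p' := hp
      simp only [add_right_inj]
      rw [← Finset.diag_eq_filter]
      exact (Finset.diag_card S).le.trans (Nat.le_add_left _ _)
    · refine Finset.card_le_one.2 ?_
      rintro ⟨x, x'⟩ hx ⟨y, y'⟩ hy
      simp only [Finset.mem_filter, Finset.mem_product] at hx hy
      have hsum : x + y' = x' + y := add_left_cancel (a := p + p') <| calc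
        p + p' + (x + y') = (p + x) + (p' + y') := by abel
        _ = (p' + x') + (p + y) := by rw [hx.2, hy.2]
        _ = p + p' + (x' + y) := by abel
      rcases hS x hx.1.1 y' hy.1.2 x' hx.1.2 y hy.1.1 hsum with ⟨rfl, -⟩ | ⟨rfl, rfl⟩
      · exact absurd (add_right_cancel hx.2) hp
      · rfl
  calc E[P, S] = ∑ p ∈ P ×ˢ P,
        ({x ∈ S ×ˢ S | p.1 + x.1 = p.2 + x.2} : Finset (G × G)).card := by
        simp only [Finset.addEnergy, Finset.card_filter, Finset.sum_product]
    _ ≤ ∑ p ∈ P ×ˢ P, (1 + if p.1 = p.2 then S.card else 0) := Finset.sum_le_sum fiber_le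
    _ = P.card * (P.card + S.card) := by
      simp [Finset.sum_add_distrib, Finset.sum_product, mul_add]

lemma IsSidon.energy_union_le [AddCancelCommMonoid G] {S : Finset G} (hS : IsSidon (S : Set G))
    (P : Finset G) : E[P ∪ S] ≤ 4 * P.card ^ 3 + 12 * (P ∪ S).card ^ 2 := by
  have hP : P.card ≤ (P ∪ S).card := Finset.card_le_card Finset.subset_union_left
  have hS' : S.card ≤ (P ∪ S).card := Finset.card_le_card Finset.subset_union_right
  calc E[P ∪ S] ≤ 2 * (E[P ∪ S, P] + E[P ∪ S, S]) := by
        rw [Finset.addEnergy_comm _ P, Finset.addEnergy_comm _ S]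
        exact energy_union_left_le P S _
    _ ≤ 2 * (2 * (E[P, P] + E[P, S]) + E[P ∪ S, S]) := by
        grw [energy_union_left_le P S P, Finset.addEnergy_comm S P]
    _ ≤ 2 * (2 * (P.card ^ 2 * P.card + P.card * (P.card + S.card)) +
          (P ∪ S).card * ((P ∪ S).card + S.card)) := by
        grw [energy_le_card_sq_mul_card P P, hS.energy_le P, hS.energy_le (P ∪ S)]
    _ ≤ 4 * P.card ^ 3 + 12 * (P ∪ S).card ^ 2 := by nlinarith

end Energy

lemma isSidon_of_two_mul_lt {S : Set ℕ} (hS : ∀ a ∈ S, ∀ b ∈ S, a < b → 2 * a < b) :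
    IsSidon S := by
  intro a ha b hb c hc d hd hsum
  have hac := hS a ha c hc
  have had := hS a ha d hd
  have hca := hS c hc a ha
  have hda := hS d hd a ha
  have hbc := hS b hb c hc
  have hbd := hS b hb d hd
  have hcb := hS c hc b hb
  have hdb := hS d hd b hb
  omega

lemma pow_three_le_two_mul_energy_Ico (m L : ℕ) :
    L ^ 3 ≤ 2 * E[Finset.Ico m (m + L)] := by
  set I := Finset.Ico m (m + L)
  have hI : I.card = L := by simp [I]
  have hsub : I + I ⊆ Finset.Ico (2 * m) (2 * m + 2 * L) := by
    intro s hs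
    obtain ⟨x, hx, y, hy, rfl⟩ := Finset.mem_add.1 hs
    simp only [I, Finset.mem_Ico] at hx hy ⊢
    omega
  have hcard : (I + I).card ≤ 2 * L := by simpa using Finset.card_le_card hsub
  rcases L.eq_zero_or_pos with rfl | hL
  · simp
  refine Nat.le_of_mul_le_mul_left ?_ hL
  calc L * L ^ 3 = I.card ^ 2 * I.card ^ 2 := by rw [hI]; ring
    _ ≤ (I + I).card * E[I] := Finset.le_card_add_mul_addEnergy I I
    _ ≤ 2 * L * E[I] := by gcongr
    _ = L * (2 * E[I]) := by ring

lemma addEnergy_eq (A : Finset ℕ) : addEnergy A = E[A] :=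
  (Finset.addEnergy_eq_card_filter A A).symm

/-- The sequence starting at `0` that steps by one into the indices satisfying `p` and more than
doubles into all others. -/
noncomputable def stepSeq (p : ℕ → Prop) : ℕ → ℕ
  | 0 => 0
  | n + 1 => if p (n + 1) then stepSeq p n + 1 else 2 * stepSeq p n + 1

section StepSeq

variable {p : ℕ → Prop}

lemma stepSeq_strictMono (p : ℕ → Prop) : StrictMono (stepSeq p) := by
  refine strictMono_nat_of_lt_succ fun n => ?_
  rw [stepSeq]
  split_ifs <;> omega

lemma two_mul_stepSeq_lt {m n : ℕ} (hn : ¬ p n) (hmn : m < n) :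
    2 * stepSeq p m < stepSeq p n := by
  obtain ⟨n, rfl⟩ : ∃ k, n = k + 1 := ⟨n - 1, by omega⟩
  have hle : stepSeq p m ≤ stepSeq p n :=
    (stepSeq_strictMono p).monotone (Nat.lt_succ_iff.1 hmn)
  rw [stepSeq, if_neg hn]
  omega

lemma stepSeq_add {m L : ℕ} (hp : ∀ k < L, p (m + k)) :
    ∀ k < L, stepSeq p (m + k) = stepSeq p m + k := by
  intro k hk
  induction k with
  | zero => rfl
  | succ k ih =>
    rw [← add_assoc, stepSeq, add_assoc m k 1, if_pos (hp (k + 1) hk), ih (by omega), add_assoc]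

lemma addEnergy_trunc_stepSeq_le (p : ℕ → Prop) (N : ℕ) :
    addEnergy (trunc (stepSeq p) N) ≤ 4 * ((Finset.Icc 1 N).filter p).card ^ 3 + 12 * N ^ 2 := by
  set P := ((Finset.Icc 1 N).filter p).image (stepSeq p) with hP
  set S := ((Finset.Icc 1 N).filter fun n => ¬ p n).image (stepSeq p) with hS
  have htrunc : trunc (stepSeq p) N = P ∪ S := by
    rw [hP, hS, ← Finset.image_union, Finset.filter_union_filter_not_eq, trunc]
  have hsidon : IsSidon (S : Set ℕ) := by
    refine isSidon_of_two_mul_lt ?_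
    intro a ha b hb hab
    obtain ⟨m, -, rfl⟩ := Finset.mem_image.1 ha
    obtain ⟨n, hn, rfl⟩ := Finset.mem_image.1 hb
    exact two_mul_stepSeq_lt (Finset.mem_filter.1 hn).2 ((stepSeq_strictMono p).lt_iff_lt.1 hab)
  have hcardP : P.card ≤ ((Finset.Icc 1 N).filter p).card := Finset.card_image_le
  have hcard : (P ∪ S).card ≤ N := by
    rw [← htrunc]
    simpa [trunc] using Finset.card_image_le (s := Finset.Icc 1 N) (f := stepSeq p)
  rw [addEnergy_eq, htrunc]
  grw [hsidon.energy_union_le P, hcardP, hcard]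

lemma pow_three_le_two_mul_addEnergy_trunc_stepSeq {m L N : ℕ} (hm : 1 ≤ m) (hN : m + L ≤ N + 1)
    (hp : ∀ k < L, p (m + k)) : L ^ 3 ≤ 2 * addEnergy (trunc (stepSeq p) N) := by
  rw [addEnergy_eq]
  grw [pow_three_le_two_mul_energy_Ico (stepSeq p m) L]
  gcongr 2 * ?_
  have hsub : Finset.Ico (stepSeq p m) (stepSeq p m + L) ⊆ trunc (stepSeq p) N := by
    intro v hv
    rw [Finset.mem_Ico] at hv
    obtain ⟨k, rfl⟩ := Nat.exists_eq_add_of_le hv.1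
    have hk : k < L := by omega
    rw [← stepSeq_add hp k hk]
    exact Finset.mem_image_of_mem _ (Finset.mem_Icc.2 ⟨by omega, by omega⟩)
  exact Finset.addEnergy_mono hsub hsub

end StepSeq

/-- The union of the blocks `[m, m + 2 ^ k)`, where `m` is the first index at which `h` reaches
`2 ^ k`. When `h` increases, it has about `h N` elements up to `N`, and a positive proportion of
them lies in a single block. -/
def InBlock (h : ℕ → ℝ) (n : ℕ) : Prop :=
  ∃ k m : ℕ, IsLeast {m | (2 : ℝ) ^ k ≤ h m} m ∧ m ≤ n ∧ n < m + 2 ^ k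

lemma card_filter_inBlock_le {h : ℕ → ℝ} {B : ℝ} {N : ℕ} (hB : 1 ≤ B) (hh : ∀ m ≤ N, h m ≤ B) :
    (((Finset.Icc 1 N).filter (InBlock h)).card : ℝ) ≤ 2 * B := by
  obtain ⟨K, hK, hBK⟩ := exists_nat_pow_near hB one_lt_two
  have hsub : (Finset.Icc 1 N).filter (InBlock h) ⊆ (Finset.range (K + 1)).biUnion fun k =>
      Finset.Ico (sInf {m | (2 : ℝ) ^ k ≤ h m}) (sInf {m | (2 : ℝ) ^ k ≤ h m} + 2 ^ k) := by
    intro n hn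
    obtain ⟨hn, k, m, hm, hmn, hnm⟩ := Finset.mem_filter.1 hn
    have hmN : m ≤ N := hmn.trans (Finset.mem_Icc.1 hn).2
    have hk : k < K + 1 := (pow_lt_pow_iff_right₀ one_lt_two).1 <|
      (hm.1.trans (hh m hmN)).trans_lt hBK
    rw [Finset.mem_biUnion]
    exact ⟨k, Finset.mem_range.2 hk, by rw [hm.csInf_eq]; exact Finset.mem_Ico.2 ⟨hmn, hnm⟩⟩
  have hcard : ((Finset.Icc 1 N).filter (InBlock h)).card ≤ 2 * 2 ^ K := calc
    _ ≤ ∑ k ∈ Finset.range (K + 1), 2 ^ k := by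
      simpa using (Finset.card_le_card hsub).trans Finset.card_biUnion_le
    _ ≤ 2 ^ (K + 1) := (Nat.geomSum_lt le_rfl fun k hk => Finset.mem_range.1 hk).le
    _ = 2 * 2 ^ K := pow_succ' 2 K
  calc (((Finset.Icc 1 N).filter (InBlock h)).card : ℝ) ≤ 2 * 2 ^ K := by exact_mod_cast hcard
    _ ≤ 2 * B := by gcongr

lemma exists_inBlock_run {h : ℕ → ℝ} (h_le : ∀ n, h n ≤ n) {n : ℕ} (hn : 1 ≤ h n) :
    ∃ m L : ℕ, 1 ≤ m ∧ m + L ≤ 2 * n ∧ h n < 2 * L ∧ ∀ i < L, InBlock h (m + i) := by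
  obtain ⟨k, hk, hnk⟩ := exists_nat_pow_near hn one_lt_two
  have hleast := isLeast_csInf (⟨n, hk⟩ : {m | (2 : ℝ) ^ k ≤ h m}.Nonempty)
  set m := sInf {m | (2 : ℝ) ^ k ≤ h m}
  have hmn : m ≤ n := hleast.2 hk
  have hm : (1 : ℝ) ≤ m := (one_le_pow₀ one_le_two).trans (hleast.1.trans (h_le m))
  have hkn : 2 ^ k ≤ n := by exact_mod_cast hk.trans (h_le n)
  refine ⟨m, 2 ^ k, by exact_mod_cast hm, by omega, ?_, fun i hi => ?_⟩
  · rw [pow_succ'] at hnk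
    exact_mod_cast hnk
  · exact ⟨k, m, hleast, by omega, by omega⟩

/-- Monotonicity up to a constant factor, from some index on. -/
def EventuallyAlmostMonotone (h : ℕ → ℝ) : Prop :=
  ∃ K : ℝ, ∀ᶠ m in atTop, ∀ n ≥ m, h m ≤ K * h n

lemma EventuallyAlmostMonotone.const_mul {h : ℕ → ℝ} (h_mono : EventuallyAlmostMonotone h)
    {c : ℝ} (hc : 0 ≤ c) : EventuallyAlmostMonotone fun n => c * h n := by
  obtain ⟨K, hK⟩ := h_mono
  refine ⟨K, hK.mono fun m hm n hmn => ?_⟩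
  rw [mul_left_comm]
  exact mul_le_mul_of_nonneg_left (hm n hmn) hc

lemma EventuallyAlmostMonotone.eventually_forall_le {h : ℕ → ℝ}
    (h_mono : EventuallyAlmostMonotone h) (h_le : ∀ n, h n ≤ n) (h_one : ∀ᶠ n in atTop, 1 ≤ h n) :
    ∃ C : ℝ, 1 ≤ C ∧ ∀ᶠ n in atTop, ∀ m ≤ n, h m ≤ C * h n := by
  obtain ⟨K, hK⟩ := h_mono
  obtain ⟨m₀, hK⟩ := eventually_atTop.1 hK
  refine ⟨max 1 (max K m₀), le_max_left _ _, ?_⟩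
  filter_upwards [h_one] with n hn m hmn
  have hn0 : 0 ≤ h n := zero_le_one.trans hn
  rcases le_total m₀ m with hm | hm
  · calc h m ≤ K * h n := hK m hm n hmn
      _ ≤ max 1 (max K m₀) * h n := mul_le_mul_of_nonneg_right (by simp) hn0
  · calc h m ≤ m₀ * 1 := by rw [mul_one]; exact (h_le m).trans (by exact_mod_cast hm)
      _ ≤ max 1 (max K m₀) * h n := mul_le_mul (by simp) hn zero_le_one (by positivity)

section Profile

variable {h : ℕ → ℝ}

lemma eventually_one_le_of_sq_isBigO_pow_three (h_nonneg : ∀ n, 0 ≤ h n)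
    (h_sq : (fun n : ℕ => (n : ℝ) ^ 2) =O[atTop] fun n => h n ^ 3) :
    ∀ᶠ n in atTop, 1 ≤ h n := by
  obtain ⟨c, hc, hbound⟩ := h_sq.exists_pos
  have hsq : Tendsto (fun n : ℕ => (n : ℝ) ^ 2) atTop atTop :=
    (tendsto_pow_atTop two_ne_zero).comp tendsto_natCast_atTop_atTop
  filter_upwards [hbound.bound, hsq.eventually_gt_atTop c] with n hn hcn
  by_contra! hlt
  have hcube : h n ^ 3 ≤ 1 := pow_le_one₀ (h_nonneg n) hlt.le
  rw [Real.norm_of_nonneg (by positivity), Real.norm_of_nonneg (pow_nonneg (h_nonneg n) 3)] at hn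
  nlinarith

lemma addEnergy_trunc_stepSeq_inBlock_isBigO (h_le : ∀ n, h n ≤ n) (h_nonneg : ∀ n, 0 ≤ h n)
    (h_mono : EventuallyAlmostMonotone h)
    (h_sq : (fun n : ℕ => (n : ℝ) ^ 2) =O[atTop] fun n => h n ^ 3) :
    (fun N => (addEnergy (trunc (stepSeq (InBlock h)) N) : ℝ)) =O[atTop] fun N => h N ^ 3 := by
  have h_one := eventually_one_le_of_sq_isBigO_pow_three h_nonneg h_sq
  obtain ⟨C, hC, h_mono⟩ := h_mono.eventually_forall_le h_le h_one
  have hcount : (fun N => (((Finset.Icc 1 N).filter (InBlock h)).card : ℝ)) =O[atTop] h := by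
    refine .of_bound (2 * C) ?_
    filter_upwards [h_one, h_mono] with N hN hmono
    have := card_filter_inBlock_le (one_le_mul_of_one_le_of_one_le hC hN) hmono
    rwa [Real.norm_natCast, Real.norm_of_nonneg (h_nonneg N), mul_assoc]
  refine IsBigO.trans (.of_bound' (.of_forall fun N => ?_))
    (((hcount.pow 3).const_mul_left 4).add (h_sq.const_mul_left 12))
  have hle := addEnergy_trunc_stepSeq_le (InBlock h) N
  rw [Real.norm_natCast, Real.norm_of_nonneg (by positivity)]
  exact_mod_cast hle

lemma pow_three_isBigO_addEnergy_trunc_stepSeq_inBlock (h_le : ∀ n, h n ≤ n)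
    (h_nonneg : ∀ n, 0 ≤ h n) (h_half : h =O[atTop] fun n => h (n / 2))
    (h_one : ∀ᶠ n in atTop, 1 ≤ h n) :
    (fun N => h N ^ 3) =O[atTop] fun N => (addEnergy (trunc (stepSeq (InBlock h)) N) : ℝ) := by
  have hhalf_tendsto : Tendsto (fun n : ℕ => n / 2) atTop atTop :=
    Nat.tendsto_div_const_atTop two_ne_zero
  refine (h_half.pow 3).trans (.of_bound 16 ?_)
  filter_upwards [hhalf_tendsto.eventually h_one] with N hN
  obtain ⟨m, L, hm, hmL, hL, hrun⟩ := exists_inBlock_run h_le hN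
  have henergy : L ^ 3 ≤ 2 * addEnergy (trunc (stepSeq (InBlock h)) N) :=
    pow_three_le_two_mul_addEnergy_trunc_stepSeq hm (by omega) hrun
  rw [Real.norm_natCast, Real.norm_of_nonneg (pow_nonneg (h_nonneg _) 3)]
  calc h (N / 2) ^ 3 ≤ (2 * (L : ℝ)) ^ 3 := by gcongr
    _ = 8 * (L : ℝ) ^ 3 := by ring
    _ ≤ 8 * (2 * addEnergy (trunc (stepSeq (InBlock h)) N)) := by
      gcongr
      exact_mod_cast henergy
    _ = 16 * addEnergy (trunc (stepSeq (InBlock h)) N) := by ring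

theorem exists_addEnergy_isTheta_pow_three {c : ℝ} (hc : 0 < c) (h_le : ∀ n, h n ≤ c * n)
    (h_nonneg : ∀ n, 0 ≤ h n) (h_mono : EventuallyAlmostMonotone h)
    (h_half : h =O[atTop] fun n => h (n / 2))
    (h_sq : (fun n : ℕ => (n : ℝ) ^ 2) =O[atTop] fun n => h n ^ 3) :
    ∃ a : ℕ → ℕ, StrictMono a ∧
      (fun N => (addEnergy (trunc a N) : ℝ)) =Θ[atTop] fun N => h N ^ 3 := by
  have hc' : c⁻¹ ≠ 0 := inv_ne_zero hc.ne'
  set g : ℕ → ℝ := fun n => c⁻¹ * h n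
  have hgh : g =Θ[atTop] h := (isTheta_const_mul_left hc').2 isTheta_rfl
  have g_le : ∀ n, g n ≤ n := fun n => (inv_mul_le_iff₀ hc).2 (h_le n)
  have g_nonneg : ∀ n, 0 ≤ g n := fun n => mul_nonneg (inv_nonneg.2 hc.le) (h_nonneg n)
  have g_mono : EventuallyAlmostMonotone g := h_mono.const_mul (inv_nonneg.2 hc.le)
  have g_half : g =O[atTop] fun n => g (n / 2) :=
    (h_half.const_mul_left c⁻¹).const_mul_right hc'
  have g_sq := h_sq.trans_isTheta (hgh.pow 3).symm
  have g_one := eventually_one_le_of_sq_isBigO_pow_three g_nonneg g_sq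
  exact ⟨stepSeq (InBlock g), stepSeq_strictMono _, IsTheta.trans
    ⟨addEnergy_trunc_stepSeq_inBlock_isBigO g_le g_nonneg g_mono g_sq,
      pow_three_isBigO_addEnergy_trunc_stepSeq_inBlock g_le g_nonneg g_half g_one⟩ (hgh.pow 3)⟩

end Profile

lemma rpow_neg_pow_three {x : ℝ} (hx : 0 ≤ x) (y : ℝ) : (x ^ (-y)) ^ 3 = x ^ (-(3 * y)) := by
  rw [← Real.rpow_mul_natCast hx]
  congr 1
  push_cast
  ring

section Decay

variable {f : ℕ → ℝ} {α : ℝ}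

lemma antitoneOn_rpow_neg (hf_pos : ∀ n, 0 < n → 0 < f n) (hf_mono : MonotoneOn f (Set.Ioi 0))
    (hα : 0 ≤ α) : AntitoneOn (fun n => f n ^ (-α)) (Set.Ioi 0) := fun m hm _ hn hmn =>
  Real.rpow_le_rpow_of_nonpos (hf_pos m hm) (hf_mono hm hn hmn) (neg_nonpos.2 hα)

lemma mul_isBigO_half_of_antitoneOn {d : ℕ → ℝ} (hd_nonneg : ∀ n, 0 < n → 0 ≤ d n)
    (hd : AntitoneOn d (Set.Ioi 0)) :
    (fun n : ℕ => n * d n) =O[atTop] fun n => ((n / 2 : ℕ) : ℝ) * d (n / 2) := by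
  refine .of_bound 3 ?_
  filter_upwards [eventually_ge_atTop 2] with n hn
  have hn2 : 0 < n / 2 := by omega
  have hle : (n : ℝ) ≤ 3 * (n / 2 : ℕ) := by exact_mod_cast (by omega : n ≤ 3 * (n / 2))
  have hdn := hd_nonneg n (by omega)
  have hdn2 := hd_nonneg _ hn2
  rw [Real.norm_of_nonneg (by positivity), Real.norm_of_nonneg (by positivity), ← mul_assoc]
  gcongr
  exact hd hn2 (Set.mem_Ioi.2 (by omega)) (Nat.div_le_self n 2)

lemma sq_isBigO_pow_three_mul_rpow_neg (hf_pos : ∀ n, 0 < n → 0 < f n)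
    (hf_O : (fun n => f n ^ (3 * α)) =O[atTop] fun n : ℕ => (n : ℝ)) :
    (fun n : ℕ => (n : ℝ) ^ 2) =O[atTop] fun n : ℕ => (n : ℝ) ^ 3 * f n ^ (-(3 * α)) := by
  refine (hf_O.mul (isBigO_refl (fun n : ℕ => (n : ℝ) ^ 2 * f n ^ (-(3 * α))) atTop)).congr' ?_ ?_
  · filter_upwards [eventually_gt_atTop 0] with n hn
    rw [mul_left_comm, ← Real.rpow_add (hf_pos n hn), add_neg_cancel, Real.rpow_zero, mul_one]
  · exact .of_forall fun n => by ring

theorem exists_addEnergy_isTheta_rpow_neg (hf_pos : ∀ n, 0 < n → 0 < f n)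
    (hf_mono : MonotoneOn f (Set.Ioi 0)) (hα : 0 ≤ α)
    (hf_O : (fun n => f n ^ (3 * α)) =O[atTop] fun n : ℕ => (n : ℝ))
    (hf_growth : EventuallyAlmostMonotone fun n => n * f n ^ (-α)) :
    ∃ a : ℕ → ℕ, StrictMono a ∧
      (fun N => (addEnergy (trunc a N) : ℝ)) =Θ[atTop]
        fun N : ℕ => (N : ℝ) ^ 3 * f N ^ (-(3 * α)) := by
  have hd := antitoneOn_rpow_neg hf_pos hf_mono hα
  have hd_pos : ∀ n, 0 < n → 0 < f n ^ (-α) := fun n hn => Real.rpow_pos_of_pos (hf_pos n hn) _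
  have h_le : ∀ n : ℕ, n * f n ^ (-α) ≤ f 1 ^ (-α) * n := by
    intro n
    rcases n.eq_zero_or_pos with rfl | hn
    · simp
    · have hdn : f n ^ (-α) ≤ f 1 ^ (-α) := hd (Set.mem_Ioi.2 one_pos) (Set.mem_Ioi.2 hn) hn
      rw [mul_comm]
      gcongr
  have h_nonneg : ∀ n : ℕ, 0 ≤ n * f n ^ (-α) := by
    intro n
    rcases n.eq_zero_or_pos with rfl | hn
    · simp
    · exact mul_nonneg n.cast_nonneg (hd_pos n hn).le
  have hcube : (fun n : ℕ => (n * f n ^ (-α)) ^ 3) =ᶠ[atTop]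
      fun n : ℕ => (n : ℝ) ^ 3 * f n ^ (-(3 * α)) := by
    filter_upwards [eventually_gt_atTop 0] with n hn
    rw [mul_pow, rpow_neg_pow_three (hf_pos n hn).le]
  have h_half := mul_isBigO_half_of_antitoneOn (fun n hn => (hd_pos n hn).le) hd
  have h_sq := (sq_isBigO_pow_three_mul_rpow_neg hf_pos hf_O).trans_eventuallyEq hcube.symm
  obtain ⟨a, ha, hE⟩ := exists_addEnergy_isTheta_pow_three (hd_pos 1 one_pos) h_le h_nonneg
    hf_growth h_half h_sq
  exact ⟨a, ha, hE.trans_eventuallyEq hcube⟩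

end Decay

lemma eventually_succ_le_mul_of_monotone_ratio {u : ℕ → ℝ} {ρ : ℝ} (hρ : 0 < ρ)
    (hu : ∀ j, 0 < u j) (hmono : Monotone fun j => u j / u (j + 1))
    (hu_o : u =o[atTop] fun j => ρ ^ j) : ∀ᶠ j in atTop, u (j + 1) ≤ ρ * u j := by
  have hratio : ∀ j, u (j + 1) ≤ ρ * u j ↔ ρ⁻¹ ≤ u j / u (j + 1) := fun j => by
    rw [le_div_iff₀ (hu _), inv_mul_le_iff₀ hρ]
  obtain ⟨j₀, hj₀⟩ : ∃ j, u (j + 1) ≤ ρ * u j := by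
    by_contra! hgrow
    have hhalf := hu_o.bound (half_pos (hu 0))
    obtain ⟨j, hj⟩ := hhalf.exists
    have hgeom : ρ ^ j * u 0 ≤ u j := geom_le hρ.le j fun k _ => (hgrow k).le
    rw [Real.norm_of_nonneg (hu j).le, Real.norm_of_nonneg (by positivity)] at hj
    have : 0 < ρ ^ j * u 0 := mul_pos (pow_pos hρ j) (hu 0)
    linarith
  filter_upwards [eventually_ge_atTop j₀] with j hj
  exact (hratio j).2 (((hratio j₀).1 hj₀).trans (hmono hj))

lemma isBigO_rpow_of_le_div_log {f : ℝ → ℝ} {C p q : ℝ} (hC : 0 ≤ C) (hq : 0 ≤ q)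
    (hf_nonneg : ∀ᶠ x in atTop, 0 ≤ f x)
    (hf : ∀ᶠ x in atTop, f x ≤ C * x ^ p / Real.log x ^ q) :
    f =O[atTop] fun x => x ^ p := by
  refine .of_bound C ?_
  filter_upwards [hf_nonneg, hf, Real.tendsto_log_atTop.eventually_ge_atTop 1,
    eventually_ge_atTop 0] with x hfx hx hlog hx0
  rw [Real.norm_of_nonneg hfx, Real.norm_of_nonneg (by positivity)]
  exact hx.trans (div_le_self (by positivity) (Real.one_le_rpow hlog hq))

lemma isLittleO_two_pow_of_isBigO_rpow {f : ℝ → ℝ} {p : ℝ} (hp : p < 1)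
    (hf : f =O[atTop] fun x => x ^ p) :
    (fun j : ℕ => f (2 ^ j)) =o[atTop] fun j => (2 : ℝ) ^ j := by
  have hpow : (fun x : ℝ => x ^ p) =o[atTop] fun x => x := by
    refine (isLittleO_iff_tendsto' ?_).2 ((tendsto_rpow_neg_atTop (sub_pos.2 hp)).congr' ?_)
    · filter_upwards [eventually_ne_atTop 0] with x hx hx0 using absurd hx0 hx
    · filter_upwards [eventually_gt_atTop 0] with x hx
      rw [neg_sub, Real.rpow_sub_one hx.ne']
  exact (hf.trans_isLittleO hpow).comp_tendsto (tendsto_pow_atTop_atTop_of_one_lt one_lt_two)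

lemma eventually_dyadic_doubling {f : ℝ → ℝ} {p : ℝ} (hp : p < 1) (hf_pos : ∀ x, 0 < x → 0 < f x)
    (hf_O : f =O[atTop] fun x => x ^ p)
    (hcase : (Monotone fun j : ℕ => f ((2 : ℝ) ^ j) / f ((2 : ℝ) ^ (j + 1))) ∨
      ∀ᶠ x in atTop, f (2 * x) / f x ≤ 2) :
    ∀ᶠ j : ℕ in atTop, f (2 ^ (j + 1)) ≤ 2 * f (2 ^ j) := by
  have hpos : ∀ j : ℕ, 0 < f (2 ^ j) := fun j => hf_pos _ (by positivity)
  rcases hcase with hmono | hratio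
  · exact eventually_succ_le_mul_of_monotone_ratio two_pos hpos hmono
      (isLittleO_two_pow_of_isBigO_rpow hp hf_O)
  · have htop : Tendsto (fun j : ℕ => (2 : ℝ) ^ j) atTop atTop :=
      tendsto_pow_atTop_atTop_of_one_lt one_lt_two
    filter_upwards [htop.eventually hratio] with j hj
    rwa [pow_succ', ← div_le_iff₀ (hpos j)]

lemma eventually_mul_le_of_dyadic_doubling {f : ℕ → ℝ} (hf_pos : ∀ n, 0 < n → 0 < f n)
    (hf_mono : MonotoneOn f (Set.Ioi 0)) (hdbl : ∀ᶠ j in atTop, f (2 ^ (j + 1)) ≤ 2 * f (2 ^ j)) :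
    ∀ᶠ m : ℕ in atTop, ∀ n ≥ m, m * f n ≤ 4 * (n * f m) := by
  obtain ⟨j₀, hj₀⟩ := eventually_atTop.1 hdbl
  filter_upwards [eventually_ge_atTop (2 ^ j₀)] with m hm n hmn
  have hm0 : 0 < m := Nat.two_pow_pos j₀ |>.trans_le hm
  have hn0 : 0 < n := hm0.trans_le hmn
  set i := Nat.log 2 m
  obtain ⟨d, hd⟩ : ∃ d, Nat.log 2 n = i + d := Nat.exists_eq_add_of_le (Nat.log_mono_right hmn)
  have hij₀ : j₀ ≤ i := Nat.le_log_of_pow_le one_lt_two hm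
  have him : 2 ^ i ≤ m := Nat.pow_log_le_self 2 hm0.ne'
  have hmi : (m : ℝ) ≤ 2 ^ (i + 1) := by
    exact_mod_cast (Nat.lt_pow_succ_log_self one_lt_two m).le
  have hn : (2 : ℝ) ^ (i + d) ≤ n := by exact_mod_cast hd ▸ Nat.pow_log_le_self 2 hn0.ne'
  have hn' : n ≤ 2 ^ (i + (d + 1)) := (hd ▸ Nat.lt_pow_succ_log_self one_lt_two n).le
  have hiter : f (2 ^ (i + (d + 1))) ≤ 2 ^ (d + 1) * f (2 ^ i) :=
    le_geom (u := fun k => f (2 ^ (i + k))) two_pos.le (d + 1) fun k _ => hj₀ (i + k) (by omega)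
  have hfm := hf_pos m hm0
  have hfi := hf_pos (2 ^ i) (Nat.two_pow_pos i)
  calc m * f n ≤ m * f (2 ^ (i + (d + 1))) := by
        gcongr
        exact hf_mono hn0 (Nat.two_pow_pos _) hn'
    _ ≤ m * (2 ^ (d + 1) * f (2 ^ i)) := by gcongr
    _ ≤ 2 ^ (i + 1) * (2 ^ (d + 1) * f m) := by
        gcongr
        exact hf_mono (Nat.two_pow_pos i) hm0 him
    _ = 4 * (2 ^ (i + d) * f m) := by ring
    _ ≤ 4 * (n * f m) := by gcongr

lemma eventuallyAlmostMonotone_mul_rpow_neg {f : ℕ → ℝ} {α K : ℝ} (hf_pos : ∀ n, 0 < n → 0 < f n)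
    (hα : 0 ≤ α) (hα1 : α ≤ 1) (hK : 1 ≤ K)
    (hf : ∀ᶠ m : ℕ in atTop, ∀ n ≥ m, m * f n ≤ K * (n * f m)) :
    EventuallyAlmostMonotone fun n => n * f n ^ (-α) := by
  refine ⟨K, ?_⟩
  filter_upwards [hf, eventually_gt_atTop 0] with m hm hm0 n hmn
  have hfm := hf_pos m hm0
  have hfn := hf_pos n (hm0.trans_le hmn)
  have hm0' : (0 : ℝ) < m := by exact_mod_cast hm0
  have hmn' : (m : ℝ) ≤ K * n :=
    (Nat.cast_le.2 hmn).trans (le_mul_of_one_le_left n.cast_nonneg hK)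
  have hone : 1 ≤ K * n / m := (one_le_div hm0').2 hmn'
  have hratio : f n / f m ≤ K * n / m := by
    rw [div_le_div_iff₀ hfm hm0']
    linarith [hm n hmn]
  have hpow : f n ^ α / f m ^ α ≤ K * n / m := calc
    f n ^ α / f m ^ α = (f n / f m) ^ α := (Real.div_rpow hfn.le hfm.le α).symm
    _ ≤ (K * n / m) ^ α := by gcongr
    _ ≤ (K * n / m) ^ (1 : ℝ) := Real.rpow_le_rpow_of_exponent_le hone hα1
    _ = K * n / m := Real.rpow_one _
  rw [div_le_div_iff₀ (by positivity) hm0'] at hpow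
  rw [Real.rpow_neg hfm.le, Real.rpow_neg hfn.le, ← div_eq_mul_inv, ← div_eq_mul_inv,
    ← mul_div_assoc, div_le_div_iff₀ (by positivity) (by positivity)]
  linarith

lemma rpow_isBigO_natCast {f : ℝ → ℝ} {p q : ℝ} (hq : 0 ≤ q) (hpq : p * q ≤ 1)
    (hf : f =O[atTop] fun x => x ^ p) :
    (fun n : ℕ => f n ^ q) =O[atTop] fun n : ℕ => (n : ℝ) := by
  have hpow : (fun x => f x ^ q) =O[atTop] fun x : ℝ => (x ^ p) ^ q :=
    hf.rpow hq ((eventually_ge_atTop 0).mono fun x hx => Real.rpow_nonneg hx _)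
  have hle : (fun x : ℝ => (x ^ p) ^ q) =O[atTop] fun x => x := by
    refine .of_bound' ?_
    filter_upwards [eventually_ge_atTop 1] with x hx
    have hx0 : 0 ≤ x := zero_le_one.trans hx
    rw [Real.norm_of_nonneg (by positivity), Real.norm_of_nonneg hx0, ← Real.rpow_mul hx0]
    exact Real.rpow_le_self_of_one_le hx hpq
  exact (hpow.trans hle).comp_tendsto tendsto_natCast_atTop_atTop

lemma exists_pos_bounds_of_isTheta {ι : Type*} {l : Filter ι} {u v : ι → ℝ}
    (hu : ∀ᶠ i in l, 0 ≤ u i) (hv : ∀ᶠ i in l, 0 ≤ v i) (huv : u =Θ[l] v) :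
    ∃ C₁ : ℝ, 0 < C₁ ∧ ∃ C₂ : ℝ, 0 < C₂ ∧ ∀ᶠ i in l, C₁ * v i ≤ u i ∧ u i ≤ C₂ * v i := by
  obtain ⟨C₂, hC₂, hle⟩ := huv.1.exists_pos
  obtain ⟨C, hC, hge⟩ := huv.2.exists_pos
  refine ⟨C⁻¹, inv_pos.2 hC, C₂, hC₂, ?_⟩
  filter_upwards [hu, hv, hle.bound, hge.bound] with i hui hvi hle hge
  rw [Real.norm_of_nonneg hui, Real.norm_of_nonneg hvi] at hle hge
  exact ⟨(inv_mul_le_iff₀ hC).2 hge, hle⟩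

theorem energy_of_constructed_sequence_general (f : ℝ → ℝ) (p α : ℝ)
    (hf_pos : ∀ x, 0 < x → 0 < f x) (hf_mono : MonotoneOn f (Set.Ioi 0))
    (hf_O : f =O[atTop] fun x => x ^ p) (hp : p < 1)
    (hcase : (Monotone fun j : ℕ => f ((2 : ℝ) ^ j) / f ((2 : ℝ) ^ (j + 1))) ∨
      ∀ᶠ x in atTop, f (2 * x) / f x ≤ 2)
    (hα : 0 ≤ α) (hα1 : α ≤ 1) (hpα : p * (3 * α) ≤ 1) :
    ∃ a : ℕ → ℕ, (∀ n, 1 ≤ n → a n < a (n + 1)) ∧ 0 < a 1 ∧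
      ∃ C₁ : ℝ, 0 < C₁ ∧ ∃ C₂ : ℝ, 0 < C₂ ∧ ∀ᶠ N : ℕ in atTop,
        C₁ * ((N : ℝ) ^ 3 * f N ^ (-(3 * α))) ≤ (addEnergy (trunc a N) : ℝ) ∧
        (addEnergy (trunc a N) : ℝ) ≤ C₂ * ((N : ℝ) ^ 3 * f N ^ (-(3 * α))) := by
  have hf_pos' : ∀ n : ℕ, 0 < n → 0 < f n := fun n hn => hf_pos n (Nat.cast_pos.2 hn)
  have hf_mono' : MonotoneOn (fun n : ℕ => f n) (Set.Ioi 0) := fun m hm n hn hmn =>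
    hf_mono (Set.mem_Ioi.2 (Nat.cast_pos.2 hm)) (Set.mem_Ioi.2 (Nat.cast_pos.2 hn))
      (Nat.cast_le.2 hmn)
  have hdbl : ∀ᶠ j : ℕ in atTop, f ((2 ^ (j + 1) : ℕ) : ℝ) ≤ 2 * f ((2 ^ j : ℕ) : ℝ) := by
    simpa only [Nat.cast_pow, Nat.cast_ofNat] using eventually_dyadic_doubling hp hf_pos hf_O hcase
  have hgrowth : EventuallyAlmostMonotone fun n : ℕ => n * f n ^ (-α) :=
    eventuallyAlmostMonotone_mul_rpow_neg hf_pos' hα hα1 (by norm_num)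
      (eventually_mul_le_of_dyadic_doubling hf_pos' hf_mono' hdbl)
  obtain ⟨a, ha, hE⟩ := exists_addEnergy_isTheta_rpow_neg hf_pos' hf_mono' hα
    (rpow_isBigO_natCast (by positivity) hpα hf_O) hgrowth
  refine ⟨a, fun n _ => ha n.lt_succ_self, (a 0).zero_le.trans_lt (ha one_pos),
    exists_pos_bounds_of_isTheta (.of_forall fun N => Nat.cast_nonneg _) ?_ hE⟩
  filter_upwards [eventually_gt_atTop 0] with N hN
  have hfN := hf_pos' N hN
  positivity

theorem energy_of_constructed_sequence
    (f : ℝ → ℝ)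
    (hf_gt : ∀ x : ℝ, 0 < x → 2 < f x)
    (hf_mono : MonotoneOn f (Set.Ioi (0 : ℝ)))
    (hf_top : Tendsto f atTop atTop)
    (hf_O : ∃ C : ℝ, 0 < C ∧ ∀ᶠ x : ℝ in atTop,
      f x ≤ C * x ^ ((1 : ℝ) / 3) / (Real.log x) ^ ((7 : ℝ) / 3))
    (hcase :
      ((¬ Summable fun n : ℕ => 1 / ((n : ℝ) * f n)) ∧
        Monotone fun j : ℕ => f ((2 : ℝ) ^ j) / f ((2 : ℝ) ^ (j + 1))) ∨
      ((Summable fun n : ℕ => 1 / ((n : ℝ) * f n)) ∧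
        ∃ x₀ : ℝ, 0 < x₀ ∧ ∃ K : ℝ, K < 2 ∧ ∀ x : ℝ, x₀ ≤ x → f (2 * x) / f x ≤ K))
    (γ β : ℝ) (hγ : 0 < γ) (hγβ : γ < β) (hβ : β < 3 / 4) :
    ∃ a : ℕ → ℕ, (∀ n, 1 ≤ n → a n < a (n + 1)) ∧ 0 < a 1 ∧
      ∃ C₁ : ℝ, 0 < C₁ ∧ ∃ C₂ : ℝ, 0 < C₂ ∧ ∀ᶠ N : ℕ in atTop,
        C₁ * ((N : ℝ) ^ 3 * f N ^ (-(3 * (β - γ)))) ≤ (addEnergy (trunc a N) : ℝ) ∧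
        (addEnergy (trunc a N) : ℝ) ≤ C₂ * ((N : ℝ) ^ 3 * f N ^ (-(3 * (β - γ)))) := by
  have hf_pos : ∀ x, 0 < x → 0 < f x := fun x hx => two_pos.trans (hf_gt x hx)
  obtain ⟨C, hC, hf_le⟩ := hf_O
  exact energy_of_constructed_sequence_general f (1 / 3) (β - γ) hf_pos hf_mono
    (isBigO_rpow_of_le_div_log hC.le (by norm_num)
      ((eventually_gt_atTop 0).mono fun x hx => (hf_pos x hx).le) hf_le) (by norm_num)
    (hcase.imp And.right fun ⟨_, x₀, _, K, hK, hratio⟩ =>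
      (eventually_ge_atTop x₀).mono fun x hx => (hratio x hx).trans hK.le)
    (by linarith) (by linarith) (by linarith)
end

section
/- Let f : ℝ_{>0} → ℝ_{>2} be a function increasing monotonically to ∞ such that the series Σ_{n≥1} 1/(n f(n)) diverges and such that the sequence j ↦ f(2^j)/f(2^{j+1}) is non-decreasing. Then lim_{j→∞} f(2^j)/f(2^{j+1}) = 1. -/
open Filter

/-!
By condensation along the powers `b ^ j`, divergence of `∑ 1 / (n f(n))` means divergence of
`∑ 1 / f(b ^ j)`. The ratios of consecutive terms of the latter series are the numbers
`f(b ^ j) / f(b ^ (j + 1)) ≤ 1`. Being monotone they converge, and by the ratio test a limit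
below `1` would make the series converge.
-/

theorem tendsto_succ_div_one_of_not_summable {a : ℕ → ℝ} (ha_pos : ∀ n, 0 < a n)
    (ha_anti : Antitone a) (ha_sum : ¬ Summable a) (hratio : Monotone fun n => a (n + 1) / a n) :
    Tendsto (fun n => a (n + 1) / a n) atTop (nhds 1) := by
  have hle_one (n : ℕ) : a (n + 1) / a n ≤ 1 :=
    div_le_one_of_le₀ (ha_anti n.le_succ) (ha_pos n).le
  obtain ⟨l, hl⟩ : ∃ l, Tendsto (fun n => a (n + 1) / a n) atTop (nhds l) :=
    ⟨_, tendsto_atTop_ciSup hratio ⟨1, Set.forall_mem_range.2 hle_one⟩⟩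
  have hl_ge : 1 ≤ l := by
    by_contra! hl_lt
    refine ha_sum (summable_of_ratio_test_tendsto_lt_one hl_lt
      (.of_forall fun n => (ha_pos n).ne') ?_)
    simpa only [Real.norm_of_nonneg (ha_pos _).le] using hl
  rwa [(le_of_tendsto' hl hle_one).antisymm hl_ge] at hl

theorem summable_one_div_mul_iff_summable_inv_comp_pow {f : ℕ → ℝ}
    (hf_pos : ∀ n, 0 < n → 0 < f n) (hf_mono : MonotoneOn f (Set.Ioi 0)) {b : ℕ} (hb : 1 < b) :
    (Summable fun n : ℕ => 1 / ((n : ℝ) * f n)) ↔ Summable fun k : ℕ => (f (b ^ k))⁻¹ := by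
  have hb_sub : (b : ℝ) - 1 ≠ 0 := sub_ne_zero.2 (by exact_mod_cast hb.ne')
  have hpow_pos (k : ℕ) : 0 < b ^ k := by positivity
  have hnonneg (n : ℕ) : 0 ≤ 1 / ((n : ℝ) * f n) := by
    rcases n.eq_zero_or_pos with rfl | hn
    · simp
    · have := hf_pos n hn
      positivity
  have hanti ⦃m n : ℕ⦄ (hm : 0 < m) (hmn : m ≤ n) :
      1 / ((n : ℝ) * f n) ≤ 1 / ((m : ℝ) * f m) := by
    have := hf_pos m hm
    have := hf_mono hm (hm.trans_le hmn) hmn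
    gcongr
  have hgap : SuccDiffBounded b fun k => b ^ k := fun k => by
    simp only [pow_succ', Nat.mul_sub, smul_eq_mul, le_refl]
  rw [← summable_schlomilch_iff_of_nonneg hnonneg hanti hpow_pos (pow_right_strictMono₀ hb)
    (by omega) hgap, ← summable_mul_left_iff (f := fun k => (f (b ^ k))⁻¹) hb_sub]
  refine summable_congr fun k => ?_
  have := hf_pos _ (hpow_pos k)
  push_cast
  field_simp
  ring

theorem dyadic_ratio_tendsto_one_general {f : ℕ → ℝ} (hf_pos : ∀ n, 0 < n → 0 < f n)
    (hf_mono : MonotoneOn f (Set.Ioi 0)) {b : ℕ} (hb : 1 < b)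
    (hdiv : ¬ Summable fun n : ℕ => 1 / ((n : ℝ) * f n))
    (hrat : Monotone fun j : ℕ => f (b ^ j) / f (b ^ (j + 1))) :
    Tendsto (fun j : ℕ => f (b ^ j) / f (b ^ (j + 1))) atTop (nhds 1) := by
  have hpow_pos (j : ℕ) : 0 < b ^ j := by positivity
  have hanti : Antitone fun j => (f (b ^ j))⁻¹ := fun i j hij =>
    inv_anti₀ (hf_pos _ (hpow_pos i))
      (hf_mono (hpow_pos i) (hpow_pos j) (pow_right_mono₀ hb.le hij))
  rw [summable_one_div_mul_iff_summable_inv_comp_pow hf_pos hf_mono hb] at hdiv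
  simpa only [inv_div_inv] using tendsto_succ_div_one_of_not_summable
    (fun j => inv_pos.2 (hf_pos _ (hpow_pos j))) hanti hdiv (by simpa only [inv_div_inv])

theorem dyadic_ratio_tendsto_one
    (f : ℝ → ℝ)
    (hf_gt : ∀ x : ℝ, 0 < x → 2 < f x)
    (hf_mono : MonotoneOn f (Set.Ioi (0 : ℝ)))
    (hf_top : Tendsto f atTop atTop)
    (hdiv : ¬ Summable fun n : ℕ => 1 / ((n : ℝ) * f n))
    (hrat : Monotone fun j : ℕ => f ((2 : ℝ) ^ j) / f ((2 : ℝ) ^ (j + 1))) :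
    Tendsto (fun j : ℕ => f ((2 : ℝ) ^ j) / f ((2 : ℝ) ^ (j + 1))) atTop (nhds 1) := by
  have hf_pos (n : ℕ) (hn : 0 < n) : 0 < f n := two_pos.trans (hf_gt n (Nat.cast_pos.2 hn))
  have hf_mono_nat : MonotoneOn (fun n : ℕ => f n) (Set.Ioi 0) :=
    hf_mono.comp (Nat.mono_cast.monotoneOn _) fun _ hn => Set.mem_Ioi.2 (Nat.cast_pos.2 hn)
  exact_mod_cast dyadic_ratio_tendsto_one_general hf_pos hf_mono_nat one_lt_two hdiv
    (by exact_mod_cast hrat)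
end

section
/- Let δ ∈ (0,1) be fixed and let f : ℝ_{>0} → ℝ_{>2} be a function increasing monotonically to ∞ satisfying f(x) = O((log x)^{−7/3} x^{1/3}). Suppose either (a) Σ_{n≥1} 1/(n f(n)) diverges and the sequence j ↦ f(2^j)/f(2^{j+1}) is non-decreasing, or (b) there exist ε > 0 and x₀ > 0 such that f(2x) ≤ (2−ε) f(x) for all x ≥ x₀. Define F_j := 2^j · (f(2^j))^{−δ} for j ≥ 1. Then Σ_{i≤j} F_i = O(F_j) as j → ∞. -/
open Filter

/-!
If `a (j + 1) ≤ K * a j` and `K ^ δ < b`, then `b ^ j * a j ^ (-δ)` grows at each step by a factor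
of at least `b / K ^ δ > 1`, so its partial sums are controlled by a geometric series. For
`a j = f (2 ^ j)` and `b = K = 2`, case (b) gives this recursive bound directly. In case (a) the
bound persists once it holds at a single index, and it cannot fail at every index, since `a j` would
then be of order at least `2 ^ j`, whereas `f x = o(x)`.
-/

open Asymptotics

section GeometricGrowth

variable {𝕜 : Type*} [Field 𝕜] [LinearOrder 𝕜] [IsStrictOrderedRing 𝕜]

theorem exists_sum_Icc_le_mul_of_geometric_growth {F : ℕ → 𝕜} {r : 𝕜} (hr : 1 < r)
    (hpos : ∀ᶠ j in atTop, 0 < F j) (hgrowth : ∀ᶠ j in atTop, r * F j ≤ F (j + 1)) (m : ℕ) :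
    ∃ C : 𝕜, 0 < C ∧ ∀ᶠ j in atTop, ∑ i ∈ Finset.Icc m j, F i ≤ C * F j := by
  obtain ⟨J, hJ⟩ := eventually_atTop.1 ((hpos.and hgrowth).and (eventually_ge_atTop m))
  have hr_sub : 0 < r - 1 := sub_pos.2 hr
  have hr_pos : 0 < r := one_pos.trans hr
  -- `r / (r - 1)` is the sum of the geometric series with ratio `1 / r`.
  set C := max (r / (r - 1)) ((∑ i ∈ Finset.Icc m J, F i) / F J)
  have hC_pos : 0 < C := (div_pos hr_pos hr_sub).trans_le (le_max_left _ _)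
  have hC : C / r + 1 ≤ C := by
    have h : r ≤ C * (r - 1) := (div_le_iff₀ hr_sub).1 (le_max_left _ _)
    rw [div_add_one hr_pos.ne', div_le_iff₀ hr_pos]
    linarith
  refine ⟨C, hC_pos, eventually_atTop.2 ⟨J, fun j hj => ?_⟩⟩
  induction j, hj using Nat.le_induction with
  | base => exact (div_le_iff₀ (hJ J le_rfl).1.1).1 (le_max_right _ _)
  | succ j hj ih =>
    obtain ⟨⟨-, hstep⟩, hmj⟩ := hJ j hj
    have hnext : 0 < F (j + 1) := (hJ (j + 1) (by lia)).1.1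
    calc ∑ i ∈ Finset.Icc m (j + 1), F i
        = ∑ i ∈ Finset.Icc m j, F i + F (j + 1) := Finset.sum_Icc_succ_top (by lia) F
      _ ≤ C * F j + F (j + 1) := by gcongr
      _ ≤ C * (F (j + 1) / r) + F (j + 1) := by gcongr; exact (le_div_iff₀' hr_pos).2 hstep
      _ = (C / r + 1) * F (j + 1) := by ring
      _ ≤ C * F (j + 1) := by gcongr

theorem succ_le_mul_of_monotone_div_succ {a : ℕ → 𝕜} (ha : ∀ j, 0 < a j)
    (hmono : Monotone fun j => a j / a (j + 1)) {K : 𝕜} {J j : ℕ} (hJ : a (J + 1) ≤ K * a J)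
    (hj : J ≤ j) : a (j + 1) ≤ K * a j := by
  have hratio (i : ℕ) : a (i + 1) ≤ K * a i ↔ (a i / a (i + 1))⁻¹ ≤ K := by
    rw [inv_div, div_le_iff₀ (ha i)]
  rw [hratio] at hJ ⊢
  exact (inv_anti₀ (div_pos (ha J) (ha (J + 1))) (hmono hj)).trans hJ

end GeometricGrowth

theorem exists_succ_le_mul_of_not_isBigO {a : ℕ → ℝ} {K : ℝ} (hK : 0 ≤ K) (ha : 0 < a 0)
    (h : ¬ (fun j : ℕ => K ^ j) =O[atTop] a) : ∃ j, a (j + 1) ≤ K * a j := by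
  contrapose! h
  refine IsBigO.of_bound (a 0)⁻¹ (Eventually.of_forall fun j => ?_)
  have hgeom : K ^ j * a 0 ≤ a j := geom_le hK j fun i _ => (h i).le
  rw [Real.norm_of_nonneg (pow_nonneg hK j), inv_mul_eq_div, le_div_iff₀ ha]
  exact hgeom.trans (Real.le_norm_self _)

theorem div_rpow_mul_pow_mul_rpow_neg_le {b K δ x y : ℝ} (hb : 0 ≤ b) (hK : 0 < K) (hδ : 0 ≤ δ)
    (hx : 0 < x) (hy : 0 < y) (hyx : y ≤ K * x) (j : ℕ) :
    b / K ^ δ * (b ^ j * x ^ (-δ)) ≤ b ^ (j + 1) * y ^ (-δ) :=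
  calc b / K ^ δ * (b ^ j * x ^ (-δ))
      = b ^ (j + 1) * (K ^ (-δ) * x ^ (-δ)) := by rw [Real.rpow_neg hK.le]; ring
    _ = b ^ (j + 1) * (K * x) ^ (-δ) := by rw [Real.mul_rpow hK.le hx.le]
    _ ≤ b ^ (j + 1) * y ^ (-δ) := by
      gcongr ?_ * ?_
      exact Real.rpow_le_rpow_of_nonpos hy hyx (neg_nonpos.2 hδ)

theorem isLittleO_rpow_div_log_rpow_rpow {p s : ℝ} (hps : p < s) (q : ℝ) :
    (fun x : ℝ => x ^ p / Real.log x ^ q) =o[atTop] fun x => x ^ s := by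
  have hlog := (isBigO_refl (fun x : ℝ => x ^ p) atTop).mul_isLittleO
    (isLittleO_log_rpow_rpow_atTop (-q) (sub_pos.2 hps))
  refine hlog.congr' ?_ ?_
  · filter_upwards [eventually_ge_atTop 1] with x hx
    rw [Real.rpow_neg (Real.log_nonneg hx), div_eq_mul_inv]
  · filter_upwards [eventually_gt_atTop 0] with x hx
    rw [← Real.rpow_add hx, add_sub_cancel]

theorem isLittleO_id_of_le_rpow_div_log_rpow {f : ℝ → ℝ} {C p q : ℝ} (hp : p < 1)
    (hf_nonneg : ∀ᶠ x in atTop, 0 ≤ f x)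
    (hf_le : ∀ᶠ x in atTop, f x ≤ C * x ^ p / Real.log x ^ q) : f =o[atTop] id := by
  have hbound : f =O[atTop] fun x => C * (x ^ p / Real.log x ^ q) := by
    refine IsBigO.of_bound' ?_
    filter_upwards [hf_nonneg, hf_le] with x h₀ h₁
    rw [Real.norm_of_nonneg h₀, ← mul_div_assoc]
    exact h₁.trans (Real.le_norm_self _)
  have ho := (isLittleO_rpow_div_log_rpow_rpow hp q).const_mul_left C
  exact (hbound.trans_isLittleO ho).congr_right Real.rpow_one

theorem not_pow_isBigO_comp_pow_of_isLittleO_id {f : ℝ → ℝ} {b : ℝ} (hb : 1 < b)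
    (hf_ne : ∀ᶠ x in atTop, f x ≠ 0) (hf : f =o[atTop] id) :
    ¬ (fun j : ℕ => b ^ j) =O[atTop] fun j => f (b ^ j) :=
  have hpow : Tendsto (fun j : ℕ => b ^ j) atTop atTop := tendsto_pow_atTop_atTop_of_one_lt hb
  (hf.comp_tendsto hpow).not_isBigO (hpow.eventually hf_ne).frequently

theorem eventually_comp_pow_succ_le_mul {f : ℝ → ℝ} {b K L x₀ : ℝ} (hb : 1 < b) (hLK : L ≤ K)
    (hf_nonneg : ∀ᶠ x in atTop, 0 ≤ f x) (h : ∀ x, x₀ ≤ x → f (b * x) ≤ L * f x) :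
    ∀ᶠ j : ℕ in atTop, f (b ^ (j + 1)) ≤ K * f (b ^ j) := by
  have hpow : Tendsto (fun j : ℕ => b ^ j) atTop atTop := tendsto_pow_atTop_atTop_of_one_lt hb
  filter_upwards [hpow.eventually hf_nonneg, hpow.eventually_ge_atTop x₀] with j hj_nonneg hj
  calc f (b ^ (j + 1)) = f (b * b ^ j) := by rw [pow_succ']
    _ ≤ L * f (b ^ j) := h _ hj
    _ ≤ K * f (b ^ j) := by gcongr

theorem dyadic_partial_sums_dominated_by_last_term_general {b K δ : ℝ} (hK : 0 < K) (hδ : 0 ≤ δ)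
    (hKb : K ^ δ < b) {a : ℕ → ℝ} (ha : ∀ j, 0 < a j)
    (hcase : (¬ (fun j : ℕ => K ^ j) =O[atTop] a ∧ Monotone fun j => a j / a (j + 1)) ∨
      ∀ᶠ j in atTop, a (j + 1) ≤ K * a j) :
    ∃ C : ℝ, 0 < C ∧ ∀ᶠ j in atTop,
      ∑ i ∈ Finset.Icc 1 j, b ^ i * a i ^ (-δ) ≤ C * (b ^ j * a j ^ (-δ)) := by
  have hKδ : 0 < K ^ δ := Real.rpow_pos_of_pos hK δ
  have hb : 0 < b := hKδ.trans hKb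
  have hratio : ∀ᶠ j in atTop, a (j + 1) ≤ K * a j := by
    rcases hcase with ⟨hnot, hmono⟩ | hratio
    · obtain ⟨J, hJ⟩ := exists_succ_le_mul_of_not_isBigO hK.le (ha 0) hnot
      filter_upwards [eventually_ge_atTop J] with j hj
      exact succ_le_mul_of_monotone_div_succ ha hmono hJ hj
    · exact hratio
  refine exists_sum_Icc_le_mul_of_geometric_growth ((one_lt_div hKδ).2 hKb)
    (Eventually.of_forall fun j => mul_pos (pow_pos hb j) (Real.rpow_pos_of_pos (ha j) _)) ?_ 1
  filter_upwards [hratio] with j hj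
  exact div_rpow_mul_pow_mul_rpow_neg_le hb.le hK hδ (ha j) (ha (j + 1)) hj j

theorem dyadic_partial_sums_dominated_by_last_term
    (δ : ℝ) (hδ : δ ∈ Set.Ioo (0 : ℝ) 1)
    (f : ℝ → ℝ)
    (hf_gt : ∀ x : ℝ, 0 < x → 2 < f x)
    (hf_mono : MonotoneOn f (Set.Ioi (0 : ℝ)))
    (hf_top : Tendsto f atTop atTop)
    (hf_O : ∃ C : ℝ, 0 < C ∧ ∀ᶠ x : ℝ in atTop,
      f x ≤ C * x ^ ((1 : ℝ) / 3) / (Real.log x) ^ ((7 : ℝ) / 3))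
    (hcase :
      ((¬ Summable fun n : ℕ => 1 / ((n : ℝ) * f n)) ∧
        Monotone fun j : ℕ => f ((2 : ℝ) ^ j) / f ((2 : ℝ) ^ (j + 1))) ∨
      (∃ ε : ℝ, 0 < ε ∧ ∃ x₀ : ℝ, 0 < x₀ ∧ ∀ x : ℝ, x₀ ≤ x → f (2 * x) ≤ (2 - ε) * f x)) :
    ∃ C : ℝ, 0 < C ∧ ∀ᶠ j : ℕ in atTop,
      ∑ i ∈ Finset.Icc 1 j, (2 : ℝ) ^ i * f ((2 : ℝ) ^ i) ^ (-δ) ≤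
        C * ((2 : ℝ) ^ j * f ((2 : ℝ) ^ j) ^ (-δ)) := by
  have hpos (j : ℕ) : 0 < f (2 ^ j) := two_pos.trans (hf_gt _ (pow_pos two_pos j))
  have hf_nonneg : ∀ᶠ x in atTop, 0 ≤ f x := hf_top.eventually_ge_atTop 0
  have hf_ne : ∀ᶠ x in atTop, f x ≠ 0 := hf_top.eventually_ne_atTop 0
  obtain ⟨C, -, hC⟩ := hf_O
  have hf_o : f =o[atTop] id :=
    isLittleO_id_of_le_rpow_div_log_rpow (by norm_num) hf_nonneg hC
  exact dyadic_partial_sums_dominated_by_last_term_general two_pos hδ.1.le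
    (Real.rpow_lt_self_of_one_lt one_lt_two hδ.2) hpos
    (hcase.imp
      (fun h => ⟨not_pow_isBigO_comp_pow_of_isLittleO_id one_lt_two hf_ne hf_o, h.2⟩)
      fun ⟨_, hε, _, _, h⟩ =>
        eventually_comp_pow_succ_le_mul one_lt_two (sub_le_self 2 hε.le) hf_nonneg h)
end

section
/- Let f : ℝ_{>0} → ℝ_{>2} be a function increasing monotonically to ∞ satisfying f(x) = O((log x)^{−7/3} x^{1/3}), and let ϑ : ℝ_{>0} → ℝ_{>1} be monotonically increasing to ∞ with ϑ(x) = O(x^{1/4}) and ϑ(2^{j+1})/ϑ(2^j) → 1 as j → ∞. For each j ∈ ℕ set B_j := 2^j / ( f(2^j) · √(ϑ(2^j)) ) and b_j := (2/3)·B_j, and let M := ∪_{j≥1} { n ∈ ℕ : b_j ≤ n ≤ B_j }. Let S = (α_i)_{i≥1} be a sequence running through all rationals in (0,1) whose denominators (in lowest terms) lie in M, ordered so that i ↦ H(α_i) is non-decreasing. Then S is an optimal regular system in (0,1): there exist constants c₁, c₂, c₃ > 0 such that for every nonempty interval I ⊆ (0,1) there is Q₀ = Q₀(S,I) such that for every Q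 ≥ Q₀ there exist indices c₁Q ≤ i₁ < i₂ < … < i_t ≤ Q with α_{i_h} ∈ I for h = 1,…,t, with |α_{i_h} − α_{i_ℓ}| ≥ c₂/Q for all 1 ≤ h ≠ ℓ ≤ t, and with c₃ λ(I) Q ≤ t ≤ λ(I) Q. -/
open Filter MeasureTheory

/-- `B_j := 2^j / (f(2^j) √(ϑ(2^j)))`. -/
noncomputable def Bbig (f ϑ : ℝ → ℝ) (j : ℕ) : ℝ :=
  (2 : ℝ) ^ j / (f ((2 : ℝ) ^ j) * Real.sqrt (ϑ ((2 : ℝ) ^ j)))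

/-- `b_j := (2/3) B_j`. -/
noncomputable def bsmall (f ϑ : ℝ → ℝ) (j : ℕ) : ℝ := (2 / 3) * Bbig f ϑ j

/-- `M := ∪_{j ≥ 1} {n ∈ ℕ : b_j ≤ n ≤ B_j}`. -/
def Mset (f ϑ : ℝ → ℝ) : Set ℕ :=
  {n : ℕ | ∃ j : ℕ, 1 ≤ j ∧ bsmall f ϑ j ≤ (n : ℝ) ∧ (n : ℝ) ≤ Bbig f ϑ j}

/-- Naive height of a rational number (in lowest terms). -/
def height (q : ℚ) : ℕ := max q.num.natAbs q.den

/-! Rationals enumerated by height form an optimal regular system as soon as the set `M` of allowed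
denominators has positive lower density, and `Mset` has positive lower density because `B_j → ∞`
while `B_{j+1} ≤ 2 B_j`.

Choose `κ > 0` such that at least `κ N` elements of `M` lie in `[κ N, N]`. To find `≫ (v - u) N²`
reduced fractions in `(u, v)` with such denominators `q`, use only numerators `p ≡ 1 mod D!`: these
share no divisor `1 < d ≤ D` with `q`, so sieving out the common divisors `d > D` costs, relative to
the numerators available for all `q ≤ N`, at most `∑_{d > D} 1 / d² ≤ 1 / D`. This is at most half
of the main term once `D ≥ 2 / κ²`.

Distinct rationals with denominators at most `N` are `1 / N²` apart, and by the same count the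
index of `α_i` is of order `(den α_i)²`. So the fractions found for `N = ⌊√Q⌋` are as required. -/

open Asymptotics Finset

section Counting

lemma abs_card_Ico_filter_modEq_sub_le {m n r : ℤ} (hmn : m ≤ n) (hr : 0 < r) (a : ℤ) :
    |(#{p ∈ Ico m n | p ≡ a [ZMOD r]} : ℝ) - (n - m) / r| ≤ 1 := by
  suffices h : |(#{p ∈ Ico m n | p ≡ a [ZMOD r]} : ℚ) - (n - m) / r| ≤ 1 by exact_mod_cast h
  have hle : ((m : ℚ) - a) / r ≤ (n - a) / r :=
    div_le_div_of_nonneg_right (by gcongr) (by exact_mod_cast hr.le)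
  have hcard : (#{p ∈ Ico m n | p ≡ a [ZMOD r]} : ℚ) =
      (⌈((n : ℚ) - a) / r⌉ : ℚ) - ⌈((m : ℚ) - a) / r⌉ := by
    exact_mod_cast (Int.Ico_filter_modEq_card m n hr a).trans
      (max_eq_left (sub_nonneg.2 (Int.ceil_mono hle)))
  have hlen : ((n : ℚ) - m) / r = (n - a) / r - (m - a) / r := by ring
  rw [hcard, hlen, abs_le]
  constructor <;>
    linarith [Int.le_ceil (((n : ℚ) - a) / r), Int.ceil_lt_add_one (((n : ℚ) - a) / r),
      Int.le_ceil (((m : ℚ) - a) / r), Int.ceil_lt_add_one (((m : ℚ) - a) / r)]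

lemma abs_card_Ioo_floor_ceil_filter_modEq_sub_le {x y : ℝ} (hxy : x < y) {r : ℤ} (hr : 0 < r)
    (a : ℤ) : |(#{p ∈ Ioo ⌊x⌋ ⌈y⌉ | p ≡ a [ZMOD r]} : ℝ) - (y - x) / r| ≤ 2 := by
  have hr1 : (1 : ℝ) ≤ r := by exact_mod_cast hr
  have hlt : ⌊x⌋ < ⌈y⌉ := by exact_mod_cast (Int.floor_le x).trans_lt (hxy.trans_le (Int.le_ceil y))
  have hcard := abs_card_Ico_filter_modEq_sub_le (Int.add_one_le_iff.2 hlt) hr a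
  rw [Ico_add_one_left_eq_Ioo] at hcard
  have hround : |((⌈y⌉ : ℝ) - (⌊x⌋ + 1 : ℤ)) / r - (y - x) / r| ≤ 1 := by
    rw [← sub_div, abs_div, abs_of_pos (zero_lt_one.trans_le hr1)]
    refine (div_le_self (abs_nonneg _) hr1).trans (abs_le.2 ?_)
    push_cast
    constructor <;> linarith [Int.le_ceil y, Int.ceil_lt_add_one y, Int.floor_le x,
      Int.lt_floor_add_one x]
  linarith [abs_sub_le (#{p ∈ Ioo ⌊x⌋ ⌈y⌉ | p ≡ a [ZMOD r]} : ℝ)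
    (((⌈y⌉ : ℝ) - (⌊x⌋ + 1 : ℤ)) / r) ((y - x) / r)]

lemma isCoprime_of_modEq_one {p r : ℤ} (h : p ≡ 1 [ZMOD r]) : IsCoprime p r := by
  obtain ⟨k, hk⟩ := h.dvd
  exact ⟨1, k, by linarith⟩

lemma card_filter_modEq_one_dvd_le {x y : ℝ} (hxy : x < y) {d r : ℕ} (hd : 0 < d) (hr : 0 < r) :
    (#{p ∈ Ioo ⌊x⌋ ⌈y⌉ | p ≡ 1 [ZMOD r] ∧ (d : ℤ) ∣ p} : ℝ) ≤ (y - x) / r / d + 2 := by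
  rcases Finset.eq_empty_or_nonempty {p ∈ Ioo ⌊x⌋ ⌈y⌉ | p ≡ 1 [ZMOD r] ∧ (d : ℤ) ∣ p} with
    hempty | ⟨p₀, hp₀⟩
  · rw [hempty, card_empty, Nat.cast_zero]
    have := sub_pos.2 hxy
    positivity
  obtain ⟨-, hp₀r, hp₀d⟩ := mem_filter.1 hp₀
  have hcoprime : (d : ℤ).natAbs.Coprime (r : ℤ).natAbs :=
    Int.isCoprime_iff_gcd_eq_one.1 ((isCoprime_of_modEq_one hp₀r).of_isCoprime_of_dvd_left hp₀d)
  have hsub : {p ∈ Ioo ⌊x⌋ ⌈y⌉ | p ≡ 1 [ZMOD r] ∧ (d : ℤ) ∣ p} ⊆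
      {p ∈ Ioo ⌊x⌋ ⌈y⌉ | p ≡ p₀ [ZMOD (d * r : ℕ)]} := by
    refine monotone_filter_right _ fun p _ ⟨hpr, hpd⟩ => ?_
    rw [Nat.cast_mul, ← Int.modEq_and_modEq_iff_modEq_mul hcoprime]
    exact ⟨(Int.modEq_zero_iff_dvd.2 hpd).trans (Int.modEq_zero_iff_dvd.2 hp₀d).symm,
      hpr.trans hp₀r.symm⟩
  have hcount := abs_card_Ioo_floor_ceil_filter_modEq_sub_le hxy
    (r := (d * r : ℕ)) (by exact_mod_cast Nat.mul_pos hd hr) p₀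
  have hle : (#{p ∈ Ioo ⌊x⌋ ⌈y⌉ | p ≡ 1 [ZMOD r] ∧ (d : ℤ) ∣ p} : ℝ) ≤
      #{p ∈ Ioo ⌊x⌋ ⌈y⌉ | p ≡ p₀ [ZMOD (d * r : ℕ)]} := by exact_mod_cast card_le_card hsub
  push_cast at hcount hle
  rw [div_div, mul_comm (r : ℝ)]
  linarith [(abs_le.1 hcount).2]

lemma le_card_Ioo_filter_isCoprime {x y : ℝ} (hxy : x < y) (D : ℕ) {q : ℕ} (hq : q ≠ 0) :
    (y - x) / D.factorial - 2 - ∑ d ∈ q.divisors with D < d, ((y - x) / D.factorial / d + 2) ≤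
      (#{p ∈ Ioo ⌊x⌋ ⌈y⌉ | IsCoprime p (q : ℤ)} : ℝ) := by
  set T := {p ∈ Ioo ⌊x⌋ ⌈y⌉ | p ≡ 1 [ZMOD D.factorial]}
  have hT : (y - x) / D.factorial - 2 ≤ #T := by
    have := abs_card_Ioo_floor_ceil_filter_modEq_sub_le hxy
      (r := D.factorial) (by exact_mod_cast D.factorial_pos) 1
    rw [Int.cast_natCast] at this
    linarith [(abs_le.1 this).1]
  have hcover : T ⊆ {p ∈ Ioo ⌊x⌋ ⌈y⌉ | IsCoprime p (q : ℤ)} ∪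
      (q.divisors.filter (D < ·)).biUnion
        fun d => {p ∈ Ioo ⌊x⌋ ⌈y⌉ | p ≡ 1 [ZMOD D.factorial] ∧ (d : ℤ) ∣ p} := by
    intro p hp
    obtain ⟨hpI, hp1⟩ := mem_filter.1 hp
    simp only [mem_union, mem_filter, mem_biUnion, Nat.mem_divisors]
    by_cases hpq : IsCoprime p (q : ℤ)
    · exact Or.inl ⟨hpI, hpq⟩
    · refine Or.inr ⟨Int.gcd p q, ⟨⟨Int.natCast_dvd_natCast.1 (Int.gcd_dvd_right ..), hq⟩, ?_⟩,
        hpI, hp1, Int.gcd_dvd_left ..⟩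
      by_contra! hgD
      refine hpq (Int.isCoprime_iff_gcd_eq_one.2 (Nat.isUnit_iff.1 (Int.ofNat_isUnit.1 ?_)))
      have hgcd_dvd : ((Int.gcd p q : ℕ) : ℤ) ∣ D.factorial := by
        exact_mod_cast Nat.dvd_factorial (Int.gcd_pos_of_ne_zero_right p (by exact_mod_cast hq)) hgD
      exact (isCoprime_of_modEq_one hp1).isUnit_of_dvd' (Int.gcd_dvd_left ..) hgcd_dvd
  have hbad : ∀ d ∈ q.divisors.filter (D < ·),
      (#{p ∈ Ioo ⌊x⌋ ⌈y⌉ | p ≡ 1 [ZMOD D.factorial] ∧ (d : ℤ) ∣ p} : ℝ) ≤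
        (y - x) / D.factorial / d + 2 := fun d hd =>
    card_filter_modEq_one_dvd_le hxy (pos_of_gt (mem_filter.1 hd).2) D.factorial_pos
  have hcard : (#T : ℝ) ≤ #{p ∈ Ioo ⌊x⌋ ⌈y⌉ | IsCoprime p (q : ℤ)} +
      ∑ d ∈ q.divisors with D < d,
        (#{p ∈ Ioo ⌊x⌋ ⌈y⌉ | p ≡ 1 [ZMOD D.factorial] ∧ (d : ℤ) ∣ p} : ℝ) := by
    exact_mod_cast (card_le_card hcover).trans ((card_union_le _ _).trans
      (Nat.add_le_add_left card_biUnion_le _))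
  linarith [sum_le_sum hbad]

lemma sum_sum_divisors_filter_le {A : Finset ℕ} {N : ℕ} (hA : A ⊆ Ioc 0 N) (D : ℕ) {g : ℕ → ℝ}
    (hg : ∀ d, 0 ≤ g d) :
    ∑ q ∈ A, ∑ d ∈ q.divisors with D < d, g d ≤ ∑ d ∈ Ioc D N, (N : ℝ) / d * g d := by
  calc ∑ q ∈ A, ∑ d ∈ q.divisors with D < d, g d
      ≤ ∑ q ∈ Ioc 0 N, ∑ d ∈ q.divisors with D < d, g d :=
        sum_le_sum_of_subset_of_nonneg hA fun _ _ _ => sum_nonneg fun d _ => hg d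
    _ = ∑ d ∈ Ioc D N, ∑ q ∈ Ioc 0 N with d ∣ q, g d := by
        refine sum_comm' fun q d => ?_
        simp only [mem_filter, mem_Ioc, Nat.mem_divisors]
        constructor
        · rintro ⟨⟨hq, hqN⟩, ⟨hdq, -⟩, hDd⟩
          exact ⟨⟨⟨hq, hqN⟩, hdq⟩, hDd, (Nat.le_of_dvd hq hdq).trans hqN⟩
        · rintro ⟨⟨⟨hq, hqN⟩, hdq⟩, hDd, -⟩
          exact ⟨⟨hq, hqN⟩, ⟨hdq, hq.ne'⟩, hDd⟩
    _ = ∑ d ∈ Ioc D N, ((N / d : ℕ) : ℝ) * g d := by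
        simp only [sum_const, nsmul_eq_mul, Nat.Ioc_filter_dvd_card_eq_div]
    _ ≤ ∑ d ∈ Ioc D N, (N : ℝ) / d * g d :=
        sum_le_sum fun d _ => mul_le_mul_of_nonneg_right Nat.cast_div_le (hg d)

lemma sum_Ioc_inv_sq_le_inv {D : ℕ} (hD : D ≠ 0) (N : ℕ) :
    ∑ d ∈ Ioc D N, ((d : ℝ) ^ 2)⁻¹ ≤ (D : ℝ)⁻¹ := by
  rcases le_total D N with h | h
  · exact (sum_Ioc_inv_sq_le_sub hD h).trans (sub_le_self _ (by positivity))
  · rw [Ioc_eq_empty_of_le h, sum_empty]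
    positivity

lemma sum_Ioc_inv_le_one_add_log (D N : ℕ) :
    ∑ d ∈ Ioc D N, (d : ℝ)⁻¹ ≤ 1 + Real.log N := by
  have h := harmonic_le_one_add_log N
  rw [harmonic_eq_sum_Icc] at h
  push_cast at h
  refine le_trans (sum_le_sum_of_subset_of_nonneg (fun d hd => ?_) fun _ _ _ => by positivity) h
  rw [mem_Ioc] at hd
  exact mem_Icc.2 ⟨pos_of_gt hd.1, hd.2⟩

lemma sum_sum_divisors_filter_div_add_two_le {A : Finset ℕ} {N : ℕ} (hA : A ⊆ Ioc 0 N) {D : ℕ}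
    (hD : D ≠ 0) {x : ℝ} (hx : 0 ≤ x) :
    ∑ q ∈ A, ∑ d ∈ q.divisors with D < d, (x / d + 2) ≤
      x * N / D + 2 * N * (1 + Real.log N) := by
  calc ∑ q ∈ A, ∑ d ∈ q.divisors with D < d, (x / d + 2)
      ≤ ∑ d ∈ Ioc D N, (N : ℝ) / d * (x / d + 2) :=
        sum_sum_divisors_filter_le hA D fun d => by positivity
    _ = x * N * ∑ d ∈ Ioc D N, ((d : ℝ) ^ 2)⁻¹ + 2 * N * ∑ d ∈ Ioc D N, (d : ℝ)⁻¹ := by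
        rw [mul_sum, mul_sum, ← sum_add_distrib]
        refine sum_congr rfl fun d _ => ?_
        ring
    _ ≤ x * N * (D : ℝ)⁻¹ + 2 * N * (1 + Real.log N) := by
        gcongr
        · exact sum_Ioc_inv_sq_le_inv hD N
        · exact sum_Ioc_inv_le_one_add_log D N
    _ = x * N / D + 2 * N * (1 + Real.log N) := by rw [div_eq_mul_inv]

end Counting

section Fractions

/-- The rationals in the open interval `(u, v)` with denominator exactly `q` in lowest terms,
for `q ≠ 0`. -/
noncomputable def fractionsWithDen (u v : ℝ) (q : ℕ) : Finset ℚ :=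
  {p ∈ Ioo ⌊u * q⌋ ⌈v * q⌉ | IsCoprime p (q : ℤ)}.image fun p : ℤ => (p : ℚ) / q

lemma mem_fractionsWithDen {u v : ℝ} {q : ℕ} (hq : 0 < q) {r : ℚ} :
    r ∈ fractionsWithDen u v q ↔ r.den = q ∧ (r : ℝ) ∈ Set.Ioo u v := by
  have hq' : (0 : ℝ) < q := by exact_mod_cast hq
  have hmem : ∀ p : ℤ, p ∈ Ioo ⌊u * q⌋ ⌈v * q⌉ ↔ (((p : ℚ) / q : ℚ) : ℝ) ∈ Set.Ioo u v := by
    intro p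
    rw [mem_Ioo, Int.floor_lt, Int.lt_ceil, Set.mem_Ioo]
    push_cast
    rw [lt_div_iff₀ hq', div_lt_iff₀ hq']
  simp only [fractionsWithDen, mem_image, mem_filter, hmem]
  constructor
  · rintro ⟨p, ⟨hp, hpq⟩, rfl⟩
    refine ⟨?_, hp⟩
    exact_mod_cast Rat.den_div_eq_of_coprime (b := (q : ℤ)) (by exact_mod_cast hq)
      (Int.isCoprime_iff_gcd_eq_one.1 hpq)
  · rintro ⟨rfl, hr⟩
    refine ⟨r.num, ⟨?_, Int.isCoprime_iff_gcd_eq_one.2 r.reduced⟩, r.num_div_den⟩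
    rwa [r.num_div_den]

lemma card_fractionsWithDen (u v : ℝ) {q : ℕ} (hq : q ≠ 0) :
    #(fractionsWithDen u v q) = #{p ∈ Ioo ⌊u * q⌋ ⌈v * q⌉ | IsCoprime p (q : ℤ)} := by
  refine card_image_of_injective _ fun p p' h => ?_
  have hq' : (q : ℚ) ≠ 0 := by exact_mod_cast hq
  exact_mod_cast (div_left_inj' hq').1 h

lemma le_sum_card_fractionsWithDen {u v : ℝ} (huv : u < v) {D : ℕ} (hD : D ≠ 0) {A : Finset ℕ}
    {N : ℕ} (hA : A ⊆ Ioc 0 N) :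
    (v - u) / D.factorial * (∑ q ∈ A, (q : ℝ) - N ^ 2 / D) - 2 * N * (2 + Real.log N) ≤
      ∑ q ∈ A, (#(fractionsWithDen u v q) : ℝ) := by
  have := sub_pos.2 huv
  have hterm : ∀ q ∈ A, (v - u) / D.factorial * q - 2 -
      ∑ d ∈ q.divisors with D < d, ((v - u) * N / D.factorial / d + 2) ≤
        (#(fractionsWithDen u v q) : ℝ) := by
    intro q hq
    obtain ⟨hq0, hqN⟩ := mem_Ioc.1 (hA hq)
    have hq0' : (0 : ℝ) < q := by exact_mod_cast hq0
    rw [card_fractionsWithDen u v hq0.ne']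
    refine le_trans ?_ (le_card_Ioo_filter_isCoprime (mul_lt_mul_of_pos_right huv hq0') D hq0.ne')
    rw [← sub_mul, mul_div_right_comm (v - u) (q : ℝ)]
    gcongr
    rw [← mul_div_right_comm]
    gcongr
  have hsieve := sum_sum_divisors_filter_div_add_two_le hA hD
    (x := (v - u) * N / D.factorial) (by positivity)
  have hsieve_eq : (v - u) * N / D.factorial * N / D = (v - u) / D.factorial * (N ^ 2 / D) := by
    ring
  have hcard : (#A : ℝ) ≤ N := by
    exact_mod_cast (card_le_card hA).trans_eq (Nat.card_Ioc 0 N)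
  have hsum := sum_le_sum hterm
  rw [sum_sub_distrib, sum_sub_distrib, ← mul_sum, sum_const, nsmul_eq_mul] at hsum
  linarith

lemma card_biUnion_fractionsWithDen (u v : ℝ) {A : Finset ℕ} (hA : ∀ q ∈ A, 0 < q) :
    #(A.biUnion (fractionsWithDen u v)) = ∑ q ∈ A, #(fractionsWithDen u v q) :=
  card_biUnion fun q hq q' hq' hne => disjoint_left.2 fun _ hr hr' =>
    hne (((mem_fractionsWithDen (hA q hq)).1 hr).1.symm.trans
      ((mem_fractionsWithDen (hA q' hq')).1 hr').1)

lemma one_div_den_mul_den_le_abs_sub {a b : ℚ} (hab : a ≠ b) :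
    1 / ((a.den : ℚ) * b.den) ≤ |a - b| := by
  have hnum : (1 : ℚ) ≤ |((a - b).num : ℚ)| := by
    exact_mod_cast Int.one_le_abs (Rat.num_ne_zero.2 (sub_ne_zero.2 hab))
  have hden : ((a - b).den : ℚ) ≤ a.den * b.den := by
    exact_mod_cast Nat.le_of_dvd (by positivity) (Rat.sub_den_dvd a b)
  calc 1 / ((a.den : ℚ) * b.den) ≤ |((a - b).num : ℚ)| / (a - b).den := by gcongr
    _ = |a - b| := by rw [← Nat.abs_cast, ← abs_div, Rat.num_div_den]

lemma card_le_sq_of_den_le {R : Finset ℚ} {N : ℕ}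
    (hR : ∀ r ∈ R, 0 < r ∧ r < 1 ∧ r.den ≤ N) : #R ≤ N ^ 2 := by
  have hmaps : Set.MapsTo (fun r : ℚ => (r.num, r.den)) R
      (Ico (0 : ℤ) N ×ˢ Ioc 0 N : Finset _) := by
    intro r hr
    obtain ⟨h0, h1, hN⟩ := hR r hr
    have hnum_pos : 0 < r.num := Rat.num_pos.2 h0
    have hnum_lt : r.num < r.den := Rat.num_lt_denom_iff.2 h1
    have hden_pos := r.den_pos
    simp only [coe_product, Set.mem_prod, mem_coe, mem_Ico, mem_Ioc]
    omega
  have hinj : Set.InjOn (fun r : ℚ => (r.num, r.den)) R := fun r _ r' _ h =>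
    Rat.ext (congrArg Prod.fst h) (congrArg Prod.snd h)
  refine (card_le_card_of_injOn _ hmaps hinj).trans_eq ?_
  rw [card_product, Int.card_Ico, Nat.card_Ioc, sub_zero, Int.toNat_natCast, Nat.sub_zero, sq]

end Fractions

section LowerDensity

/-- The set `M` of natural numbers has positive lower asymptotic density. -/
def HasPosLowerDensity (M : Set ℕ) : Prop :=
  ∃ c : ℝ, 0 < c ∧ ∀ᶠ N : ℕ in atTop, c * N ≤ ((M ∩ Set.Ioc 0 N).ncard : ℝ)

lemma HasPosLowerDensity.exists_subset_Icc {M : Set ℕ} (hM : HasPosLowerDensity M) :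
    ∃ κ : ℝ, 0 < κ ∧ ∀ᶠ N : ℕ in atTop, ∃ A : Finset ℕ,
      (∀ q ∈ A, q ∈ M ∧ κ * N ≤ q ∧ q ∈ Ioc 0 N) ∧ κ * N ≤ #A := by
  classical
  obtain ⟨c, hc, hcM⟩ := hM
  refine ⟨c / 2, half_pos hc, hcM.mono fun N hN => ?_⟩
  refine ⟨{q ∈ Ioc 0 N | q ∈ M ∧ c / 2 * N ≤ q}, fun q hq => ?_, ?_⟩
  · obtain ⟨hqN, hqM, hq⟩ := mem_filter.1 hq
    exact ⟨hqM, hq, hqN⟩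
  have hcover : M ∩ Set.Ioc 0 N ⊆
      ({q ∈ Ioc 0 N | q ∈ M ∧ c / 2 * N ≤ q} ∪ Ioc 0 ⌊c / 2 * N⌋₊ : Finset ℕ) := by
    rintro q ⟨hqM, hqN⟩
    simp only [coe_union, Set.mem_union, mem_coe, mem_filter, mem_Ioc]
    rcases le_or_gt (c / 2 * N) q with h | h
    · exact Or.inl ⟨hqN, hqM, h⟩
    · exact Or.inr ⟨hqN.1, Nat.le_floor h.le⟩
  have hcard : ((M ∩ Set.Ioc 0 N).ncard : ℝ) ≤
      #{q ∈ Ioc 0 N | q ∈ M ∧ c / 2 * N ≤ q} + (⌊c / 2 * N⌋₊ : ℝ) := by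
    have h := (Set.ncard_le_ncard hcover (finite_toSet _)).trans_eq (Set.ncard_coe_finset _)
    have h' := h.trans (card_union_le _ _)
    rw [Nat.card_Ioc, Nat.sub_zero] at h'
    exact_mod_cast h'
  linarith [Nat.floor_le (by positivity : 0 ≤ c / 2 * (N : ℝ))]

lemma eventually_two_add_log_le {ε : ℝ} (hε : 0 < ε) :
    ∀ᶠ N : ℕ in atTop, 2 + Real.log N ≤ ε * N := by
  have h : (fun x : ℝ => 2 + Real.log x) =o[atTop] id :=
    (isLittleO_const_id_atTop 2).add Real.isLittleO_log_id_atTop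
  filter_upwards [tendsto_natCast_atTop_atTop.eventually (h.def hε)] with N hN
  rw [id, Real.norm_of_nonneg (Nat.cast_nonneg N)] at hN
  exact (le_abs_self _).trans hN

lemma HasPosLowerDensity.exists_many_fractions {M : Set ℕ} (hM : HasPosLowerDensity M) :
    ∃ κ : ℝ, 0 < κ ∧ ∃ γ : ℝ, 0 < γ ∧ ∀ u v : ℝ, u < v → ∀ᶠ N : ℕ in atTop, ∃ R : Finset ℚ,
      (∀ r ∈ R, (r : ℝ) ∈ Set.Ioo u v ∧ r.den ∈ M ∧ κ * N ≤ r.den ∧ r.den ≤ N) ∧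
        γ * (v - u) * N ^ 2 ≤ #R := by
  obtain ⟨κ, hκ, hA⟩ := hM.exists_subset_Icc
  obtain ⟨D, hD⟩ := exists_nat_gt (2 / κ ^ 2)
  have hD0 : (0 : ℝ) < D := lt_trans (by positivity) hD
  have hDκ : 1 / (D : ℝ) ≤ κ ^ 2 / 2 := by
    rw [div_le_div_iff₀ hD0 two_pos]
    linarith [(div_lt_iff₀ (by positivity)).1 hD]
  refine ⟨κ, hκ, κ ^ 2 / (4 * D.factorial), by positivity, fun u v huv => ?_⟩
  have := sub_pos.2 huv
  filter_upwards [hA, eventually_two_add_log_le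
    (ε := κ ^ 2 / (8 * D.factorial) * (v - u)) (by positivity)] with N ⟨A, hAmem, hAcard⟩ hlog
  have hA0 : ∀ q ∈ A, 0 < q := fun q hq => (mem_Ioc.1 (hAmem q hq).2.2).1
  refine ⟨A.biUnion (fractionsWithDen u v), fun r hr => ?_, ?_⟩
  · obtain ⟨q, hq, hrq⟩ := mem_biUnion.1 hr
    obtain ⟨rfl, hruv⟩ := (mem_fractionsWithDen (hA0 q hq)).1 hrq
    obtain ⟨hqM, hκq, hqN⟩ := hAmem _ hq
    exact ⟨hruv, hqM, hκq, (mem_Ioc.1 hqN).2⟩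
  have hsum : κ ^ 2 * N ^ 2 ≤ ∑ q ∈ A, (q : ℝ) := by
    calc κ ^ 2 * N ^ 2 = κ * N * (κ * N) := by ring
      _ ≤ #A * (κ * N) := by gcongr
      _ ≤ ∑ q ∈ A, (q : ℝ) := by
        rw [← nsmul_eq_mul]
        exact card_nsmul_le_sum A _ _ fun q hq => (hAmem q hq).2.1
  rw [card_biUnion_fractionsWithDen u v hA0, Nat.cast_sum]
  refine le_trans ?_ (le_sum_card_fractionsWithDen huv (D := D) (by exact_mod_cast hD0.ne')
    fun q hq => (hAmem q hq).2.2)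
  have hmain : (v - u) / D.factorial * (κ ^ 2 / 2 * N ^ 2) ≤
      (v - u) / D.factorial * (∑ q ∈ A, (q : ℝ) - N ^ 2 / D) := by
    gcongr
    have : (N : ℝ) ^ 2 / D ≤ κ ^ 2 / 2 * N ^ 2 := by
      rw [div_eq_mul_one_div, mul_comm]
      gcongr
    linarith
  have herror : 2 * N * (2 + Real.log N) ≤
      2 * N * (κ ^ 2 / (8 * D.factorial) * (v - u) * N) := by gcongr
  calc κ ^ 2 / (4 * D.factorial) * (v - u) * N ^ 2
      = (v - u) / D.factorial * (κ ^ 2 / 2 * N ^ 2) -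
          2 * N * (κ ^ 2 / (8 * D.factorial) * (v - u) * N) := by ring
    _ ≤ _ := sub_le_sub hmain herror

end LowerDensity

section OptimalRegularSystem

/-- The sequence `α 1, α 2, …` is an optimal regular system in the interval `(a, b)`. The constants
are uniform in the open subinterval `(u, v)`; only the threshold `Q₀` depends on it. -/
def IsOptimalRegularSystem (α : ℕ → ℝ) (a b : ℝ) : Prop :=
  ∃ c₁ : ℝ, 0 < c₁ ∧ ∃ c₂ : ℝ, 0 < c₂ ∧ ∃ c₃ : ℝ, 0 < c₃ ∧
    ∀ u v : ℝ, a ≤ u → u < v → v ≤ b →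
      ∃ Q₀ : ℕ, ∀ Q : ℕ, Q₀ ≤ Q →
        ∃ (t : ℕ) (idx : Fin t → ℕ), StrictMono idx ∧
          (∀ h, c₁ * (Q : ℝ) ≤ (idx h : ℝ)) ∧
          (∀ h, idx h ≤ Q) ∧
          (∀ h, α (idx h) ∈ Set.Ioo u v) ∧
          (∀ h ℓ, h ≠ ℓ → c₂ / (Q : ℝ) ≤ |α (idx h) - α (idx ℓ)|) ∧
          c₃ * (v - u) * (Q : ℝ) ≤ (t : ℝ) ∧ (t : ℝ) ≤ (v - u) * (Q : ℝ)

lemma exists_nat_between_of_two_le {c x : ℝ} {n : ℕ} (hc : 0 < c) (hx : 2 ≤ x) (hn : c * x ≤ n) :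
    ∃ t ≤ n, min c (1 / 2) * x ≤ t ∧ (t : ℝ) ≤ x := by
  have hx0 : 0 ≤ x := by linarith
  refine ⟨⌈min c (1 / 2) * x⌉₊, Nat.ceil_le.2 (le_trans ?_ hn), Nat.le_ceil _, ?_⟩
  · exact mul_le_mul_of_nonneg_right (min_le_left _ _) hx0
  · have hceil := Nat.ceil_lt_add_one (by positivity : 0 ≤ min c (1 / 2) * x)
    linarith [mul_le_mul_of_nonneg_right (min_le_right c (1 / 2)) hx0]

lemma isOptimalRegularSystem_of_finset {α : ℕ → ℝ} {a b c₁ c₂ c₃ : ℝ} (hc₁ : 0 < c₁)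
    (hc₂ : 0 < c₂) (hc₃ : 0 < c₃)
    (h : ∀ u v : ℝ, a ≤ u → u < v → v ≤ b → ∀ᶠ Q : ℕ in atTop, ∃ I : Finset ℕ,
      (∀ i ∈ I, c₁ * Q ≤ i ∧ i ≤ Q ∧ α i ∈ Set.Ioo u v) ∧
      (I : Set ℕ).Pairwise (fun i k => c₂ / Q ≤ |α i - α k|) ∧ c₃ * (v - u) * Q ≤ #I) :
    IsOptimalRegularSystem α a b := by
  refine ⟨c₁, hc₁, c₂, hc₂, min c₃ (1 / 2), by positivity, fun u v hu huv hv => ?_⟩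
  have hlarge : ∀ᶠ Q : ℕ in atTop, 2 ≤ (v - u) * Q :=
    (tendsto_natCast_atTop_atTop.const_mul_atTop (sub_pos.2 huv)).eventually_ge_atTop 2
  refine eventually_atTop.1 ?_
  filter_upwards [h u v hu huv hv, hlarge] with Q ⟨I, hI, hsep, hcard⟩ hQ
  obtain ⟨t, htI, htlow, htup⟩ := exists_nat_between_of_two_le hc₃ hQ (by rwa [← mul_assoc])
  obtain ⟨T, hTI, hT⟩ := exists_subset_card_eq htI
  have hmem : ∀ k, T.orderEmbOfFin hT k ∈ I := fun k => hTI (T.orderEmbOfFin_mem hT k)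
  refine ⟨t, T.orderEmbOfFin hT, (T.orderEmbOfFin hT).strictMono, fun k => (hI _ (hmem k)).1,
    fun k => (hI _ (hmem k)).2.1, fun k => (hI _ (hmem k)).2.2, fun k l hkl => ?_, ?_, htup⟩
  · exact hsep (hmem k) (hmem l) ((T.orderEmbOfFin hT).injective.ne hkl)
  · rwa [mul_assoc]

end OptimalRegularSystem

section Enumerations

lemma height_eq_den_of_lt_one {q : ℚ} (h0 : 0 < q) (h1 : q < 1) : height q = q.den := by
  have hnum_pos : 0 < q.num := Rat.num_pos.2 h0
  have hnum_lt : q.num < q.den := Rat.num_lt_denom_iff.2 h1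
  unfold height
  omega

/-- `S 1, S 2, …` runs, without repetition and by non-decreasing height, through the rationals in
`(0, 1)` whose denominator lies in `M`. The value `S 0` is irrelevant. -/
structure EnumeratesByHeight (M : Set ℕ) (S : ℕ → ℚ) : Prop where
  bijOn : Set.BijOn S (Set.Ici 1) {r | 0 < r ∧ r < 1 ∧ r.den ∈ M}
  height_le_succ : ∀ i, 1 ≤ i → height (S i) ≤ height (S (i + 1))

namespace EnumeratesByHeight

variable {M : Set ℕ} {S : ℕ → ℚ}

lemma height_eq_den (hS : EnumeratesByHeight M S) {i : ℕ} (hi : 1 ≤ i) :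
    height (S i) = (S i).den :=
  height_eq_den_of_lt_one (hS.bijOn.mapsTo hi).1 (hS.bijOn.mapsTo hi).2.1

lemma den_mono (hS : EnumeratesByHeight M S) {i k : ℕ} (hi : 1 ≤ i) (hik : i ≤ k) :
    (S i).den ≤ (S k).den := by
  rw [← hS.height_eq_den hi, ← hS.height_eq_den (hi.trans hik)]
  induction k, hik using Nat.le_induction with
  | base => exact le_rfl
  | succ k hik ih => exact ih.trans (hS.height_le_succ k (hi.trans hik))

lemma index_le_den_sq (hS : EnumeratesByHeight M S) (i : ℕ) : i ≤ (S i).den ^ 2 := by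
  have hinj : Set.InjOn S (Icc 1 i) := hS.bijOn.injOn.mono fun k hk => (mem_Icc.1 hk).1
  calc i = #((Icc 1 i).image S) := by
        rw [card_image_of_injOn hinj, Nat.card_Icc, Nat.add_sub_cancel]
    _ ≤ (S i).den ^ 2 := card_le_sq_of_den_le fun r hr => by
        obtain ⟨k, hk, rfl⟩ := mem_image.1 hr
        obtain ⟨hk1, hki⟩ := mem_Icc.1 hk
        obtain ⟨h0, h1, -⟩ := hS.bijOn.mapsTo hk1
        exact ⟨h0, h1, hS.den_mono hk1 hki⟩

lemma card_le_index (hS : EnumeratesByHeight M S) {i : ℕ} (hi : 1 ≤ i) {R : Finset ℚ}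
    (hR : ∀ r ∈ R, 0 < r ∧ r < 1 ∧ r.den ∈ M ∧ r.den < (S i).den) : #R ≤ i := by
  have hsub : R ⊆ (Icc 1 i).image S := by
    intro r hr
    obtain ⟨h0, h1, hM, hlt⟩ := hR r hr
    obtain ⟨k, hk, rfl⟩ := hS.bijOn.surjOn ⟨h0, h1, hM⟩
    refine mem_image_of_mem S (mem_Icc.2 ⟨hk, ?_⟩)
    by_contra! hik
    exact (hS.den_mono hi hik.le).not_gt hlt
  simpa only [Nat.card_Icc, Nat.add_sub_cancel] using (card_le_card hsub).trans card_image_le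

lemma exists_mul_den_sq_le_index (hS : EnumeratesByHeight M S) (hM : HasPosLowerDensity M) :
    ∃ c : ℝ, 0 < c ∧ ∀ᶠ n : ℕ in atTop, ∀ i, 1 ≤ i → (S i).den = n → c * n ^ 2 ≤ i := by
  obtain ⟨κ, -, γ, hγ, hmany⟩ := hM.exists_many_fractions
  refine ⟨γ / 4, by positivity, ?_⟩
  filter_upwards [(tendsto_sub_atTop_nat 1).eventually (hmany 0 1 one_pos),
    eventually_ge_atTop 2] with n ⟨R, hR, hcard⟩ hn i hi hden
  have hRi : #R ≤ i := by
    refine hS.card_le_index hi fun r hr => ?_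
    obtain ⟨⟨h0, h1⟩, hrM, -, hrn⟩ := hR r hr
    exact ⟨by exact_mod_cast h0, by exact_mod_cast h1, hrM, by omega⟩
  have hn2 : (2 : ℝ) ≤ n := by exact_mod_cast hn
  calc γ / 4 * n ^ 2 = γ * (1 - 0) * ((n : ℝ) / 2) ^ 2 := by ring
    _ ≤ γ * (1 - 0) * ((n - 1 : ℕ) : ℝ) ^ 2 := by
      rw [Nat.cast_sub (by omega), Nat.cast_one]
      gcongr
      linarith
    _ ≤ i := hcard.trans (by exact_mod_cast hRi)

end EnumeratesByHeight

end Enumerations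

section MainArgument

variable {M : Set ℕ} {S : ℕ → ℚ}

lemma one_div_sq_le_abs_sub_of_den_le {a b : ℚ} (hab : a ≠ b) {N : ℕ} (ha : a.den ≤ N)
    (hb : b.den ≤ N) : 1 / (N : ℝ) ^ 2 ≤ |(a : ℝ) - b| := by
  have := a.den_pos
  have := b.den_pos
  have hsep : 1 / (N : ℚ) ^ 2 ≤ |a - b| := by
    refine le_trans ?_ (one_div_den_mul_den_le_abs_sub hab)
    rw [sq]
    gcongr
  simpa using (Rat.cast_le (K := ℝ)).2 hsep

lemma EnumeratesByHeight.exists_indices (hS : EnumeratesByHeight M S)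
    (hM : HasPosLowerDensity M) :
    ∃ c : ℝ, 0 < c ∧ ∃ γ : ℝ, 0 < γ ∧ ∀ u v : ℝ, 0 ≤ u → u < v → v ≤ 1 →
      ∀ᶠ N : ℕ in atTop, ∃ I : Finset ℕ,
        (∀ i ∈ I, c * N ^ 2 ≤ i ∧ i ≤ N ^ 2 ∧ (S i : ℝ) ∈ Set.Ioo u v) ∧
        (I : Set ℕ).Pairwise (fun i k => 1 / (N : ℝ) ^ 2 ≤ |(S i : ℝ) - S k|) ∧
        γ * (v - u) * N ^ 2 ≤ #I := by
  obtain ⟨κ, hκ, γ, hγ, hmany⟩ := hM.exists_many_fractions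
  obtain ⟨c, hc, hindex⟩ := hS.exists_mul_den_sq_le_index hM
  refine ⟨c * κ ^ 2, by positivity, γ, hγ, fun u v hu huv hv => ?_⟩
  obtain ⟨n₀, hn₀⟩ := eventually_atTop.1 hindex
  have hκN : ∀ᶠ N : ℕ in atTop, (n₀ : ℝ) ≤ κ * N :=
    (tendsto_natCast_atTop_atTop.const_mul_atTop hκ).eventually_ge_atTop _
  filter_upwards [hmany u v huv, hκN] with N ⟨R, hR, hcard⟩ hN
  have hsurj : Set.SurjOn S (Set.Ici 1) R := fun r hr => by
    obtain ⟨⟨hur, hrv⟩, hrM, -⟩ := hR r hr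
    exact hS.bijOn.surjOn
      ⟨by exact_mod_cast hu.trans_lt hur, by exact_mod_cast hrv.trans_le hv, hrM⟩
  obtain ⟨I, hI, hinj, rfl⟩ := exists_subset_injOn_image_eq_of_surjOn _ R hsurj
  have hden : ∀ i ∈ I, (S i).den ≤ N := fun i hi => (hR _ (mem_image_of_mem S hi)).2.2.2
  refine ⟨I, fun i hi => ?_, fun i hi k hk hik => ?_, ?_⟩
  · obtain ⟨hmem, -, hκi, -⟩ := hR _ (mem_image_of_mem S hi)
    refine ⟨?_, (hS.index_le_den_sq i).trans (Nat.pow_le_pow_left (hden i hi) 2), hmem⟩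
    calc c * κ ^ 2 * N ^ 2 = c * (κ * N) ^ 2 := by ring
      _ ≤ c * (S i).den ^ 2 := by gcongr
      _ ≤ i := hn₀ _ (by exact_mod_cast hN.trans hκi) i (hI hi) rfl
  · exact one_div_sq_le_abs_sub_of_den_le (hinj.ne hi hk hik) (hden i hi) (hden k hk)
  · rwa [card_image_of_injOn hinj] at hcard

lemma cast_le_four_mul_sqrt_sq (Q : ℕ) : (Q : ℝ) ≤ 4 * (Nat.sqrt Q : ℝ) ^ 2 := by
  rcases Nat.eq_zero_or_pos Q with rfl | hQ
  · rw [Nat.sqrt_zero, Nat.cast_zero]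
    norm_num
  have hlt : Q < (Nat.sqrt Q + 1) ^ 2 := Nat.lt_succ_sqrt' Q
  have hpos : 0 < Nat.sqrt Q := Nat.sqrt_pos.2 hQ
  exact_mod_cast (by nlinarith : Q ≤ 4 * Nat.sqrt Q ^ 2)

theorem optimal_regular_system_of_restricted_rationals_general (hM : HasPosLowerDensity M)
    (hS : EnumeratesByHeight M S) : IsOptimalRegularSystem (fun i => (S i : ℝ)) 0 1 := by
  obtain ⟨c, hc, γ, hγ, h⟩ := hS.exists_indices hM
  refine isOptimalRegularSystem_of_finset (c₁ := c / 4) (c₂ := 1) (c₃ := γ / 4) (by positivity)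
    one_pos (by positivity) fun u v hu huv hv => ?_
  have hsqrt : Tendsto Nat.sqrt atTop atTop :=
    tendsto_atTop_atTop.2 fun n => ⟨n ^ 2, fun _ hQ => Nat.le_sqrt'.2 hQ⟩
  filter_upwards [hsqrt.eventually (h u v hu huv hv), eventually_gt_atTop 0]
    with Q ⟨I, hI, hsep, hcard⟩ hQ0
  have hQ := cast_le_four_mul_sqrt_sq Q
  have hQ' : (Nat.sqrt Q : ℝ) ^ 2 ≤ Q := by exact_mod_cast Nat.sqrt_le' Q
  have hsqrt_pos : 0 < (Nat.sqrt Q : ℝ) := by exact_mod_cast Nat.sqrt_pos.2 hQ0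
  refine ⟨I, fun i hi => ⟨?_, ?_, (hI i hi).2.2⟩, hsep.imp fun i k hik => ?_, ?_⟩
  · calc c / 4 * Q ≤ c / 4 * (4 * (Nat.sqrt Q : ℝ) ^ 2) := by gcongr
      _ = c * (Nat.sqrt Q : ℝ) ^ 2 := by ring
      _ ≤ i := (hI i hi).1
  · exact (hI i hi).2.1.trans (Nat.sqrt_le' Q)
  · exact (one_div_le_one_div_of_le (pow_pos hsqrt_pos 2) hQ').trans hik
  · have := sub_pos.2 huv
    calc γ / 4 * (v - u) * Q ≤ γ / 4 * (v - u) * (4 * (Nat.sqrt Q : ℝ) ^ 2) := by gcongr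
      _ = γ * (v - u) * (Nat.sqrt Q : ℝ) ^ 2 := by ring
      _ ≤ #I := hcard

end MainArgument

section DyadicBlocks

lemma exists_le_lt_succ_of_tendsto {B : ℕ → ℝ} (hB : Tendsto B atTop atTop) {j₀ : ℕ} {x : ℝ}
    (hx : B j₀ ≤ x) : ∃ j, j₀ ≤ j ∧ B j ≤ x ∧ x < B (j + 1) := by
  by_contra! h
  have hle : ∀ j, j₀ ≤ j → B j ≤ x := fun j hj =>
    Nat.le_induction hx (fun k hk ih => h k hk ih) j hj
  obtain ⟨j, hj, hxj⟩ := ((eventually_ge_atTop j₀).and (hB.eventually_gt_atTop x)).exists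
  exact (hle j hj).not_gt hxj

lemma sub_sub_one_le_ncard {M : Set ℕ} {x y : ℝ} {N : ℕ} (hx : 0 ≤ x)
    (hN : y ≤ N) (hM : ∀ n : ℕ, x ≤ n → n ≤ y → n ∈ M) :
    y - x - 2 ≤ ((M ∩ Set.Ioc 0 N).ncard : ℝ) := by
  have hsub : (Ioc ⌈x⌉₊ ⌊y⌋₊ : Set ℕ) ⊆ M ∩ Set.Ioc 0 N := by
    intro n hn
    obtain ⟨hxn, hny⟩ := mem_Ioc.1 hn
    have hny' : (n : ℝ) ≤ y := (Nat.le_floor_iff' (pos_of_gt hxn).ne').1 hny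
    exact ⟨hM n ((Nat.le_ceil x).trans (by exact_mod_cast hxn.le)) hny', pos_of_gt hxn,
      by exact_mod_cast hny'.trans hN⟩
  have hcard : ⌊y⌋₊ ≤ (M ∩ Set.Ioc 0 N).ncard + ⌈x⌉₊ := by
    have h := Set.ncard_le_ncard hsub ((Set.finite_Ioc 0 N).inter_of_right M)
    rw [Set.ncard_coe_finset, Nat.card_Ioc] at h
    omega
  have hcard' : (⌊y⌋₊ : ℝ) ≤ (M ∩ Set.Ioc 0 N).ncard + ⌈x⌉₊ := by exact_mod_cast hcard
  linarith [Nat.lt_floor_add_one y, Nat.ceil_lt_add_one hx]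

lemma hasPosLowerDensity_of_blocks {M : Set ℕ} {B : ℕ → ℝ} {K r : ℝ} (hK : 0 < K) (hr0 : 0 ≤ r)
    (hr1 : r < 1) (hB : Tendsto B atTop atTop) (hstep : ∀ᶠ j in atTop, B (j + 1) ≤ K * B j)
    (hM : ∀ᶠ j in atTop, ∀ n : ℕ, r * B j ≤ n → n ≤ B j → n ∈ M) : HasPosLowerDensity M := by
  have hr : 0 < 1 - r := sub_pos.2 hr1
  refine ⟨(1 - r) / (2 * K), by positivity, ?_⟩
  obtain ⟨j₀, hj₀⟩ := eventually_atTop.1 (hstep.and (hM.and (hB.eventually_ge_atTop 0)))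
  filter_upwards [tendsto_natCast_atTop_atTop.eventually_ge_atTop (B j₀),
    tendsto_natCast_atTop_atTop.eventually_ge_atTop (4 * K / (1 - r))] with N hN hlarge
  obtain ⟨j, hj, hjN, hNj⟩ := exists_le_lt_succ_of_tendsto hB hN
  obtain ⟨hstepj, hMj, hBj⟩ := hj₀ j hj
  have hcount := sub_sub_one_le_ncard (mul_nonneg hr0 hBj) hjN hMj
  have hlow : (N : ℝ) / K ≤ B j := by
    rw [div_le_iff₀' hK]
    exact hNj.le.trans hstepj
  have htwo : 2 ≤ (1 - r) / (2 * K) * N := by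
    rw [div_le_iff₀ hr] at hlarge
    rw [div_mul_eq_mul_div, le_div_iff₀ (by positivity)]
    linarith
  calc (1 - r) / (2 * K) * N ≤ (1 - r) * (N / K) - 2 := by
        have : (1 - r) * (N / K) = 2 * ((1 - r) / (2 * K) * N) := by field_simp
        linarith
    _ ≤ (1 - r) * B j - 2 := by gcongr
    _ = B j - r * B j - 2 := by ring
    _ ≤ _ := hcount

end DyadicBlocks

section RestrictedDenominators

variable {f ϑ : ℝ → ℝ}

lemma Bbig_succ_le (hf : ∀ x, 0 < x → 0 < f x) (hf_mono : MonotoneOn f (Set.Ioi 0))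
    (hϑ : ∀ x, 0 < x → 0 < ϑ x) (hϑ_mono : MonotoneOn ϑ (Set.Ioi 0)) (j : ℕ) :
    Bbig f ϑ (j + 1) ≤ 2 * Bbig f ϑ j := by
  have hpos : (0 : ℝ) < 2 ^ j := by positivity
  have hle : (2 : ℝ) ^ j ≤ 2 ^ (j + 1) := pow_le_pow_right₀ one_le_two j.le_succ
  have hf0 := hf _ hpos
  have hϑ0 := Real.sqrt_pos.2 (hϑ _ hpos)
  have hf1 := hf_mono hpos (hpos.trans_le hle) hle
  have hϑ1 := hϑ_mono hpos (hpos.trans_le hle) hle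
  unfold Bbig
  calc (2 : ℝ) ^ (j + 1) / (f (2 ^ (j + 1)) * √(ϑ (2 ^ (j + 1))))
      ≤ 2 ^ (j + 1) / (f (2 ^ j) * √(ϑ (2 ^ j))) :=
        div_le_div_of_nonneg_left (by positivity) (by positivity)
          (mul_le_mul hf1 (Real.sqrt_le_sqrt hϑ1) hϑ0.le (hf0.trans_le hf1).le)
    _ = 2 * (2 ^ j / (f (2 ^ j) * √(ϑ (2 ^ j)))) := by ring

lemma isLittleO_rpow_id_atTop {c : ℝ} (hc : c < 1) :
    (fun x : ℝ => x ^ c) =o[atTop] (id : ℝ → ℝ) := by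
  refine (isLittleO_iff_tendsto' ?_).2 ((tendsto_rpow_neg_atTop (sub_pos.2 hc)).congr' ?_)
  · filter_upwards [eventually_ne_atTop 0] with x hx h0 using absurd h0 hx
  · filter_upwards [eventually_gt_atTop 0] with x hx
    rw [neg_sub, Real.rpow_sub_one hx.ne', id]

lemma tendsto_div_mul_sqrt_atTop (hf : ∀ x, 0 < x → 0 < f x) (hϑ : ∀ x, 0 < x → 0 < ϑ x)
    {a b : ℝ} (hfa : f =O[atTop] (· ^ a)) (hϑb : ϑ =O[atTop] (· ^ b)) (hab : a + b / 2 < 1) :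
    Tendsto (fun x => x / (f x * √(ϑ x))) atTop atTop := by
  have hsqrt : (fun x => √(ϑ x)) =O[atTop] (· ^ (b / 2)) := by
    refine (hϑb.sqrt ?_).congr' EventuallyEq.rfl ?_
    · filter_upwards [eventually_gt_atTop 0] with x hx using Real.rpow_nonneg hx.le b
    · filter_upwards [eventually_gt_atTop 0] with x hx
      rw [Real.sqrt_eq_rpow, ← Real.rpow_mul hx.le, mul_one_div]
  have hlittle : (fun x => f x * √(ϑ x)) =o[atTop] (id : ℝ → ℝ) := by
    exact (hfa.mul_atTop_rpow_of_isBigO_rpow a (b / 2) _ hsqrt le_rfl).trans_isLittleO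
      (isLittleO_rpow_id_atTop hab)
  have hzero : Tendsto (fun x => f x * √(ϑ x) / x) atTop (nhdsWithin 0 (Set.Ioi 0)) := by
    refine tendsto_nhdsWithin_iff.2 ⟨hlittle.tendsto_div_nhds_zero, ?_⟩
    filter_upwards [eventually_gt_atTop 0] with x hx
    exact div_pos (mul_pos (hf x hx) (Real.sqrt_pos.2 (hϑ x hx))) hx
  exact hzero.inv_tendsto_nhdsGT_zero.congr fun x => inv_div _ _

lemma hasPosLowerDensity_Mset (hf : ∀ x, 0 < x → 0 < f x) (hf_mono : MonotoneOn f (Set.Ioi 0))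
    (hϑ : ∀ x, 0 < x → 0 < ϑ x) (hϑ_mono : MonotoneOn ϑ (Set.Ioi 0))
    {a b : ℝ} (hfa : f =O[atTop] (· ^ a)) (hϑb : ϑ =O[atTop] (· ^ b)) (hab : a + b / 2 < 1) :
    HasPosLowerDensity (Mset f ϑ) := by
  have hB : Tendsto (Bbig f ϑ) atTop atTop :=
    (tendsto_div_mul_sqrt_atTop hf hϑ hfa hϑb hab).comp
      (tendsto_pow_atTop_atTop_of_one_lt one_lt_two)
  refine hasPosLowerDensity_of_blocks (K := 2) (r := 2 / 3) two_pos (by norm_num) (by norm_num) hB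
    (Eventually.of_forall (Bbig_succ_le hf hf_mono hϑ hϑ_mono)) ?_
  filter_upwards [eventually_ge_atTop 1] with j hj n hlow hup using ⟨j, hj, hlow, hup⟩

lemma isBigO_rpow_of_eventually_le {g : ℝ → ℝ} (hg : ∀ x, 0 < x → 0 < g x) {C a : ℝ}
    (h : ∀ᶠ x in atTop, g x ≤ C * x ^ a) : g =O[atTop] (· ^ a) := by
  refine .of_bound C ?_
  filter_upwards [h, eventually_gt_atTop 0] with x hx hx0
  rwa [Real.norm_of_nonneg (hg x hx0).le, Real.norm_of_nonneg (Real.rpow_nonneg hx0.le a)]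

lemma isBigO_rpow_of_eventually_le_div_log_rpow {g : ℝ → ℝ} (hg : ∀ x, 0 < x → 0 < g x)
    {C a b : ℝ} (hC : 0 ≤ C) (hb : 0 ≤ b)
    (h : ∀ᶠ x in atTop, g x ≤ C * x ^ a / Real.log x ^ b) : g =O[atTop] (· ^ a) := by
  refine isBigO_rpow_of_eventually_le hg (C := C) ?_
  filter_upwards [h, eventually_gt_atTop 0, Real.tendsto_log_atTop.eventually_ge_atTop 1]
    with x hx hx0 hlog
  exact hx.trans (div_le_self (by positivity) (Real.one_le_rpow hlog hb))

end RestrictedDenominators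

theorem optimal_regular_system_of_restricted_rationals
    (f : ℝ → ℝ)
    (hf_gt : ∀ x : ℝ, 0 < x → 2 < f x)
    (hf_mono : MonotoneOn f (Set.Ioi (0 : ℝ)))
    (hf_top : Tendsto f atTop atTop)
    (hf_O : ∃ C : ℝ, 0 < C ∧ ∀ᶠ x : ℝ in atTop,
      f x ≤ C * x ^ ((1 : ℝ) / 3) / (Real.log x) ^ ((7 : ℝ) / 3))
    (ϑ : ℝ → ℝ)
    (hϑ_gt : ∀ x : ℝ, 0 < x → 1 < ϑ x)
    (hϑ_mono : MonotoneOn ϑ (Set.Ioi (0 : ℝ)))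
    (hϑ_top : Tendsto ϑ atTop atTop)
    (hϑ_O : ∃ C : ℝ, 0 < C ∧ ∀ᶠ x : ℝ in atTop, ϑ x ≤ C * x ^ ((1 : ℝ) / 4))
    (hϑ_rat : Tendsto (fun j : ℕ => ϑ ((2 : ℝ) ^ (j + 1)) / ϑ ((2 : ℝ) ^ j)) atTop (nhds 1))
    (S : ℕ → ℚ)
    (hS_mem : ∀ i, 1 ≤ i → 0 < S i ∧ S i < 1 ∧ (S i).den ∈ Mset f ϑ)
    (hS_inj : ∀ i j, 1 ≤ i → 1 ≤ j → S i = S j → i = j)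
    (hS_surj : ∀ q : ℚ, 0 < q → q < 1 → q.den ∈ Mset f ϑ → ∃ i, 1 ≤ i ∧ S i = q)
    (hS_height : ∀ i, 1 ≤ i → height (S i) ≤ height (S (i + 1))) :
    ∃ c₁ : ℝ, 0 < c₁ ∧ ∃ c₂ : ℝ, 0 < c₂ ∧ ∃ c₃ : ℝ, 0 < c₃ ∧
      ∀ u v : ℝ, 0 ≤ u → u < v → v ≤ 1 →
        ∃ Q₀ : ℕ, ∀ Q : ℕ, Q₀ ≤ Q →
          ∃ (t : ℕ) (idx : Fin t → ℕ), StrictMono idx ∧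
            (∀ h, c₁ * (Q : ℝ) ≤ (idx h : ℝ)) ∧
            (∀ h, idx h ≤ Q) ∧
            (∀ h, (S (idx h) : ℝ) ∈ Set.Ioo u v) ∧
            (∀ h ℓ, h ≠ ℓ → c₂ / (Q : ℝ) ≤ |(S (idx h) : ℝ) - (S (idx ℓ) : ℝ)|) ∧
            c₃ * (v - u) * (Q : ℝ) ≤ (t : ℝ) ∧ (t : ℝ) ≤ (v - u) * (Q : ℝ) := by
  obtain ⟨C, hC, hf_O⟩ := hf_O
  obtain ⟨D, -, hϑ_O⟩ := hϑ_O
  have hf_pos : ∀ x, 0 < x → 0 < f x := fun x hx => two_pos.trans (hf_gt x hx)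
  have hϑ_pos : ∀ x, 0 < x → 0 < ϑ x := fun x hx => one_pos.trans (hϑ_gt x hx)
  have hM : HasPosLowerDensity (Mset f ϑ) :=
    hasPosLowerDensity_Mset hf_pos hf_mono hϑ_pos hϑ_mono
      (isBigO_rpow_of_eventually_le_div_log_rpow hf_pos hC.le (by norm_num) hf_O)
      (isBigO_rpow_of_eventually_le hϑ_pos hϑ_O) (by norm_num)
  exact optimal_regular_system_of_restricted_rationals_general hM
    ⟨⟨hS_mem, fun i hi j hj => hS_inj i j hi hj, fun q hq => hS_surj q hq.1 hq.2.1 hq.2.2⟩,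
      hS_height⟩
end
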